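/- For every smooth function η with compact support in B₁ there exists a constant C(η) > 0 such that for every x₀ ∈ {u = v} and every R ≥ 1, with κ := R⁴ and (u_κ, v_κ) the corresponding rescaled solution, | ∫_{B₁} ( 2 κ u_κ² v_κ² − κ u_κ v_κ³ − κ v_κ u_κ³ ) η² dx | ≤ C(η) κ^{−1/4}; equivalently, | ∫_{B₁} Δ(u_κ − v_κ) (u_κ − v_κ) η² dx | ≤ C(η) κ^{−1/4}. -/

import Mathlib

/-!
# A Caccioppoli type estimate for solutions of linear growth

The integrand equals `-κ u_κ v_κ (u_κ - v_κ)² η² = -u v (u - v)² η²`, with `u`, `v` evaluated at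
`x₀ + R x`, so the claim is an upper bound `C / R` for the integral of `u v (u - v)²` over the unit
ball. Up to a constant the Lebesgue measure on the ball is dominated by the standard Gaussian
measure `γ` (`ball_le_gam`), and it suffices to bound `∫ u v (u - v)² (x₀ + R y) dγ(y)`
(`gauss_estimate`). With `γ` no boundary terms occur. All integrations by parts are legitimate since
solutions of linear growth are smooth with polynomially bounded derivatives (`TG_of_solution`, from
an interior gradient estimate).

The proof rests on two facts that are uniform in the base point `x₀ ∈ {u = v}`.

* `min_bounded`: `min u v` is bounded on the whole space.
* `almH_quadratic`: the Gaussian height `H(x₀, R) = ∫ (u² + v²)(x₀ + R y) dγ(y)` is at most `K R²`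
  for `R ≥ 1`.

Both are obtained from monotonicity formulas. The Gaussian Almgren frequency is nondecreasing in `R`
and, by linear growth, at most one (`almN_le_one`); so `H(x₀, R) / R²` is almost monotone
(`almH_ratio`), and it is enough to control `H` at the scale `l` for which `l² H(x₀, l) = 1`, that
is, to bound `l` from below. A normalised solution with `u(x₀) = v(x₀)` is nondegenerate: each
component exceeds a given paraboloid by a definite amount (`core_one`). On the other hand the parts
of `u` and `v` above a common paraboloid lying over `min u v` are two subharmonic functions with
disjoint supports, to which the Alt–Caffarelli–Friedman monotonicity formula applies (`acf_mono`).
Its Gaussian version follows from the inequality that Rayleigh quotients of two disjoint phases have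
sum at least two (`fh_ineq`), proved here through the spectral gap of the Ornstein–Uhlenbeck operator
above its second eigenvalue (`gaussian_poincare_two`) and the log-concavity of the second tail
moment of the normal distribution. At large scales the monotone quantity is bounded by linear growth,
so `l` cannot be small (`scale_lower`).

For `min_bounded` this is applied at a maximum point of `min u v / (1 + ε|x|²)`: if `u ≠ v` there,
the maximum principle bounds the value by one (`max_case_lt`), and if `u = v` the paraboloid touching
`min u v` from above is used in `scale_lower` (`max_case_eq`). Once `min u v` is bounded, a constant
serves as the paraboloid at every `x₀ ∈ {u = v}` (`scale_lower_uniform`).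

Finally, with `w = u - v` and `F(w)` a smooth version of `|w|`, one tests `Δ(u + v) = u v (u + v)`
and `Δw = -u v w` with `F(w)` and `u + v` in Green's formula. As `u + v - |w| = 2 min u v` is
bounded, the quadratic terms cancel up to errors of first order in `u`, `v` and their gradients
(`final_pointwise`, `final_estimate`). By `almH_quadratic` these are `O(R)`, while the left-hand side
carries the factor `R²` from the rescaled Laplacian.
-/


open MeasureTheory Metric Set
open scoped RealInnerProductSpace ENNReal

/-- Euclidean space `ℝⁿ`. -/
abbrev Euc (n : ℕ) := EuclideanSpace ℝ (Fin n)

/-- The Laplacian `Δu` of a function `u : ℝⁿ → ℝ`. -/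
noncomputable def lap {n : ℕ} (u : Euc n → ℝ) (x : Euc n) : ℝ :=
  ∑ i : Fin n,
    fderiv ℝ (fun y => fderiv ℝ u y (EuclideanSpace.single i 1)) x (EuclideanSpace.single i 1)

/-- The divergence `div Y = Σ_α ∂Y^α/∂x_α` of a vector field `Y`. -/
noncomputable def vdiv {n : ℕ} (Y : Euc n → Euc n) (x : Euc n) : ℝ :=
  ∑ i : Fin n, fderiv ℝ Y x (EuclideanSpace.single i 1) i

/-- `DY(p,q)(x) = Σ_{α,β} (∂Y^α/∂x_β)(x) p_α q_β`. -/
noncomputable def DYbil {n : ℕ} (Y : Euc n → Euc n) (p q x : Euc n) : ℝ :=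
  ∑ α : Fin n, ∑ β : Fin n,
    fderiv ℝ Y x (EuclideanSpace.single β 1) α * p α * q β

/-- The rescaled function `u_κ(x) = R⁻¹ u(x₀ + R x)` (with `κ = R⁴`). -/
noncomputable def resc {n : ℕ} (u : Euc n → ℝ) (x₀ : Euc n) (R : ℝ) (x : Euc n) : ℝ :=
  R⁻¹ * u (x₀ + R • x)

/-! ### Temperate functions and the standard Gaussian measure -/

/-- Partial derivative in the `i`-th coordinate direction. -/
noncomputable def pd {n : ℕ} (i : Fin n) (f : Euc n → ℝ) (x : Euc n) : ℝ :=
  fderiv ℝ f x (EuclideanSpace.single i 1)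

section TGbasic
variable {E F G : Type*} [NormedAddCommGroup E] [NormedSpace ℝ E] [NormedAddCommGroup F]
    [NormedSpace ℝ F] [NormedAddCommGroup G] [NormedSpace ℝ G]

@[fun_prop]
lemma TG_fst : Function.HasTemperateGrowth (fun p : E × F => p.1) :=
  (ContinuousLinearMap.fst ℝ E F).hasTemperateGrowth

@[fun_prop]
lemma TG_snd : Function.HasTemperateGrowth (fun p : E × F => p.2) :=
  (ContinuousLinearMap.snd ℝ E F).hasTemperateGrowth

@[fun_prop]
lemma TG_prodMk {f : G → E} {g : G → F} (hf : f.HasTemperateGrowth) (hg : g.HasTemperateGrowth) :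
    Function.HasTemperateGrowth (fun p => (f p, g p)) := by
  have h1 : Function.HasTemperateGrowth (fun p => (ContinuousLinearMap.inl ℝ E F) (f p)) :=
    (ContinuousLinearMap.hasTemperateGrowth _).comp hf
  have h2 : Function.HasTemperateGrowth (fun p => (ContinuousLinearMap.inr ℝ E F) (g p)) :=
    (ContinuousLinearMap.hasTemperateGrowth _).comp hg
  have := h1.add h2
  convert this using 2
  simp

@[fun_prop]
lemma TG_fderiv {f : E → F} (hf : f.HasTemperateGrowth) :
    Function.HasTemperateGrowth (fderiv ℝ f) := by
  refine ⟨hf.1.fderiv_right (by norm_cast), fun k => ?_⟩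
  obtain ⟨m, C, h⟩ := hf.2 (k + 1)
  exact ⟨m, C, fun x => by rw [norm_iteratedFDeriv_fderiv]; exact h x⟩

lemma TG_fderiv_apply {f : E → F} (hf : f.HasTemperateGrowth) (v : E) :
    Function.HasTemperateGrowth (fun x => fderiv ℝ f x v) :=
  ((ContinuousLinearMap.apply ℝ F v).hasTemperateGrowth).comp (TG_fderiv hf)

lemma TG.bound {f : E → F} (hf : f.HasTemperateGrowth) :
    ∃ (k : ℕ) (C : ℝ), 0 ≤ C ∧ ∀ x, ‖f x‖ ≤ C * (1 + ‖x‖) ^ k := by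
  obtain ⟨k, C, h⟩ := hf.2 0
  refine ⟨k, max C 0, le_max_right _ _, fun x => ?_⟩
  have := h x
  rw [norm_iteratedFDeriv_zero] at this
  exact this.trans (mul_le_mul_of_nonneg_right (le_max_left _ _) (by positivity))

lemma TG.contDiff {f : E → F} (hf : f.HasTemperateGrowth) : ContDiff ℝ (⊤ : ℕ∞) f := hf.1

lemma TG.diff {f : E → F} (hf : f.HasTemperateGrowth) : Differentiable ℝ f :=
  hf.1.differentiable (by simp)

@[fun_prop]
lemma TG.cont {f : E → F} (hf : f.HasTemperateGrowth) : Continuous f := hf.1.continuous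

end TGbasic

@[fun_prop]
lemma TG_pd {n : ℕ} {i : Fin n} {f : Euc n → ℝ} (hf : f.HasTemperateGrowth) :
    Function.HasTemperateGrowth (pd i f) := TG_fderiv_apply hf _

@[fun_prop]
lemma TG_coord {n : ℕ} (i : Fin n) : Function.HasTemperateGrowth (fun x : Euc n => x i) :=
  (EuclideanSpace.proj i : Euc n →L[ℝ] ℝ).hasTemperateGrowth

lemma lap_eq {n : ℕ} (u : Euc n → ℝ) (x : Euc n) : lap u x = ∑ i, pd i (pd i u) x := rfl

@[fun_prop]
lemma TG_lap {n : ℕ} {f : Euc n → ℝ} (hf : f.HasTemperateGrowth) :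
    Function.HasTemperateGrowth (lap f) := by
  have : Function.HasTemperateGrowth (fun x => ∑ i, pd i (pd i f) x) := by fun_prop
  exact this

/-- Unnormalised Gaussian density. -/
noncomputable def gauss {n : ℕ} (y : Euc n) : ℝ := Real.exp (-(‖y‖ ^ 2 / 2))

lemma gauss_pos {n : ℕ} (y : Euc n) : 0 < gauss y := Real.exp_pos _

lemma integrable_exp_neg_sq {n : ℕ} {b : ℝ} (hb : 0 < b) :
    Integrable (fun y : Euc n => Real.exp (-(b * ‖y‖ ^ 2))) := by
  have h := (GaussianFourier.integrable_cexp_neg_mul_sq_norm_add (V := Euc n) (b := (b : ℂ))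
    (by simpa using hb) 0 0).norm
  refine h.congr (Filter.Eventually.of_forall fun y => ?_)
  simp only [Complex.norm_exp]
  congr 1
  have : (-(b : ℂ) * (‖y‖ : ℂ) ^ 2 + 0 * ((inner ℝ (0 : Euc n) y : ℝ) : ℂ)) =
    ((-(b * ‖y‖ ^ 2) : ℝ) : ℂ) := by push_cast; ring
  rw [this, Complex.ofReal_re]

/-- Normalising constant of the Gaussian density. -/
noncomputable def gaussZ (n : ℕ) : ℝ := ∫ y : Euc n, gauss y

lemma integrable_gauss (n : ℕ) : Integrable (fun y : Euc n => gauss y) := by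
  have := integrable_exp_neg_sq (n := n) (b := 1 / 2) (by norm_num)
  refine this.congr (Filter.Eventually.of_forall fun y => ?_)
  simp only [gauss]; congr 1; ring

lemma continuous_gauss (n : ℕ) : Continuous (fun y : Euc n => gauss y) := by
  unfold gauss; fun_prop

lemma gaussZ_pos (n : ℕ) : 0 < gaussZ n := by
  unfold gaussZ
  rw [integral_pos_iff_support_of_nonneg (fun y => (gauss_pos y).le) (integrable_gauss n)]
  have : Function.support (fun y : Euc n => gauss y) = univ := by
    ext y; simp [(gauss_pos y).ne']
  rw [this]
  exact isOpen_univ.measure_pos _ univ_nonempty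

/-- The standard Gaussian probability measure on `ℝⁿ`. -/
noncomputable def gam (n : ℕ) : Measure (Euc n) :=
  volume.withDensity (fun y => ENNReal.ofReal ((gaussZ n)⁻¹ * gauss y))

lemma gam_dens_meas (n : ℕ) :
    Measurable (fun y : Euc n => ENNReal.ofReal ((gaussZ n)⁻¹ * gauss y)) :=
  ((continuous_const.mul (continuous_gauss n)).measurable).ennreal_ofReal

lemma gam_dens_toReal {n : ℕ} (y : Euc n) :
    (ENNReal.ofReal ((gaussZ n)⁻¹ * gauss y)).toReal = (gaussZ n)⁻¹ * gauss y :=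
  ENNReal.toReal_ofReal (mul_nonneg (inv_nonneg.2 (gaussZ_pos n).le) (gauss_pos y).le)

lemma integral_gam {n : ℕ} {F : Type*} [NormedAddCommGroup F] [NormedSpace ℝ F]
    (f : Euc n → F) :
    ∫ y, f y ∂(gam n) = ∫ y, ((gaussZ n)⁻¹ * gauss y) • f y := by
  unfold gam
  rw [integral_withDensity_eq_integral_toReal_smul (gam_dens_meas n)
    (Filter.Eventually.of_forall fun _ => ENNReal.ofReal_lt_top)]
  simp_rw [gam_dens_toReal]

lemma integrable_gam_iff {n : ℕ} {F : Type*} [NormedAddCommGroup F] [NormedSpace ℝ F]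
    (f : Euc n → F) :
    Integrable f (gam n) ↔ Integrable (fun y => ((gaussZ n)⁻¹ * gauss y) • f y) := by
  unfold gam
  rw [integrable_withDensity_iff_integrable_smul' (gam_dens_meas n)
    (Filter.Eventually.of_forall fun _ => ENNReal.ofReal_lt_top)]
  simp_rw [gam_dens_toReal]

instance gam_prob (n : ℕ) : IsProbabilityMeasure (gam n) := by
  constructor
  have h : ∫⁻ y : Euc n, ENNReal.ofReal ((gaussZ n)⁻¹ * gauss y) = 1 := by
    rw [← ofReal_integral_eq_lintegral_ofReal ((integrable_gauss n).const_mul _)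
      (Filter.Eventually.of_forall fun y =>
        mul_nonneg (inv_nonneg.2 (gaussZ_pos n).le) (gauss_pos y).le)]
    rw [integral_const_mul]
    have : (gaussZ n)⁻¹ * ∫ y : Euc n, gauss y = 1 := inv_mul_cancel₀ (gaussZ_pos n).ne'
    rw [this]; simp
  simp [gam, h]

lemma poly_mul_gauss_le (k : ℕ) (t : ℝ) (ht : 0 ≤ t) :
    (1 + t) ^ k * Real.exp (-(t ^ 2 / 2)) ≤
      (k.factorial * Real.exp 2) * Real.exp (-(1 / 4 * t ^ 2)) := by
  have h1 : (1 + t) ^ k ≤ k.factorial * Real.exp (1 + t) := by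
    have := Real.pow_div_factorial_le_exp (1 + t) (by linarith) k
    rw [div_le_iff₀ (by positivity)] at this
    linarith
  calc (1 + t) ^ k * Real.exp (-(t ^ 2 / 2))
      ≤ k.factorial * Real.exp (1 + t) * Real.exp (-(t ^ 2 / 2)) := by gcongr
    _ = k.factorial * Real.exp (1 + t - t ^ 2 / 2) := by
        rw [mul_assoc, ← Real.exp_add]; congr 2
    _ ≤ k.factorial * Real.exp (2 + -(1 / 4 * t ^ 2)) := by
        gcongr; nlinarith [sq_nonneg (t - 2)]
    _ = _ := by rw [Real.exp_add, mul_assoc]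

lemma integrable_poly_gauss (n k : ℕ) :
    Integrable (fun y : Euc n => (1 + ‖y‖) ^ k * gauss y) := by
  refine ((integrable_exp_neg_sq (n := n) (b := 1 / 4) (by norm_num)).const_mul
    (k.factorial * Real.exp 2)).mono' ?_ (Filter.Eventually.of_forall fun y => ?_)
  · exact (Continuous.mul (by fun_prop) (continuous_gauss n)).aestronglyMeasurable
  · rw [Real.norm_of_nonneg (mul_nonneg (by positivity) (gauss_pos y).le)]
    exact poly_mul_gauss_le k ‖y‖ (norm_nonneg _)

lemma integrable_poly_gam (n k : ℕ) :
    Integrable (fun y : Euc n => (1 + ‖y‖) ^ k) (gam n) := by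
  rw [integrable_gam_iff]
  refine ((integrable_poly_gauss n k).const_mul (gaussZ n)⁻¹).congr
    (Filter.Eventually.of_forall fun y => ?_)
  simp only [smul_eq_mul]; ring

lemma integrable_of_poly {n : ℕ} {F : Type*} [NormedAddCommGroup F]
    {f : Euc n → F} (hf : Continuous f) {k : ℕ} {C : ℝ} (h : ∀ x, ‖f x‖ ≤ C * (1 + ‖x‖) ^ k) :
    Integrable f (gam n) :=
  ((integrable_poly_gam n k).const_mul C).mono' hf.aestronglyMeasurable
    (Filter.Eventually.of_forall h)

lemma TG.integrable {n : ℕ} {F : Type*} [NormedAddCommGroup F] [NormedSpace ℝ F]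
    {f : Euc n → F} (hf : f.HasTemperateGrowth) : Integrable f (gam n) := by
  obtain ⟨k, C, -, h⟩ := TG.bound hf
  exact integrable_of_poly hf.1.continuous h

lemma hasFDerivAt_gauss {n : ℕ} (y v : Euc n) :
    DifferentiableAt ℝ (fun y : Euc n => gauss y) y ∧
      fderiv ℝ (fun y : Euc n => gauss y) y v = - (inner ℝ y v) * gauss y := by
  have h1 : HasFDerivAt (fun y : Euc n => -(‖y‖ ^ 2 / 2)) (-((1 / 2 : ℝ) • (2 • (innerSL ℝ y)))) y := by
    have := ((hasStrictFDerivAt_norm_sq y).hasFDerivAt.const_mul (1 / 2 : ℝ)).neg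
    refine this.congr_of_eventuallyEq (Filter.Eventually.of_forall fun z => ?_)
    simp only [Pi.neg_apply]; ring
  have h2 := h1.exp
  refine ⟨h2.differentiableAt, ?_⟩
  have : fderiv ℝ (fun y : Euc n => gauss y) y = _ := h2.fderiv
  rw [this]
  simp [gauss]; ring

/-- Gaussian integration by parts: `∫ ∂ᵢf dγ = ∫ yᵢ f dγ`. -/
lemma gam_ibp {n : ℕ} {f : Euc n → ℝ} (hf : f.HasTemperateGrowth) (i : Fin n) :
    ∫ y, pd i f y ∂(gam n) = ∫ y, y i * f y ∂(gam n) := by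
  have hi1 : Integrable (fun y => pd i f y) (gam n) := TG.integrable (by fun_prop)
  have hi2 : Integrable (fun y : Euc n => y i * f y) (gam n) := TG.integrable (by fun_prop)
  have hi3 : Integrable f (gam n) := TG.integrable hf
  rw [integrable_gam_iff] at hi1 hi2 hi3
  have key : ∀ g : Euc n → ℝ, Integrable (fun y => ((gaussZ n)⁻¹ * gauss y) • g y) →
      Integrable (fun y => gauss y * g y) := fun g hg => by
    refine (hg.const_mul (gaussZ n)).congr (Filter.Eventually.of_forall fun y => ?_)
    have := (gaussZ_pos n).ne'
    simp only [smul_eq_mul]; field_simp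
  have hk : ∀ y : Euc n, fderiv ℝ (fun y : Euc n => gauss y) y (EuclideanSpace.single i 1) =
      -(y i) * gauss y := fun y => by
    rw [(hasFDerivAt_gauss y _).2]; simp [EuclideanSpace.inner_single_right]
  have h := integral_mul_fderiv_eq_neg_fderiv_mul_of_integrable (μ := (volume : Measure (Euc n)))
    (f := fun y : Euc n => gauss y) (g := f) (v := EuclideanSpace.single i 1) ?_ (key _ hi1)
    (key _ hi3) (fun x _ => (hasFDerivAt_gauss x 0).1) (fun x _ => TG.diff hf x)
  · rw [integral_gam, integral_gam]
    simp only [smul_eq_mul, mul_assoc]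
    rw [integral_const_mul, integral_const_mul]
    congr 1
    have h' : ∫ y, gauss y * pd i f y = ∫ x, gauss x * fderiv ℝ f x (EuclideanSpace.single i 1) := rfl
    rw [h', h, ← integral_neg]
    congr 1; ext y; rw [hk]; ring
  · refine (key _ hi2).neg.congr (Filter.Eventually.of_forall fun y => ?_)
    simp only [Pi.neg_apply]; rw [hk]; ring

/-! ### Differentiation under Gaussian integrals and calculus of partial derivatives -/

section TGint
variable {n : ℕ}

lemma poly_split {p y : ℝ} (hp : 0 ≤ p) (hy : 0 ≤ y) (k : ℕ) {t : ℝ} (ht : t ≤ p + y)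
    (ht0 : 0 ≤ t) : (1 + t) ^ k ≤ (1 + p) ^ k * (1 + y) ^ k := by
  rw [← mul_pow]; gcongr; nlinarith

lemma norm_prod_le_add {P Q : Type*} [NormedAddCommGroup P] [NormedAddCommGroup Q] (z : P × Q) :
    ‖z‖ ≤ ‖z.1‖ + ‖z.2‖ := by
  rw [Prod.norm_def]
  exact max_le (by linarith [norm_nonneg z.2]) (by linarith [norm_nonneg z.1])

lemma hasFDerivAt_gam {P F : Type*} [NormedAddCommGroup P] [NormedSpace ℝ P]
    [NormedAddCommGroup F] [NormedSpace ℝ F] {G : P × Euc n → F}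
    (hG : Function.HasTemperateGrowth G) (p : P) :
    HasFDerivAt (fun q => ∫ y, G (q, y) ∂(gam n))
      (∫ y, (fderiv ℝ G (p, y)).comp (ContinuousLinearMap.inl ℝ P (Euc n)) ∂(gam n)) p := by
  have hc := TG.cont hG
  have hc' := TG.cont (TG_fderiv hG)
  obtain ⟨k, C, hC, hb⟩ := TG.bound (TG_fderiv hG)
  refine hasFDerivAt_integral_of_dominated_of_fderiv_le (ball_mem_nhds p one_pos)
    (bound := fun y => C * ((1 + (‖p‖ + 1)) ^ k * (1 + ‖y‖) ^ k))
    (F' := fun q y => (fderiv ℝ G (q, y)).comp (ContinuousLinearMap.inl ℝ P (Euc n)))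
    (Filter.Eventually.of_forall fun q => ?_) ?_ ?_ ?_ ?_ ?_
  · exact (hc.comp (by fun_prop : Continuous fun y : Euc n => (q, y))).aestronglyMeasurable
  · exact TG.integrable (hG.comp (by fun_prop : Function.HasTemperateGrowth fun y : Euc n => (p, y)))
  · have : Continuous fun y : Euc n =>
        (fderiv ℝ G (p, y)).comp (ContinuousLinearMap.inl ℝ P (Euc n)) :=
      (hc'.comp (by fun_prop : Continuous fun y : Euc n => (p, y))).clm_comp continuous_const
    exact this.aestronglyMeasurable
  · refine Filter.Eventually.of_forall fun y q hq => ?_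
    have h1 : ‖(fderiv ℝ G (q, y)).comp (ContinuousLinearMap.inl ℝ P (Euc n))‖ ≤
        ‖fderiv ℝ G (q, y)‖ := by
      refine (ContinuousLinearMap.opNorm_comp_le _ _).trans ?_
      have := ContinuousLinearMap.norm_inl_le_one ℝ P (Euc n)
      exact mul_le_of_le_one_right (norm_nonneg _) this
    refine h1.trans ((hb _).trans ?_)
    have hq' : ‖q‖ ≤ ‖p‖ + 1 := by
      have : ‖q - p‖ < 1 := by simpa [dist_eq_norm] using hq
      have := norm_le_norm_add_norm_sub p q
      rw [norm_sub_rev] at this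
      linarith
    gcongr
    exact poly_split (by positivity) (norm_nonneg _) k
      ((norm_prod_le_add _).trans (by simpa using hq')) (norm_nonneg _)
  · exact ((integrable_poly_gam n k).const_mul _).const_mul _
  · refine Filter.Eventually.of_forall fun y q _ => ?_
    have h2 := (TG.diff hG (q, y)).hasFDerivAt
    exact h2.comp q (hasFDerivAt_prodMk_left q y)

/-- The derivative of a Gaussian integral is again a Gaussian integral of a jointly temperate
function, so that the claim follows by induction on the order; the target space has to vary. -/
lemma TG_integral_aux {P : Type} [NormedAddCommGroup P] [NormedSpace ℝ P] (k : ℕ) :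
    ∀ (F : Type) [NormedAddCommGroup F] [NormedSpace ℝ F] (G : P × Euc n → F)
    (_ : Function.HasTemperateGrowth G), ContDiff ℝ k (fun q => ∫ y, G (q, y) ∂(gam n)) ∧
      ∃ (m : ℕ) (C : ℝ), ∀ q, ‖iteratedFDeriv ℝ k (fun q => ∫ y, G (q, y) ∂(gam n)) q‖ ≤
        C * (1 + ‖q‖) ^ m := by
  induction k with
  | zero =>
    intro F _ _ G hG
    constructor
    · have : Continuous (fun q => ∫ y, G (q, y) ∂(gam n)) :=
        continuous_iff_continuousAt.2 fun q => (hasFDerivAt_gam hG q).continuousAt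
      exact contDiff_zero.2 this
    · obtain ⟨k, C, hC, hb⟩ := TG.bound hG
      refine ⟨k, C * ∫ y, (1 + ‖y‖) ^ k ∂(gam n), fun q => ?_⟩
      rw [norm_iteratedFDeriv_zero]
      have h1 : ‖∫ y, G (q, y) ∂(gam n)‖ ≤ ∫ y, C * (1 + ‖q‖) ^ k * (1 + ‖y‖) ^ k ∂(gam n) := by
        refine norm_integral_le_of_norm_le ((integrable_poly_gam n k).const_mul _)
          (Filter.Eventually.of_forall fun y => (hb _).trans ?_)
        rw [mul_assoc]
        gcongr
        exact poly_split (norm_nonneg _) (norm_nonneg _) k (norm_prod_le_add _) (norm_nonneg _)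
      rw [integral_const_mul] at h1
      linarith
  | succ k ih =>
    intro F _ _ G hG
    have hG' : Function.HasTemperateGrowth (fun z : P × Euc n =>
        (fderiv ℝ G z).comp (ContinuousLinearMap.inl ℝ P (Euc n))) :=
      (((ContinuousLinearMap.compL ℝ P (P × Euc n) F).flip
        (ContinuousLinearMap.inl ℝ P (Euc n))).hasTemperateGrowth).comp (TG_fderiv hG)
    obtain ⟨h1, m, C, h2⟩ := ih (P →L[ℝ] F) _ hG'
    have hf : fderiv ℝ (fun q => ∫ y, G (q, y) ∂(gam n)) = fun q =>
        ∫ y, (fderiv ℝ G (q, y)).comp (ContinuousLinearMap.inl ℝ P (Euc n)) ∂(gam n) :=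
      funext fun q => (hasFDerivAt_gam hG q).fderiv
    constructor
    · rw [show ((k + 1 : ℕ) : WithTop ℕ∞) = (k : WithTop ℕ∞) + 1 by norm_cast]
      rw [contDiff_succ_iff_fderiv]
      refine ⟨fun q => (hasFDerivAt_gam hG q).differentiableAt, by simp, ?_⟩
      rw [hf]; exact h1
    · refine ⟨m, C, fun q => ?_⟩
      rw [← norm_iteratedFDeriv_fderiv, hf]
      exact h2 q

/-- A Gaussian integral of a jointly temperate function is temperate in the parameter. -/
lemma TG_integral {P F : Type} [NormedAddCommGroup P] [NormedSpace ℝ P]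
    [NormedAddCommGroup F] [NormedSpace ℝ F] {G : P × Euc n → F}
    (hG : Function.HasTemperateGrowth G) :
    Function.HasTemperateGrowth (fun q => ∫ y, G (q, y) ∂(gam n)) :=
  ⟨contDiff_infty.2 fun k => (TG_integral_aux k F G hG).1,
    fun k => (TG_integral_aux k F G hG).2⟩

/-- Differentiation of a Gaussian integral in a real parameter. -/
lemma hasDerivAt_gam {G : ℝ → Euc n → ℝ}
    (hG : Function.HasTemperateGrowth (fun p : ℝ × Euc n => G p.1 p.2)) {r : ℝ} {G' : Euc n → ℝ}
    (h : ∀ y, HasDerivAt (fun s => G s y) (G' y) r) :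
    HasDerivAt (fun s => ∫ y, G s y ∂(gam n)) (∫ y, G' y ∂(gam n)) r := by
  have h1 := (hasFDerivAt_gam hG r).hasDerivAt
  suffices hs : ∫ y, G' y ∂(gam n) = (∫ y, (fderiv ℝ (fun p : ℝ × Euc n => G p.1 p.2) (r, y)).comp
      (ContinuousLinearMap.inl ℝ ℝ (Euc n)) ∂(gam n)) 1 by
    rw [hs]; exact h1
  rw [ContinuousLinearMap.integral_apply]
  · congr 1; ext y
    have h4 : HasFDerivAt (fun e : ℝ => (e, y)) (ContinuousLinearMap.inl ℝ ℝ (Euc n)) r :=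
      hasFDerivAt_prodMk_left r y
    have h3 := HasFDerivAt.comp (g := fun p : ℝ × Euc n => G p.1 p.2) r
      ((TG.diff hG (r, y)).hasFDerivAt) h4
    have h2 : HasDerivAt (fun s => G s y) (((fderiv ℝ (fun p : ℝ × Euc n => G p.1 p.2) (r, y)).comp
        (ContinuousLinearMap.inl ℝ ℝ (Euc n))) 1) r :=
      h3.hasDerivAt
    exact (h y).unique h2
  · refine TG.integrable ?_
    exact (((ContinuousLinearMap.compL ℝ ℝ (ℝ × Euc n) ℝ).flip
        (ContinuousLinearMap.inl ℝ ℝ (Euc n))).hasTemperateGrowth).comp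
        ((TG_fderiv hG).comp (by fun_prop : Function.HasTemperateGrowth fun y : Euc n => (r, y)))

end TGint

section PD
variable {n : ℕ} {f g : Euc n → ℝ} {i j : Fin n} {x : Euc n}

lemma pd_add (hf : DifferentiableAt ℝ f x) (hg : DifferentiableAt ℝ g x) :
    pd i (fun y => f y + g y) x = pd i f x + pd i g x := by
  unfold pd; rw [fderiv_fun_add hf hg]; rfl

lemma pd_sub (hf : DifferentiableAt ℝ f x) (hg : DifferentiableAt ℝ g x) :
    pd i (fun y => f y - g y) x = pd i f x - pd i g x := by
  unfold pd; rw [fderiv_fun_sub hf hg]; rfl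

lemma pd_mul (hf : DifferentiableAt ℝ f x) (hg : DifferentiableAt ℝ g x) :
    pd i (fun y => f y * g y) x = pd i f x * g x + f x * pd i g x := by
  unfold pd; rw [fderiv_fun_mul hf hg]; simp; ring

lemma pd_const_mul (c : ℝ) (hf : DifferentiableAt ℝ f x) :
    pd i (fun y => c * f y) x = c * pd i f x := by
  unfold pd; rw [fderiv_const_mul hf]; rfl

lemma pd_sq (hf : DifferentiableAt ℝ f x) :
    pd i (fun y => f y ^ 2) x = 2 * f x * pd i f x := by
  unfold pd; rw [fderiv_fun_pow 2 hf]; simp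

lemma pd_comp {h : ℝ → ℝ} {h' : ℝ} (hh : HasDerivAt h h' (f x)) (hf : DifferentiableAt ℝ f x) :
    pd i (fun y => h (f y)) x = h' * pd i f x := by
  unfold pd
  have := (hh.comp_hasFDerivAt x hf.hasFDerivAt).fderiv
  have e : fderiv ℝ (fun y => h (f y)) x = h' • fderiv ℝ f x := this
  rw [e]; rfl

lemma pd_const (c : ℝ) : pd i (fun _ => c) x = 0 := by
  unfold pd; simp

lemma pd_coord : pd i (fun y : Euc n => y j) x = if j = i then 1 else 0 := by
  unfold pd
  have : fderiv ℝ (fun y : Euc n => y j) x = (EuclideanSpace.proj j : Euc n →L[ℝ] ℝ) :=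
    (EuclideanSpace.proj j : Euc n →L[ℝ] ℝ).fderiv
  rw [this]; simp

lemma pd_sum {ι : Type*} (s : Finset ι) {F : ι → Euc n → ℝ}
    (hF : ∀ k ∈ s, DifferentiableAt ℝ (F k) x) :
    pd i (fun y => ∑ k ∈ s, F k y) x = ∑ k ∈ s, pd i (F k) x := by
  unfold pd; rw [fderiv_fun_sum hF]; simp

lemma pd_scale (hf : Differentiable ℝ f) (x₀ : Euc n) (r : ℝ) (y : Euc n) :
    pd i (fun y => f (x₀ + r • y)) y = r * pd i f (x₀ + r • y) := by
  unfold pd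
  have h1 : HasFDerivAt (fun y : Euc n => x₀ + r • y) (r • ContinuousLinearMap.id ℝ (Euc n)) y :=
    ((hasFDerivAt_id y).const_smul r).const_add x₀
  have h2 := ((hf (x₀ + r • y)).hasFDerivAt.comp y h1).fderiv
  have e : fderiv ℝ (fun y => f (x₀ + r • y)) y = (fderiv ℝ f (x₀ + r • y)).comp
    (r • ContinuousLinearMap.id ℝ (Euc n)) := h2
  rw [e]; simp

lemma pd_comm (hf : ContDiff ℝ 2 f) : pd i (pd j f) x = pd j (pd i f) x := by
  have hd : Differentiable ℝ (fderiv ℝ f) :=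
    (hf.fderiv_right (m := 1) (by norm_num)).differentiable (by norm_num)
  have key : ∀ a b : Fin n, pd a (pd b f) x = fderiv ℝ (fderiv ℝ f) x
      (EuclideanSpace.single a 1) (EuclideanSpace.single b 1) := fun a b => by
    have : pd b f = fun y => fderiv ℝ f y (EuclideanSpace.single b 1) := rfl
    unfold pd
    rw [fderiv_clm_apply (hd x) (differentiableAt_const _)]
    simp
  rw [key, key]
  have hs : IsSymmSndFDerivAt ℝ f x := hf.contDiffAt.isSymmSndFDerivAt (by simp)
  exact hs.eq _ _

lemma lap_scale (hf : ContDiff ℝ 2 f) (x₀ : Euc n) (r : ℝ) (y : Euc n) :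
    lap (fun y => f (x₀ + r • y)) y = r ^ 2 * lap f (x₀ + r • y) := by
  rw [lap_eq, lap_eq, Finset.mul_sum]
  refine Finset.sum_congr rfl fun i _ => ?_
  have hd : Differentiable ℝ f := hf.differentiable (by norm_num)
  have hd2 : Differentiable ℝ (pd i f) :=
    ((hf.fderiv_right (m := 1) (by norm_num)).clm_apply contDiff_const).differentiable (by norm_num)
  have h1 : pd i (fun y => f (x₀ + r • y)) = fun y => r * pd i f (x₀ + r • y) :=
    funext fun y => pd_scale hd x₀ r y
  rw [h1, pd_const_mul, pd_scale hd2]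
  · ring
  · fun_prop

lemma fderiv_eq_sum (f : Euc n → ℝ) (x y : Euc n) :
    fderiv ℝ f x y = ∑ i, y i * pd i f x := by
  have hy : y = ∑ i, y i • EuclideanSpace.single i (1 : ℝ) := by
    ext j; simp [Finset.sum_apply, Pi.single_apply]
  conv_lhs => rw [hy]
  simp [pd]

end PD

section Scaling
variable {n : ℕ} {f : Euc n → ℝ}

lemma TG_scale (hf : f.HasTemperateGrowth) (x₀ : Euc n) (r : ℝ) :
    Function.HasTemperateGrowth (fun y => f (x₀ + r • y)) := by fun_prop

/-- `d/dr ∫ f(x₀ + r y) dγ = ∫ y · ∇f(x₀ + r y) dγ`. -/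
lemma hasDerivAt_scale (hf : f.HasTemperateGrowth) (x₀ : Euc n) (r : ℝ) :
    HasDerivAt (fun r => ∫ y, f (x₀ + r • y) ∂(gam n))
      (∫ y, ∑ i, y i * pd i f (x₀ + r • y) ∂(gam n)) r := by
  refine hasDerivAt_gam (G := fun r y => f (x₀ + r • y)) (by fun_prop) fun y => ?_
  rw [← fderiv_eq_sum]
  have h1 : HasDerivAt (fun r : ℝ => x₀ + r • y) y r := by
    simpa using ((hasDerivAt_id r).smul_const y).const_add x₀
  exact (TG.diff hf _).hasFDerivAt.comp_hasDerivAt r h1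

/-- Gaussian integration by parts for the radial derivative. -/
lemma integral_euler (hf : f.HasTemperateGrowth) (x₀ : Euc n) (r : ℝ) :
    ∫ y, ∑ i, y i * pd i f (x₀ + r • y) ∂(gam n) =
      r * ∫ y, lap f (x₀ + r • y) ∂(gam n) := by
  rw [integral_finsetSum _ (fun i _ => TG.integrable (by fun_prop)), ← integral_const_mul]
  simp_rw [lap_eq, Finset.mul_sum]
  rw [integral_finsetSum _ (fun i _ => TG.integrable (by fun_prop))]
  refine Finset.sum_congr rfl fun i _ => ?_
  rw [← gam_ibp (f := fun y => pd i f (x₀ + r • y)) (by fun_prop) i]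
  congr 1; ext y
  exact pd_scale (TG.diff (by fun_prop)) _ _ _

/-- The heat equation: `d/dr ∫ f(x₀ + r y) dγ = r ∫ Δf(x₀ + r y) dγ`. -/
lemma hasDerivAt_scale_lap (hf : f.HasTemperateGrowth) (x₀ : Euc n) (r : ℝ) :
    HasDerivAt (fun r => ∫ y, f (x₀ + r • y) ∂(gam n))
      (r * ∫ y, lap f (x₀ + r • y) ∂(gam n)) r := by
  rw [← integral_euler hf]; exact hasDerivAt_scale hf x₀ r

/-- Green's formula for the Ornstein–Uhlenbeck operator `Δ - y · ∇`. -/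
lemma gam_green {a b : Euc n → ℝ} (ha : a.HasTemperateGrowth) (hb : b.HasTemperateGrowth) :
    ∫ y, ∑ i, pd i a y * pd i b y ∂(gam n) =
      ∫ y, a y * ((∑ i, y i * pd i b y) - lap b y) ∂(gam n) := by
  have h1 : ∀ y, a y * ((∑ i, y i * pd i b y) - lap b y) =
      ∑ i, (y i * (a y * pd i b y) - a y * pd i (pd i b) y) := fun y => by
    rw [lap_eq, ← Finset.sum_sub_distrib, Finset.mul_sum]
    exact Finset.sum_congr rfl fun i _ => by ring
  simp_rw [h1]
  rw [integral_finsetSum _ (fun i _ => TG.integrable (by fun_prop)),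
    integral_finsetSum _ (fun i _ => TG.integrable (by fun_prop))]
  refine Finset.sum_congr rfl fun i _ => ?_
  rw [integral_sub (TG.integrable (by fun_prop)) (TG.integrable (by fun_prop)),
    ← gam_ibp (f := fun y => a y * pd i b y) (by fun_prop) i,
    ← integral_sub (TG.integrable (by fun_prop)) (TG.integrable (by fun_prop))]
  congr 1; ext y
  rw [pd_mul (TG.diff ha y) (TG.diff (by fun_prop) y)]; ring

end Scaling

/-! ### Interior gradient estimate and temperate growth of solutions -/

section MaxPrinciple

lemma second_deriv_nonpos_of_isLocalMax {φ : ℝ → ℝ} (hφ : Continuous φ)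
    (h : IsLocalMax φ 0) : deriv (deriv φ) 0 ≤ 0 := by
  by_contra hc
  push Not at hc
  have hmin := isLocalMin_of_deriv_deriv_pos hc h.deriv_eq_zero hφ.continuousAt
  have hconst : φ =ᶠ[nhds 0] fun _ => φ 0 := by
    filter_upwards [h, hmin] with t h1 h2 using le_antisymm h1 h2
  have h2 : deriv φ =ᶠ[nhds 0] deriv (fun _ => φ 0) := hconst.deriv
  have h3 := h2.deriv_eq
  simp at h3
  linarith

variable {n : ℕ}

lemma hasDerivAt_line {f : Euc n → ℝ} (hf : Differentiable ℝ f) (x : Euc n) (i : Fin n) (t : ℝ) :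
    HasDerivAt (fun t : ℝ => f (x + t • EuclideanSpace.single i 1))
      (pd i f (x + t • EuclideanSpace.single i 1)) t := by
  have h1 : HasDerivAt (fun r : ℝ => x + r • (EuclideanSpace.single i (1 : ℝ) : Euc n))
      (EuclideanSpace.single i 1) t := by
    simpa using ((hasDerivAt_id t).smul_const (EuclideanSpace.single i (1 : ℝ) : Euc n)).const_add x
  exact (hf _).hasFDerivAt.comp_hasDerivAt t h1

lemma contDiff_pd {f : Euc n → ℝ} {k : ℕ} (hf : ContDiff ℝ (k + 1 : ℕ) f) (i : Fin n) :
    ContDiff ℝ k (pd i f) :=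
  (hf.fderiv_right (m := k) (by norm_cast)).clm_apply contDiff_const

lemma contDiff_pd_infty {f : Euc n → ℝ} (hf : ContDiff ℝ (⊤ : ℕ∞) f) (i : Fin n) :
    ContDiff ℝ (⊤ : ℕ∞) (pd i f) :=
  (hf.fderiv_right (m := (⊤ : ℕ∞)) (by norm_cast)).clm_apply contDiff_const

lemma contDiff_lap_infty {f : Euc n → ℝ} (hf : ContDiff ℝ (⊤ : ℕ∞) f) :
    ContDiff ℝ (⊤ : ℕ∞) (lap f) := by
  have : ContDiff ℝ (⊤ : ℕ∞) (fun x => ∑ i, pd i (pd i f) x) :=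
    ContDiff.sum fun i _ => contDiff_pd_infty (contDiff_pd_infty hf i) i
  exact this

lemma pd_pd_nonpos_of_isLocalMax {h : Euc n → ℝ} (hh : ContDiff ℝ 2 h) {x : Euc n}
    (hx : IsLocalMax h x) (i : Fin n) : pd i (pd i h) x ≤ 0 := by
  have hd : Differentiable ℝ h := hh.differentiable (by norm_num)
  have hd2 : Differentiable ℝ (pd i h) :=
    (contDiff_pd (k := 1) hh i).differentiable (by norm_num)
  have hc : Continuous (fun t : ℝ => x + t • (EuclideanSpace.single i (1 : ℝ) : Euc n)) := by
    fun_prop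
  have h1 : deriv (fun t : ℝ => h (x + t • EuclideanSpace.single i 1)) =
      fun t => pd i h (x + t • EuclideanSpace.single i 1) :=
    funext fun t => (hasDerivAt_line hd x i t).deriv
  have h2 := second_deriv_nonpos_of_isLocalMax
    (φ := fun t : ℝ => h (x + t • EuclideanSpace.single i 1)) (hd.continuous.comp hc) (by
      have := hc.tendsto 0
      simp only [zero_smul, add_zero] at this
      have := this.eventually hx
      simpa [IsLocalMax, IsMaxFilter] using this)
  rw [h1, (hasDerivAt_line hd2 x i 0).deriv] at h2
  simpa using h2

lemma lap_nonpos_of_isLocalMax {h : Euc n → ℝ} (hh : ContDiff ℝ 2 h) {x : Euc n}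
    (hx : IsLocalMax h x) : lap h x ≤ 0 := by
  rw [lap_eq]
  exact Finset.sum_nonpos fun i _ => pd_pd_nonpos_of_isLocalMax hh hx i

lemma pd_eq_zero_of_isLocalMax {h : Euc n → ℝ} {x : Euc n}
    (hx : IsLocalMax h x) (i : Fin n) : pd i h x = 0 := by
  unfold pd; rw [hx.fderiv_eq_zero]; rfl

end MaxPrinciple

section Gradient
variable {n : ℕ}

/-- Reflection in the `i`-th coordinate hyperplane. -/
noncomputable def crefl (i : Fin n) : Euc n →L[ℝ] Euc n :=
  ContinuousLinearMap.id ℝ (Euc n) -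
    (2 : ℝ) • (EuclideanSpace.proj i : Euc n →L[ℝ] ℝ).smulRight (EuclideanSpace.single i (1 : ℝ))

lemma refl_apply (i : Fin n) (z : Euc n) :
    crefl i z = z - (2 * z i) • EuclideanSpace.single i (1 : ℝ) := by
  simp [crefl, mul_smul]

lemma norm_refl (i : Fin n) (z : Euc n) : ‖crefl i z‖ = ‖z‖ := by
  rw [EuclideanSpace.norm_eq, EuclideanSpace.norm_eq]
  congr 1
  refine Finset.sum_congr rfl fun j _ => ?_
  rw [refl_apply]
  by_cases h : j = i
  · subst h; simp only [PiLp.sub_apply, PiLp.smul_apply, PiLp.single_apply, if_true, smul_eq_mul,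
      Real.norm_eq_abs, sq_abs]; ring
  · simp [h]

lemma pd_refl {f : Euc n → ℝ} (hf : Differentiable ℝ f) (x : Euc n) (i j : Fin n) (z : Euc n) :
    pd j (fun z => f (x + crefl i z)) z = (if j = i then -1 else 1) * pd j f (x + crefl i z) := by
  have h1 : HasFDerivAt (fun z : Euc n => x + crefl i z) (crefl i) z :=
    (crefl i).hasFDerivAt.const_add x
  have h2 := ((hf _).hasFDerivAt.comp z h1).fderiv
  have e : fderiv ℝ (fun z => f (x + crefl i z)) z = (fderiv ℝ f (x + crefl i z)).comp (crefl i) := h2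
  unfold pd; rw [e]
  simp only [ContinuousLinearMap.comp_apply, refl_apply]
  by_cases h : j = i
  · subst h
    simp
    ring
  · have : ¬ i = j := fun h' => h h'.symm
    simp [h, this]

lemma lap_refl {f : Euc n → ℝ} (hf : ContDiff ℝ 2 f) (x : Euc n) (i : Fin n) (z : Euc n) :
    lap (fun z => f (x + crefl i z)) z = lap f (x + crefl i z) := by
  rw [lap_eq, lap_eq]
  refine Finset.sum_congr rfl fun j _ => ?_
  have hd : Differentiable ℝ f := hf.differentiable (by norm_num)
  have hd2 : Differentiable ℝ (pd j f) :=
    (contDiff_pd (k := 1) hf j).differentiable (by norm_num)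
  have h1 : pd j (fun z => f (x + crefl i z)) =
      fun z => (if j = i then -1 else 1) * pd j f (x + crefl i z) :=
    funext fun y => pd_refl hd x i j y
  rw [h1, pd_const_mul, pd_refl hd2]
  · split_ifs <;> ring
  · fun_prop

lemma lap_add {f g : Euc n → ℝ} (hf : ContDiff ℝ 2 f) (hg : ContDiff ℝ 2 g) (x : Euc n) :
    lap (fun y => f y + g y) x = lap f x + lap g x := by
  rw [lap_eq, lap_eq, lap_eq, ← Finset.sum_add_distrib]
  refine Finset.sum_congr rfl fun i _ => ?_
  have h1 : pd i (fun y => f y + g y) = fun y => pd i f y + pd i g y :=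
    funext fun y => pd_add (hf.differentiable (by norm_num) y) (hg.differentiable (by norm_num) y)
  rw [h1, pd_add ((contDiff_pd (k := 1) hf i).differentiable (by norm_num) x)
    ((contDiff_pd (k := 1) hg i).differentiable (by norm_num) x)]

lemma lap_const_mul {f : Euc n → ℝ} (hf : ContDiff ℝ 2 f) (c : ℝ) (x : Euc n) :
    lap (fun y => c * f y) x = c * lap f x := by
  rw [lap_eq, lap_eq, Finset.mul_sum]
  refine Finset.sum_congr rfl fun i _ => ?_
  have h1 : pd i (fun y => c * f y) = fun y => c * pd i f y :=
    funext fun y => pd_const_mul c (hf.differentiable (by norm_num) y)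
  rw [h1, pd_const_mul c ((contDiff_pd (k := 1) hf i).differentiable (by norm_num) x)]

lemma lap_sub {f g : Euc n → ℝ} (hf : ContDiff ℝ 2 f) (hg : ContDiff ℝ 2 g) (x : Euc n) :
    lap (fun y => f y - g y) x = lap f x - lap g x := by
  have := lap_add hf (contDiff_const.mul hg : ContDiff ℝ 2 fun y => (-1) * g y) x
  rw [lap_const_mul hg] at this
  simp only [neg_mul, one_mul, ← sub_eq_add_neg] at this
  exact this

lemma pd_norm_sq (i : Fin n) (x : Euc n) : pd i (fun y : Euc n => ‖y‖ ^ 2) x = 2 * x i := by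
  unfold pd
  rw [(hasStrictFDerivAt_norm_sq x).hasFDerivAt.fderiv]
  simp [EuclideanSpace.inner_single_right]

lemma contDiff_coord (i : Fin n) {k : WithTop ℕ∞} : ContDiff ℝ k (fun y : Euc n => y i) :=
  (EuclideanSpace.proj i : Euc n →L[ℝ] ℝ).contDiff

lemma lap_norm_sq (x : Euc n) : lap (fun y : Euc n => ‖y‖ ^ 2) x = 2 * n := by
  rw [lap_eq]
  have h1 : ∀ i : Fin n, pd i (fun y : Euc n => ‖y‖ ^ 2) = fun y => 2 * y i :=
    fun i => funext fun y => pd_norm_sq i y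
  have : ∀ i : Fin n, pd i (pd i (fun y : Euc n => ‖y‖ ^ 2)) x = 2 := fun i => by
    rw [h1, pd_const_mul _ ((contDiff_coord (k := 1) i).differentiable (by norm_num) x), pd_coord]; simp
  simp [this]; ring

lemma lap_coord_quad (i : Fin n) (x : Euc n) : lap (fun y : Euc n => y i - y i ^ 2) x = -2 := by
  rw [lap_eq]
  have hd : ∀ x : Euc n, DifferentiableAt ℝ (fun y : Euc n => y i) x := fun x =>
    (contDiff_coord (k := 1) i).differentiable (by norm_num) x
  have h1 : ∀ j : Fin n, pd j (fun y : Euc n => y i - y i ^ 2) =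
      fun y => (if i = j then 1 else 0) - (2 * y i) * (if i = j then 1 else 0) :=
    fun j => funext fun y => by
      rw [pd_sub (hd y) ((hd y).fun_pow 2), pd_sq (hd y), pd_coord]
  have : ∀ j : Fin n, pd j (pd j (fun y : Euc n => y i - y i ^ 2)) x =
      if i = j then -2 else 0 := fun j => by
    rw [h1]
    by_cases h : i = j
    · simp only [h, if_true, mul_one]
      rw [pd_sub (differentiableAt_const _) (by rw [← h]; exact (hd x).const_mul 2), pd_const,
        pd_const_mul _ (by rw [← h]; exact hd x), pd_coord]; simp
    · simp only [h, if_false, mul_zero, sub_zero]; rw [pd_const]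
  simp [this]

/-- On the half ball `{zᵢ ≥ 0}` the odd part of `f` in the `i`-th direction is compared with the
barrier `M|z|² + K(zᵢ - zᵢ²)`; both vanish at the centre, and comparing the slopes there bounds
the derivative. -/
lemma gradient_est_aux {f : Euc n → ℝ} (hf : ContDiff ℝ 2 f) (x : Euc n) {M N : ℝ}
    (hM : ∀ z, ‖z‖ ≤ 1 → |f (x + z)| ≤ M) (hN : ∀ z, ‖z‖ ≤ 1 → |lap f (x + z)| ≤ N) (i : Fin n) :
    pd i f x ≤ n * M + N + 1 := by
  set K := n * M + N + 1 with hK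
  have hM0 : 0 ≤ M := (abs_nonneg _).trans (hM 0 (by simp))
  have hN0 : 0 ≤ N := (abs_nonneg _).trans (hN 0 (by simp))
  have hK0 : 0 ≤ K := by positivity
  have hfd : Differentiable ℝ f := hf.differentiable (by norm_num)
  -- `h` is the odd part of `f` minus the barrier; it has no interior maximum on the half ball
  set g : Euc n → ℝ := fun z => 1 / 2 * (f (x + (1 : ℝ) • z) - f (x + crefl i z)) with hg
  set b : Euc n → ℝ := fun z => M * ‖z‖ ^ 2 + K * (z i - z i ^ 2) with hb
  set h : Euc n → ℝ := fun z => g z - b z with hh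
  have c1 : ContDiff ℝ 2 (fun z : Euc n => f (x + (1 : ℝ) • z)) := hf.comp (by fun_prop)
  have c2 : ContDiff ℝ 2 (fun z : Euc n => f (x + crefl i z)) := hf.comp (by fun_prop)
  have c3 : ContDiff ℝ 2 (fun z : Euc n => ‖z‖ ^ 2) := contDiff_norm_sq ℝ
  have c4 : ContDiff ℝ 2 (fun z : Euc n => z i - z i ^ 2) :=
    (contDiff_coord i).sub ((contDiff_coord i).pow 2)
  have cg : ContDiff ℝ 2 g := contDiff_const.mul (c1.sub c2)
  have cb : ContDiff ℝ 2 b := (contDiff_const.mul c3).add (contDiff_const.mul c4)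
  have ch : ContDiff ℝ 2 h := cg.sub cb
  have hlap : ∀ z, lap h z = 1 / 2 * (lap f (x + z) - lap f (x + crefl i z)) -
      (M * (2 * n) + K * (-2)) := fun z => by
    rw [hh, lap_sub cg cb, hg, lap_const_mul (c1.sub c2), lap_sub c1 c2, lap_scale hf, lap_refl hf,
      hb, lap_add (contDiff_const.mul c3) (contDiff_const.mul c4), lap_const_mul c3,
      lap_const_mul c4, lap_norm_sq, lap_coord_quad]
    simp
  have hcoord : ∀ z : Euc n, |z i| ≤ ‖z‖ := fun z => by
    simpa using PiLp.norm_apply_le z i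
  have hle : ∀ z : Euc n, ‖z‖ ≤ 1 → 0 ≤ z i → h z ≤ 0 := by
    set S : Set (Euc n) := closedBall 0 1 ∩ {z | 0 ≤ z i} with hS
    have hScomp : IsCompact S :=
      (isCompact_closedBall _ _).inter_right (isClosed_le continuous_const (by fun_prop))
    obtain ⟨z, hzS, hzmax⟩ := hScomp.exists_isMaxOn ⟨0, by simp [hS]⟩ ch.continuous.continuousOn
    have hz1 : ‖z‖ ≤ 1 := by simpa using hzS.1
    have hz2 : 0 ≤ z i := hzS.2
    suffices hz : h z ≤ 0 by
      intro w hw1 hw2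
      exact (hzmax (show w ∈ S from ⟨by simpa using hw1, hw2⟩)).trans hz
    have hzi : z i ≤ 1 := (le_abs_self _).trans ((hcoord z).trans hz1)
    rcases hz1.eq_or_lt with he | hlt
    · have h1 := hM z hz1
      have h2 := hM (crefl i z) (by rw [norm_refl]; exact hz1)
      rw [abs_le] at h1 h2
      have h3 : 0 ≤ K * (z i - z i ^ 2) := mul_nonneg hK0 (by nlinarith)
      simp only [hh, hg, hb, he, one_smul]
      nlinarith
    · rcases hz2.eq_or_lt with h0 | hpos
      · have h1 : crefl i z = z := by rw [refl_apply, ← h0]; simp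
        have h2 : 0 ≤ M * ‖z‖ ^ 2 := by positivity
        simp only [hh, hg, hb, h1, one_smul, ← h0]
        nlinarith
      · exfalso
        have hnhds : S ∈ nhds z := by
          refine Filter.inter_mem (Filter.mem_of_superset (isOpen_ball.mem_nhds
            (by simpa using hlt : z ∈ ball (0 : Euc n) 1)) ball_subset_closedBall) ?_
          exact Filter.mem_of_superset ((isOpen_lt continuous_const (by fun_prop :
            Continuous fun z : Euc n => z i)).mem_nhds hpos)
            fun w (hw : 0 < w i) => (le_of_lt hw : (0 : ℝ) ≤ w i)
        have hloc : IsLocalMax h z := hzmax.isLocalMax hnhds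
        have h1 := lap_nonpos_of_isLocalMax ch hloc
        rw [hlap] at h1
        have h2 := hN z hz1
        have h3 := hN (crefl i z) (by rw [norm_refl]; exact hz1)
        rw [abs_le] at h2 h3
        nlinarith
  -- differentiate along the `i`-th axis at the centre
  have hder := hasDerivAt_line (ch.differentiable (by norm_num)) 0 i 0
  have hval : pd i h 0 = pd i f x - K := by
    have hd3 : DifferentiableAt ℝ (fun z : Euc n => z i) 0 :=
      (contDiff_coord (k := 1) i).differentiable (by norm_num) 0
    have e1 := c1.differentiable (by norm_num) 0
    have e2 := c2.differentiable (by norm_num) 0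
    have e3 := c3.differentiable (by norm_num) 0
    have e4 := c4.differentiable (by norm_num) 0
    rw [hh, pd_sub (cg.differentiable (by norm_num) 0) (cb.differentiable (by norm_num) 0), hg, hb,
      pd_const_mul _ (e1.fun_sub e2), pd_sub e1 e2, pd_scale hfd, pd_refl hfd,
      pd_add (e3.const_mul _) (e4.const_mul _), pd_const_mul _ e3, pd_const_mul _ e4,
      pd_norm_sq, pd_sub hd3 (hd3.fun_pow 2), pd_sq hd3, pd_coord]
    simp
    ring
  simp only [zero_smul, add_zero] at hder
  rw [hval] at hder
  have hslope := hasDerivWithinAt_iff_tendsto_slope.1 (hder.hasDerivWithinAt (s := Ioi 0))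
  have hdiff : Ioi (0 : ℝ) \ {0} = Ioi 0 := by simp
  rw [hdiff] at hslope
  have hfin : pd i f x - K ≤ 0 := by
    refine le_of_tendsto hslope ?_
    have : Ioo (0 : ℝ) 1 ∈ nhdsWithin 0 (Ioi 0) := Ioo_mem_nhdsGT one_pos
    filter_upwards [this] with t ht
    rw [slope_def_field]
    have h0 : h (0 + (0 : ℝ) • EuclideanSpace.single i 1) = 0 := by
      simp [hh, hg, hb]
    rw [h0]
    have := hle (0 + t • EuclideanSpace.single i 1) (by
      simp [norm_smul, abs_of_pos ht.1, ht.2.le]) (by simp [ht.1.le])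
    apply div_nonpos_of_nonpos_of_nonneg <;> linarith [ht.1]
  linarith

/-- Interior gradient estimate for the Poisson equation. -/
lemma gradient_est {f : Euc n → ℝ} (hf : ContDiff ℝ 2 f) (x : Euc n) {M N : ℝ}
    (hM : ∀ z, ‖z‖ ≤ 1 → |f (x + z)| ≤ M) (hN : ∀ z, ‖z‖ ≤ 1 → |lap f (x + z)| ≤ N) (i : Fin n) :
    |pd i f x| ≤ n * M + N + 1 := by
  rw [abs_le]
  constructor
  · have := gradient_est_aux (f := fun y => (-1) * f y) (contDiff_const.mul hf) x (M := M) (N := N)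
      (fun z hz => by simpa using hM z hz)
      (fun z hz => by rw [lap_const_mul hf]; simpa using hN z hz) i
    rw [pd_const_mul _ (hf.differentiable (by norm_num) x)] at this
    linarith
  · exact gradient_est_aux hf x hM hN i

end Gradient

section PolyBounds
variable {n : ℕ}

/-- All partial derivatives of order at most `k` grow at most polynomially. -/
def PB : ℕ → (Euc n → ℝ) → Prop
  | 0, f => ∃ (m : ℕ) (C : ℝ), ∀ x, |f x| ≤ C * (1 + ‖x‖) ^ m
  | k + 1, f => (∃ (m : ℕ) (C : ℝ), ∀ x, |f x| ≤ C * (1 + ‖x‖) ^ m) ∧ ∀ i, PB k (pd i f)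

lemma PB.zero {k : ℕ} {f : Euc n → ℝ} (h : PB k f) : PB 0 f := by
  cases k with
  | zero => exact h
  | succ k => exact h.1

lemma PB.pred {k : ℕ} : ∀ {f : Euc n → ℝ}, PB (k + 1) f → PB k f := by
  induction k with
  | zero => intro f h; exact h.1
  | succ k ih => intro f h; exact ⟨h.1, fun i => ih (h.2 i)⟩

lemma poly_bound_nonneg {f : Euc n → ℝ} (h : PB 0 f) :
    ∃ (m : ℕ) (C : ℝ), 0 ≤ C ∧ ∀ x, |f x| ≤ C * (1 + ‖x‖) ^ m := by
  obtain ⟨m, C, h⟩ := h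
  exact ⟨m, |C|, abs_nonneg _, fun x => (h x).trans
    (mul_le_mul_of_nonneg_right (le_abs_self _) (by positivity))⟩

lemma PB.add {k : ℕ} : ∀ {f g : Euc n → ℝ}, ContDiff ℝ (⊤ : ℕ∞) f → ContDiff ℝ (⊤ : ℕ∞) g →
    PB k f → PB k g → PB k (fun x => f x + g x) := by
  have base : ∀ {f g : Euc n → ℝ}, PB 0 f → PB 0 g → PB 0 (fun x => f x + g x) := by
    intro f g hf hg
    obtain ⟨m, C, hC, h1⟩ := poly_bound_nonneg hf
    obtain ⟨l, D, hD, h2⟩ := poly_bound_nonneg hg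
    refine ⟨m + l, C + D, fun x => (abs_add_le _ _).trans ?_⟩
    have e1 : (1 + ‖x‖) ^ m ≤ (1 + ‖x‖) ^ (m + l) :=
      pow_le_pow_right₀ (by linarith [norm_nonneg x]) (by omega)
    have e2 : (1 + ‖x‖) ^ l ≤ (1 + ‖x‖) ^ (m + l) :=
      pow_le_pow_right₀ (by linarith [norm_nonneg x]) (by omega)
    nlinarith [h1 x, h2 x]
  induction k with
  | zero => intro f g _ _ hf hg; exact base hf hg
  | succ k ih =>
    intro f g cf cg hf hg
    refine ⟨base hf.1 hg.1, fun i => ?_⟩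
    have : pd i (fun x => f x + g x) = fun x => pd i f x + pd i g x := funext fun x =>
      pd_add (cf.differentiable (by simp) x) (cg.differentiable (by simp) x)
    rw [this]
    exact ih (contDiff_pd_infty cf i) (contDiff_pd_infty cg i) (hf.2 i) (hg.2 i)

lemma PB.mul {k : ℕ} : ∀ {f g : Euc n → ℝ}, ContDiff ℝ (⊤ : ℕ∞) f → ContDiff ℝ (⊤ : ℕ∞) g →
    PB k f → PB k g → PB k (fun x => f x * g x) := by
  have base : ∀ {f g : Euc n → ℝ}, PB 0 f → PB 0 g → PB 0 (fun x => f x * g x) := by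
    intro f g hf hg
    obtain ⟨m, C, hC, h1⟩ := poly_bound_nonneg hf
    obtain ⟨l, D, hD, h2⟩ := poly_bound_nonneg hg
    refine ⟨m + l, C * D, fun x => ?_⟩
    rw [abs_mul, pow_add]
    calc |f x| * |g x| ≤ (C * (1 + ‖x‖) ^ m) * (D * (1 + ‖x‖) ^ l) :=
          mul_le_mul (h1 x) (h2 x) (abs_nonneg _) (by positivity)
      _ = _ := by ring
  induction k with
  | zero => intro f g _ _ hf hg; exact base hf hg
  | succ k ih =>
    intro f g cf cg hf hg
    refine ⟨base hf.1 hg.1, fun i => ?_⟩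
    have : pd i (fun x => f x * g x) = fun x => pd i f x * g x + f x * pd i g x := funext fun x =>
      pd_mul (cf.differentiable (by simp) x) (cg.differentiable (by simp) x)
    rw [this]
    have df := contDiff_pd_infty cf i
    have dg := contDiff_pd_infty cg i
    exact PB.add (df.mul cg) (cf.mul dg) (ih df cg (hf.2 i) hg.pred) (ih cf dg hf.pred (hg.2 i))

lemma lap_pd {f : Euc n → ℝ} (hf : ContDiff ℝ (⊤ : ℕ∞) f) (i : Fin n) :
    lap (pd i f) = pd i (lap f) := by
  funext x
  have e : lap f = fun x => ∑ j, pd j (pd j f) x := rfl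
  rw [e, pd_sum _ (fun j _ =>
    (contDiff_pd_infty (contDiff_pd_infty hf j) j).differentiable (by simp) x), lap_eq]
  refine Finset.sum_congr rfl fun j _ => ?_
  have h1 : pd j (pd i f) = pd i (pd j f) := funext fun y =>
    pd_comm (contDiff_infty.1 hf 2)
  rw [h1]
  exact pd_comm (contDiff_infty.1 (contDiff_pd_infty hf j) 2)

/-- Bounds on `f` and `Δf` give bounds on one more derivative of `f`, by the interior gradient
estimate. -/
lemma PB.step {k : ℕ} : ∀ {f : Euc n → ℝ}, ContDiff ℝ (⊤ : ℕ∞) f → PB k f → PB k (lap f) →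
    PB (k + 1) f := by
  induction k with
  | zero =>
    intro f cf h1 h2
    refine ⟨h1, fun i => ?_⟩
    obtain ⟨m, C, hC, h1⟩ := poly_bound_nonneg h1
    obtain ⟨l, D, hD, h2⟩ := poly_bound_nonneg h2
    refine ⟨m + l, n * (C * 2 ^ m) + D * 2 ^ l + 1, fun x => ?_⟩
    have hz : ∀ z : Euc n, ‖z‖ ≤ 1 → 1 + ‖x + z‖ ≤ 2 * (1 + ‖x‖) := fun z hz => by
      have := norm_add_le x z; linarith [norm_nonneg x]
    have := gradient_est (contDiff_infty.1 cf 2) x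
      (M := C * (2 * (1 + ‖x‖)) ^ m) (N := D * (2 * (1 + ‖x‖)) ^ l)
      (fun z h => (h1 _).trans (by gcongr; exact hz z h))
      (fun z h => (h2 _).trans (by gcongr; exact hz z h)) i
    refine this.trans ?_
    have h1x : 1 ≤ 1 + ‖x‖ := by linarith [norm_nonneg x]
    have e1 : (1 + ‖x‖) ^ m ≤ (1 + ‖x‖) ^ (m + l) := pow_le_pow_right₀ h1x (by omega)
    have e2 : (1 + ‖x‖) ^ l ≤ (1 + ‖x‖) ^ (m + l) := pow_le_pow_right₀ h1x (by omega)
    have e3 : 1 ≤ (1 + ‖x‖) ^ (m + l) := one_le_pow₀ h1x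
    rw [mul_pow, mul_pow]
    calc (n : ℝ) * (C * (2 ^ m * (1 + ‖x‖) ^ m)) + D * (2 ^ l * (1 + ‖x‖) ^ l) + 1
        ≤ (n : ℝ) * (C * (2 ^ m * (1 + ‖x‖) ^ (m + l))) + D * (2 ^ l * (1 + ‖x‖) ^ (m + l))
          + (1 + ‖x‖) ^ (m + l) := by gcongr
      _ = _ := by ring
  | succ k ih =>
    intro f cf h1 h2
    refine ⟨h1.1, fun i => ih (contDiff_pd_infty cf i) (h1.2 i) ?_⟩
    rw [lap_pd cf]; exact h2.2 i

lemma PB.iterated {k : ℕ} : ∀ {f : Euc n → ℝ}, ContDiff ℝ (⊤ : ℕ∞) f → PB k f →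
    ∃ (m : ℕ) (C : ℝ), 0 ≤ C ∧ ∀ x, ‖iteratedFDeriv ℝ k f x‖ ≤ C * (1 + ‖x‖) ^ m := by
  induction k with
  | zero =>
    intro f _ h
    obtain ⟨m, C, hC, h1⟩ := poly_bound_nonneg h
    exact ⟨m, C, hC, fun x => by rw [norm_iteratedFDeriv_zero]; exact h1 x⟩
  | succ k ih =>
    intro f cf h
    choose m C hC hb using fun i => ih (contDiff_pd_infty cf i) (h.2 i)
    set L : Fin n → ℝ →L[ℝ] (Euc n →L[ℝ] ℝ) := fun i =>
      ContinuousLinearMap.smulRight (1 : ℝ →L[ℝ] ℝ) (EuclideanSpace.proj i : Euc n →L[ℝ] ℝ) with hL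
    have hsum : fderiv ℝ f = fun x => ∑ i, (L i ∘ pd i f) x := by
      funext x; ext y
      rw [fderiv_eq_sum]
      simp [hL, mul_comm]
    refine ⟨∑ i, m i, ∑ i, ‖L i‖ * C i, Finset.sum_nonneg fun i _ => by
      have := hC i; positivity, fun x => ?_⟩
    have hcd : ∀ i, ContDiff ℝ k (pd i f) := fun i =>
      (contDiff_pd_infty cf i).of_le (by exact_mod_cast le_top)
    rw [← norm_iteratedFDeriv_fderiv, hsum, iteratedFDeriv_fun_sum_apply
      (fun i _ => ((L i).contDiff.comp (hcd i)).contDiffAt), Finset.sum_mul]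
    refine (norm_sum_le _ _).trans (Finset.sum_le_sum fun i _ => ?_)
    refine ((L i).norm_iteratedFDeriv_comp_left (hcd i).contDiffAt le_rfl).trans ?_
    rw [mul_assoc]
    gcongr
    refine (hb i x).trans ?_
    have := hC i
    gcongr
    · linarith [norm_nonneg x]
    · exact Finset.single_le_sum (f := m) (fun _ _ => Nat.zero_le _) (Finset.mem_univ i)

/-- Solutions of linear growth are temperate: since `Δu` and `Δv` are polynomials in `u` and `v`,
`PB.step` can be iterated. -/
lemma TG_of_solution {u v : Euc n → ℝ} (hu : ContDiff ℝ (⊤ : ℕ∞) u) (hv : ContDiff ℝ (⊤ : ℕ∞) v)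
    (hupos : ∀ x, 0 < u x) (hvpos : ∀ x, 0 < v x)
    (hequ : ∀ x, lap u x = u x * v x ^ 2) (heqv : ∀ x, lap v x = v x * u x ^ 2)
    {C₀ : ℝ} (hgrowth : ∀ x, u x + v x ≤ C₀ * (1 + ‖x‖)) :
    Function.HasTemperateGrowth u ∧ Function.HasTemperateGrowth v := by
  have key : ∀ k, PB k u ∧ PB k v := by
    intro k
    induction k with
    | zero =>
      refine ⟨⟨1, C₀, fun x => ?_⟩, ⟨1, C₀, fun x => ?_⟩⟩
      · rw [abs_of_pos (hupos x), pow_one]; linarith [hgrowth x, hvpos x]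
      · rw [abs_of_pos (hvpos x), pow_one]; linarith [hgrowth x, hupos x]
    | succ k ih =>
      have e1 : lap u = fun x => u x * (v x * v x) := funext fun x => by rw [hequ]; ring
      have e2 : lap v = fun x => v x * (u x * u x) := funext fun x => by rw [heqv]; ring
      refine ⟨PB.step hu ih.1 ?_, PB.step hv ih.2 ?_⟩
      · rw [e1]; exact PB.mul hu (hv.mul hv) ih.1 (PB.mul hv hv ih.2 ih.2)
      · rw [e2]; exact PB.mul hv (hu.mul hu) ih.2 (PB.mul hu hu ih.1 ih.1)
  refine ⟨⟨hu, fun k => ?_⟩, ⟨hv, fun k => ?_⟩⟩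
  · obtain ⟨m, C, -, h⟩ := PB.iterated hu (key k).1
    exact ⟨m, C, h⟩
  · obtain ⟨m, C, -, h⟩ := PB.iterated hv (key k).2
    exact ⟨m, C, h⟩

end PolyBounds

/-! ### A second order Gaussian Poincaré inequality -/

section Mehler
variable {n : ℕ}

@[fun_prop]
lemma TG_cos : Function.HasTemperateGrowth Real.cos := by
  refine ⟨Real.contDiff_cos, fun k => ⟨0, 1, fun x => ?_⟩⟩
  rw [norm_iteratedFDeriv_eq_norm_iteratedDeriv]
  simpa using Real.abs_iteratedDeriv_cos_le_one k x

@[fun_prop]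
lemma TG_sin : Function.HasTemperateGrowth Real.sin := by
  refine ⟨Real.contDiff_sin, fun k => ⟨0, 1, fun x => ?_⟩⟩
  rw [norm_iteratedFDeriv_eq_norm_iteratedDeriv]
  simpa using Real.abs_iteratedDeriv_sin_le_one k x

/-- The Ornstein–Uhlenbeck semigroup in Mehler's form, with `e^{-t} = cos φ`. -/
noncomputable def mehler (f : Euc n → ℝ) (φ : ℝ) (x : Euc n) : ℝ :=
  ∫ z, f (Real.cos φ • x + Real.sin φ • z) ∂(gam n)

variable {f : Euc n → ℝ}

lemma TG_mehler_joint (hf : f.HasTemperateGrowth) :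
    Function.HasTemperateGrowth (fun p : ℝ × Euc n => mehler f p.1 p.2) := by
  refine TG_integral (G := fun q : (ℝ × Euc n) × Euc n =>
    f (Real.cos q.1.1 • q.1.2 + Real.sin q.1.1 • q.2)) ?_
  have h1 : Function.HasTemperateGrowth (fun q : (ℝ × Euc n) × Euc n => Real.cos q.1.1) :=
    TG_cos.comp (by fun_prop)
  have h2 : Function.HasTemperateGrowth (fun q : (ℝ × Euc n) × Euc n => Real.sin q.1.1) :=
    TG_sin.comp (by fun_prop)
  fun_prop

@[fun_prop]
lemma TG_mehler (hf : f.HasTemperateGrowth) (φ : ℝ) :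
    Function.HasTemperateGrowth (mehler f φ) :=
  (TG_mehler_joint hf).comp (f := fun x => (φ, x)) (by fun_prop)

lemma pd_mehler (hf : f.HasTemperateGrowth) (φ : ℝ) (x : Euc n) (i : Fin n) :
    pd i (mehler f φ) x = Real.cos φ * mehler (pd i f) φ x := by
  have h1 := hasDerivAt_line (TG.diff (TG_mehler hf φ)) x i 0
  simp only [zero_smul, add_zero] at h1
  have h2 := hasDerivAt_gam (n := n) (r := 0)
    (G := fun t z => f (Real.cos φ • (x + t • EuclideanSpace.single i 1) + Real.sin φ • z))
    (G' := fun z => Real.cos φ * pd i f (Real.cos φ • x + Real.sin φ • z)) (by fun_prop)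
    (fun z => by
      have h3 : HasDerivAt (fun t : ℝ => Real.cos φ • (x + t • (EuclideanSpace.single i (1 : ℝ) : Euc n))
          + Real.sin φ • z) (Real.cos φ • EuclideanSpace.single i 1) 0 := by
        simpa using ((((hasDerivAt_id (0 : ℝ)).smul_const
          (EuclideanSpace.single i (1 : ℝ) : Euc n)).const_add x).const_smul
            (Real.cos φ)).add_const (Real.sin φ • z)
      have h4 := (TG.diff hf _).hasFDerivAt.comp_hasDerivAt 0 h3
      refine h4.congr_deriv ?_
      simp [pd])
  rw [integral_const_mul] at h2
  exact h1.unique h2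

lemma hasDerivAt_mehler (hf : f.HasTemperateGrowth) (φ : ℝ) (x : Euc n) :
    HasDerivAt (fun s => mehler f s x) (∑ i, (-(Real.sin φ * (x i * mehler (pd i f) φ x)) +
      Real.cos φ * (Real.sin φ * mehler (pd i (pd i f)) φ x))) φ := by
  have h1 : Function.HasTemperateGrowth (fun q : ℝ × Euc n => Real.cos q.1) :=
    TG_cos.comp (by fun_prop)
  have h2 : Function.HasTemperateGrowth (fun q : ℝ × Euc n => Real.sin q.1) :=
    TG_sin.comp (by fun_prop)
  have h3 := hasDerivAt_gam (n := n) (r := φ)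
    (G := fun s z => f (Real.cos s • x + Real.sin s • z))
    (G' := fun z => ∑ i, (-(Real.sin φ * x i * pd i f (Real.cos φ • x + Real.sin φ • z)) +
      Real.cos φ * (z i * pd i f (Real.cos φ • x + Real.sin φ • z)))) (by fun_prop)
    (fun z => by
      have h4 : HasDerivAt (fun s : ℝ => Real.cos s • x + Real.sin s • z)
          ((-Real.sin φ) • x + Real.cos φ • z) φ :=
        ((Real.hasDerivAt_cos φ).smul_const x).add ((Real.hasDerivAt_sin φ).smul_const z)
      have h5 := (TG.diff hf _).hasFDerivAt.comp_hasDerivAt φ h4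
      rw [fderiv_eq_sum] at h5
      refine h5.congr_deriv (Finset.sum_congr rfl fun i _ => ?_)
      simp; ring)
  refine h3.congr_deriv ?_
  rw [integral_finsetSum _ (fun i _ => TG.integrable (by fun_prop))]
  refine Finset.sum_congr rfl fun i _ => ?_
  rw [integral_add (TG.integrable (by fun_prop)) (TG.integrable (by fun_prop)), integral_neg,
    integral_const_mul, integral_const_mul,
    ← gam_ibp (f := fun z => pd i f (Real.cos φ • x + Real.sin φ • z)) (by fun_prop) i]
  have : ∀ z, pd i (fun z => pd i f (Real.cos φ • x + Real.sin φ • z)) z =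
      Real.sin φ * pd i (pd i f) (Real.cos φ • x + Real.sin φ • z) := fun z =>
    pd_scale (TG.diff (by fun_prop)) _ _ _
  simp_rw [this]
  rw [integral_const_mul]
  simp only [mehler]
  ring

/-- `‖P_φ f‖²` decreases at rate `2 sin φ cos φ ‖P_φ ∇f‖²`. -/
lemma hasDerivAt_mehler_sq (hf : f.HasTemperateGrowth) (φ : ℝ) :
    HasDerivAt (fun s => ∫ x, mehler f s x ^ 2 ∂(gam n))
      (-(2 * Real.sin φ * Real.cos φ * ∑ i, ∫ x, mehler (pd i f) φ x ^ 2 ∂(gam n))) φ := by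
  have hj := TG_mehler_joint hf
  have h3 := hasDerivAt_gam (n := n) (r := φ) (G := fun s x => mehler f s x ^ 2)
    (G' := fun x => ∑ i, (-(2 * Real.sin φ) * (x i * (mehler f φ x * mehler (pd i f) φ x)) +
      2 * Real.cos φ * Real.sin φ * (mehler f φ x * mehler (pd i (pd i f)) φ x))) (by fun_prop)
    (fun x => by
      refine ((hasDerivAt_mehler hf φ x).fun_pow 2).congr_deriv ?_
      rw [Finset.mul_sum]
      refine Finset.sum_congr rfl fun i _ => ?_
      ring)
  refine h3.congr_deriv ?_
  rw [integral_finsetSum _ (fun i _ => TG.integrable (by fun_prop)), Finset.mul_sum,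
    ← Finset.sum_neg_distrib]
  refine Finset.sum_congr rfl fun i _ => ?_
  rw [integral_add (TG.integrable (by fun_prop)) (TG.integrable (by fun_prop)),
    integral_const_mul, integral_const_mul,
    ← gam_ibp (f := fun x => mehler f φ x * mehler (pd i f) φ x) (by fun_prop) i]
  have : ∀ x, pd i (fun x => mehler f φ x * mehler (pd i f) φ x) x =
      Real.cos φ * (mehler (pd i f) φ x ^ 2 + mehler f φ x * mehler (pd i (pd i f)) φ x) := fun x => by
    rw [pd_mul (TG.diff (by fun_prop) x) (TG.diff (by fun_prop) x), pd_mehler hf,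
      pd_mehler (by fun_prop)]
    ring
  simp_rw [this]
  rw [integral_const_mul, integral_add (TG.integrable (by fun_prop)) (TG.integrable (by fun_prop))]
  ring

lemma quarter_mono {F F' : ℝ → ℝ} (h : ∀ φ, HasDerivAt F (F' φ) φ)
    (h' : ∀ φ, 0 ≤ φ → φ ≤ Real.pi / 2 → 0 ≤ F' φ) {φ : ℝ} (h0 : 0 ≤ φ) (h1 : φ ≤ Real.pi / 2) :
    F 0 ≤ F φ := by
  have := monotoneOn_of_hasDerivWithinAt_nonneg (convex_Icc 0 (Real.pi / 2))
    (f := F) (f' := F') (fun x _ => (h x).continuousAt.continuousWithinAt)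
    (fun x _ => (h x).hasDerivWithinAt)
    (fun x hx => by rw [interior_Icc] at hx; exact h' x hx.1.le hx.2.le)
  exact this ⟨le_rfl, by positivity⟩ ⟨h0, h1⟩ h0

/-- The spectral gap of the Ornstein–Uhlenbeck operator above its second eigenvalue: in terms of
Hermite coefficients, `2‖f‖² ≤ ∑ k‖fₖ‖² + 2‖f₀‖² + ‖f₁‖²`. It is proved by running the semigroup
and using that `‖P_φ ∂ᵅf‖²` is decreasing. -/
lemma gaussian_poincare_two (hf : f.HasTemperateGrowth) :
    2 * ∫ x, f x ^ 2 ∂(gam n) ≤ ∫ x, ∑ i, pd i f x ^ 2 ∂(gam n) + 2 * (∫ x, f x ∂(gam n)) ^ 2 +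
      ∑ i, (∫ x, pd i f x ∂(gam n)) ^ 2 := by
  set q : (Euc n → ℝ) → ℝ → ℝ := fun g s => ∫ x, mehler g s x ^ 2 ∂(gam n) with hq
  set q1 : ℝ → ℝ := fun s => ∑ i, q (pd i f) s with hq1
  set q2 : ℝ → ℝ := fun s => ∑ i, ∑ j, q (pd j (pd i f)) s with hq2
  set q3 : ℝ → ℝ := fun s => ∑ i, ∑ j, ∑ k, q (pd k (pd j (pd i f))) s with hq3
  have hq0 : ∀ g s, 0 ≤ q g s := fun g s => integral_nonneg fun x => sq_nonneg _
  have d0 : ∀ s, HasDerivAt (q f) (-(2 * Real.sin s * Real.cos s * q1 s)) s := fun s =>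
    hasDerivAt_mehler_sq hf s
  have d1 : ∀ s, HasDerivAt q1 (-(2 * Real.sin s * Real.cos s * q2 s)) s := fun s => by
    refine (HasDerivAt.fun_sum fun i _ => hasDerivAt_mehler_sq (f := pd i f) (by fun_prop) s).congr_deriv ?_
    rw [Finset.sum_neg_distrib, ← Finset.mul_sum]
  have d2 : ∀ s, HasDerivAt q2 (-(2 * Real.sin s * Real.cos s * q3 s)) s := fun s => by
    refine (HasDerivAt.fun_sum fun i _ => HasDerivAt.fun_sum fun j _ =>
      hasDerivAt_mehler_sq (f := pd j (pd i f)) (by fun_prop) s).congr_deriv ?_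
    simp_rw [Finset.sum_neg_distrib, ← Finset.mul_sum]
    rfl
  have hsc : ∀ s : ℝ, 0 ≤ s → s ≤ Real.pi / 2 → 0 ≤ Real.sin s * Real.cos s := fun s h1 h2 =>
    mul_nonneg (Real.sin_nonneg_of_nonneg_of_le_pi h1 (by linarith [Real.pi_pos]))
      (Real.cos_nonneg_of_neg_pi_div_two_le_of_le (by linarith [Real.pi_pos]) h2)
  have hs : ∀ s, HasDerivAt (fun s => Real.sin s ^ 2) (2 * Real.sin s * Real.cos s) s := fun s =>
    ((Real.hasDerivAt_sin s).fun_pow 2).congr_deriv (by ring)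
  have K : ∀ s, 0 ≤ s → s ≤ Real.pi / 2 → Real.sin s ^ 2 * q2 s ≤ q1 0 - q1 s := by
    intro s h1 h2
    have := quarter_mono (F := fun s => q1 0 - q1 s - Real.sin s ^ 2 * q2 s)
      (F' := fun s => Real.sin s ^ 2 * (2 * (Real.sin s * Real.cos s) * q3 s))
      (fun s => (((d1 s).const_sub (q1 0)).sub ((hs s).mul (d2 s))).congr_deriv (by ring))
      (fun s h1 h2 => by
        have := hsc s h1 h2
        have : 0 ≤ q3 s := Finset.sum_nonneg fun i _ => Finset.sum_nonneg fun j _ =>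
          Finset.sum_nonneg fun k _ => hq0 _ _
        positivity) h1 h2
    simp at this
    linarith
  have G := quarter_mono (F := fun s => Real.sin s ^ 2 * (q1 0 + q1 s) - 2 * (q f 0 - q f s))
      (F' := fun s => 2 * (Real.sin s * Real.cos s) * ((q1 0 - q1 s) - Real.sin s ^ 2 * q2 s))
      (fun s => (((hs s).mul ((d1 s).const_add (q1 0))).sub
        (((d0 s).const_sub (q f 0)).const_mul 2)).congr_deriv (by ring))
      (fun s h1 h2 => by
        have := hsc s h1 h2
        have := K s h1 h2
        have h3 : 0 ≤ (q1 0 - q1 s) - Real.sin s ^ 2 * q2 s := by linarith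
        positivity) (φ := Real.pi / 2) (by positivity) le_rfl
  have e0 : ∀ g, q g 0 = ∫ x, g x ^ 2 ∂(gam n) := fun g => by simp [hq, mehler]
  have e1 : ∀ g, q g (Real.pi / 2) = (∫ x, g x ∂(gam n)) ^ 2 := fun g => by simp [hq, mehler]
  simp only [hq1, e0, e1, Real.sin_zero, Real.sin_pi_div_two] at G
  rw [integral_finsetSum _ (fun i _ => TG.integrable (by fun_prop))]
  simp only [sub_self, mul_zero, ne_eq, OfNat.ofNat_ne_zero, not_false_eq_true, zero_pow, zero_mul,
    one_pow, one_mul] at G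
  linarith

end Mehler

/-! ### Log-concavity of the second tail moment of the Gaussian -/

section Tail
open Filter Topology

/-- The unnormalised Gaussian density on the line. -/
noncomputable def tp (c : ℝ) : ℝ := Real.exp (-(1 / 2) * c ^ 2)

/-- The Gaussian tail `∫_c^∞ e^{-t²/2} dt`. -/
noncomputable def tk0 (c : ℝ) : ℝ := ∫ t in Ioi c, tp t

/-- The first tail moment `∫_c^∞ (t - c) e^{-t²/2} dt`, in closed form. -/
noncomputable def tk1 (c : ℝ) : ℝ := tp c - c * tk0 c

/-- The second tail moment `∫_c^∞ (t - c)² e^{-t²/2} dt`, in closed form. -/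
noncomputable def tk2 (c : ℝ) : ℝ := tk0 c - c * tk1 c

lemma tp_pos (c : ℝ) : 0 < tp c := Real.exp_pos _

lemma continuous_tp : Continuous tp := by unfold tp; fun_prop

lemma integrable_tp : Integrable tp := integrable_exp_neg_mul_sq (by norm_num)

lemma integrable_mul_tp : Integrable (fun t => t * tp t) :=
  integrable_mul_exp_neg_mul_sq (by norm_num)

lemma integrable_sq_mul_tp : Integrable (fun t => t ^ 2 * tp t) := by
  have := integrable_rpow_mul_exp_neg_mul_sq (b := 1 / 2) (by norm_num) (s := 2) (by norm_num)
  simpa [tp] using this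

lemma hasDerivAt_tp (c : ℝ) : HasDerivAt tp (-(c * tp c)) c := by
  have h : HasDerivAt (fun c : ℝ => -(1 / 2) * c ^ 2) (-c) c :=
    (((hasDerivAt_id c).fun_pow 2).const_mul (-(1 / 2) : ℝ)).congr_deriv (by simp)
  exact h.exp.congr_deriv (by unfold tp; ring)

lemma hasDerivAt_tk0 (c : ℝ) : HasDerivAt tk0 (-tp c) c := by
  have h : tk0 = fun c => tk0 0 - ∫ t in (0 : ℝ)..c, tp t := by
    funext c
    rw [← intervalIntegral.integral_Ioi_sub_Ioi' integrable_tp.integrableOn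
      integrable_tp.integrableOn]
    simp [tk0]
  rw [h]
  exact (intervalIntegral.integral_hasDerivAt_right (continuous_tp.intervalIntegrable _ _)
    continuous_tp.aestronglyMeasurable.stronglyMeasurableAtFilter
    continuous_tp.continuousAt).const_sub _

lemma hasDerivAt_tk1 (c : ℝ) : HasDerivAt tk1 (-tk0 c) c :=
  ((hasDerivAt_tp c).sub ((hasDerivAt_id c).mul (hasDerivAt_tk0 c))).congr_deriv (by simp)

lemma hasDerivAt_tk2 (c : ℝ) : HasDerivAt tk2 (-(2 * tk1 c)) c :=
  ((hasDerivAt_tk0 c).sub ((hasDerivAt_id c).mul (hasDerivAt_tk1 c))).congr_deriv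
    (by simp [tk1]; ring)

lemma tendsto_tp : Tendsto tp atTop (𝓝 0) := by
  have := tendsto_rpow_abs_mul_exp_neg_mul_sq_cocompact (a := 1 / 2) (by norm_num) 0
  have := this.mono_left atTop_le_cocompact
  refine this.congr fun t => ?_
  simp [tp]

lemma tendsto_mul_tp : Tendsto (fun t => t * tp t) atTop (𝓝 0) := by
  have := tendsto_rpow_abs_mul_exp_neg_mul_sq_cocompact (a := 1 / 2) (by norm_num) 1
  have := this.mono_left atTop_le_cocompact
  refine this.congr' ?_
  filter_upwards [eventually_ge_atTop 0] with t ht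
  simp [tp, abs_of_nonneg ht]

lemma tk1_eq (c : ℝ) : ∫ t in Ioi c, (t - c) * tp t = tk1 c := by
  have h1 : ∫ t in Ioi c, t * tp t = tp c := by
    have := integral_Ioi_of_hasDerivAt_of_tendsto' (a := c) (f := fun t => -tp t)
      (f' := fun t => t * tp t) (m := -0) (fun t _ => (hasDerivAt_tp t).fun_neg.congr_deriv (by simp))
      integrable_mul_tp.integrableOn tendsto_tp.neg
    simpa using this
  simp_rw [sub_mul]
  rw [integral_sub integrable_mul_tp.integrableOn (integrable_tp.integrableOn.const_mul _),
    integral_const_mul, h1]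
  rfl

lemma tk2_eq (c : ℝ) : ∫ t in Ioi c, (t - c) ^ 2 * tp t = tk2 c := by
  have h2 : ∫ t in Ioi c, ((t - c) ^ 2 * tp t - (1 + c ^ 2) * tp t) = -(c * tp c) := by
    have := integral_Ioi_of_hasDerivAt_of_tendsto' (a := c) (f := fun t => 2 * c * tp t - t * tp t)
      (f' := fun t => (t - c) ^ 2 * tp t - (1 + c ^ 2) * tp t) (m := 2 * c * 0 - 0)
      (fun t _ => (((hasDerivAt_tp t).const_mul (2 * c)).sub
        ((hasDerivAt_id t).mul (hasDerivAt_tp t))).congr_deriv (by simp; ring))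
      (by
        have : Integrable (fun t => t ^ 2 * tp t - 2 * c * (t * tp t) - tp t) :=
          (integrable_sq_mul_tp.sub (integrable_mul_tp.const_mul _)).sub integrable_tp
        exact (this.congr (Eventually.of_forall fun t => by simp; ring)).integrableOn)
      ((tendsto_tp.const_mul _).sub tendsto_mul_tp)
    rw [this]; ring
  have h3 : Integrable (fun t => (t - c) ^ 2 * tp t) := by
    have : Integrable (fun t => t ^ 2 * tp t - 2 * c * (t * tp t) + c ^ 2 * tp t) :=
      (integrable_sq_mul_tp.sub (integrable_mul_tp.const_mul _)).add (integrable_tp.const_mul _)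
    exact this.congr (Eventually.of_forall fun t => by simp; ring)
  rw [integral_sub h3.integrableOn (integrable_tp.integrableOn.const_mul _),
    integral_const_mul] at h2
  unfold tk2 tk1
  have : ∫ t in Ioi c, tp t = tk0 c := rfl
  rw [this] at h2
  linarith

lemma pos_of_deriv_neg {F F' : ℝ → ℝ} (h : ∀ c, HasDerivAt F (F' c) c) (h' : ∀ c, F' c < 0)
    (h0 : ∀ c, 0 ≤ F c) (c : ℝ) : 0 < F c := by
  have : StrictAnti F := strictAnti_of_deriv_neg fun c => by rw [(h c).deriv]; exact h' c
  exact (h0 (c + 1)).trans_lt (this (by linarith))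

lemma nonneg_of_deriv_nonpos {F F' h : ℝ → ℝ} (hF : ∀ c, HasDerivAt F (F' c) c)
    (hF' : ∀ c, F' c ≤ 0) (hh : Tendsto h atTop (𝓝 0)) (hb : ∀ c, 0 ≤ c → h c ≤ F c) (c : ℝ) :
    0 ≤ F c := by
  have : Antitone F := antitone_of_deriv_nonpos (fun c => (hF c).differentiableAt)
    fun c => by rw [(hF c).deriv]; exact hF' c
  refine le_of_tendsto hh ?_
  filter_upwards [eventually_ge_atTop 0, eventually_ge_atTop c] with d h1 h2
  exact (hb d h1).trans (this h2)

lemma tk0_pos (c : ℝ) : 0 < tk0 c :=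
  pos_of_deriv_neg hasDerivAt_tk0 (fun c => by simpa using tp_pos c)
    (fun c => setIntegral_nonneg measurableSet_Ioi fun t _ => (tp_pos t).le) c

lemma tk1_pos (c : ℝ) : 0 < tk1 c :=
  pos_of_deriv_neg hasDerivAt_tk1 (fun c => by simpa using tk0_pos c)
    (fun c => by
      rw [← tk1_eq]
      exact setIntegral_nonneg measurableSet_Ioi fun t ht =>
        mul_nonneg (sub_nonneg.2 (le_of_lt ht)) (tp_pos t).le) c

lemma tk2_pos (c : ℝ) : 0 < tk2 c :=
  pos_of_deriv_neg hasDerivAt_tk2 (fun c => by simpa using tk1_pos c)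
    (fun c => by
      rw [← tk2_eq]
      exact setIntegral_nonneg measurableSet_Ioi fun t ht =>
        mul_nonneg (sq_nonneg _) (tp_pos t).le) c

lemma tk2_le_tk0 {c : ℝ} (hc : 0 ≤ c) : tk2 c ≤ tk0 c := by
  have := mul_nonneg hc (tk1_pos c).le
  unfold tk2; linarith

lemma tendsto_tk0 : Tendsto tk0 atTop (𝓝 0) := by
  refine tendsto_of_tendsto_of_tendsto_of_le_of_le' tendsto_const_nhds tendsto_tp
    (Eventually.of_forall fun c => (tk0_pos c).le) ?_
  filter_upwards [eventually_ge_atTop 1] with c hc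
  have h1 := tk1_pos c
  have h2 := tk0_pos c
  unfold tk1 at h1
  nlinarith

lemma tk_first (c : ℝ) : tk2 c * tp c ≤ 2 * tk1 c * tk0 c := by
  have := nonneg_of_deriv_nonpos (F := fun c => 2 * tk1 c * tk0 c * (tp c)⁻¹ - tk2 c)
    (F' := fun c => -(2 * tk0 c * tk2 c * (tp c)⁻¹)) (h := fun c => -tk0 c)
    (fun c => ((((((hasDerivAt_tk1 c).const_mul 2).mul (hasDerivAt_tk0 c)).mul
      ((hasDerivAt_tp c).inv (tp_pos c).ne')).sub (hasDerivAt_tk2 c)).congr_deriv (by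
        have := (tp_pos c).ne'
        simp [tk2]; field_simp; ring)))
    (fun c => by
      have := tk0_pos c; have := tk2_pos c; have := tp_pos c
      simp only [Left.neg_nonpos_iff]; positivity)
    (by simpa using tendsto_tk0.neg)
    (fun c hc => by
      have := tk0_pos c; have := tk1_pos c; have := tp_pos c
      have h1 := tk2_le_tk0 hc
      have : 0 ≤ 2 * tk1 c * tk0 c * (tp c)⁻¹ := by positivity
      linarith) c
  have hp := tp_pos c
  rw [sub_nonneg, ← div_eq_mul_inv, le_div_iff₀ hp] at this
  exact this

/-- This says that `log tk2` is concave, as `tk2` has derivative `-2 tk1` and `tk1` has derivative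
`-tk0`. -/
lemma tk_second (c : ℝ) : tk2 c * tk0 c ≤ 2 * tk1 c ^ 2 := by
  have := nonneg_of_deriv_nonpos (F := fun c => 2 * tk1 c ^ 2 - tk2 c * tk0 c)
    (F' := fun c => tk2 c * tp c - 2 * tk1 c * tk0 c) (h := fun c => -(tk0 c * tk0 c))
    (fun c => ((((hasDerivAt_tk1 c).fun_pow 2).const_mul 2).sub
      ((hasDerivAt_tk2 c).mul (hasDerivAt_tk0 c))).congr_deriv (by simp; ring))
    (fun c => by linarith [tk_first c])
    (by simpa using (tendsto_tk0.mul tendsto_tk0).neg)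
    (fun c hc => by
      have := tk0_pos c
      have h1 := mul_le_mul_of_nonneg_right (tk2_le_tk0 hc) this.le
      have := sq_nonneg (tk1 c)
      linarith) c
  linarith

lemma tk_ratio_mono : Monotone (fun c => tk1 c / tk2 c) := by
  refine monotone_of_hasDerivAt_nonneg (f' := fun c => (-tk0 c * tk2 c + 2 * tk1 c ^ 2) / tk2 c ^ 2)
    (fun c => ((hasDerivAt_tk1 c).div (hasDerivAt_tk2 c) (tk2_pos c).ne').congr_deriv (by ring_nf)) ?_
  intro c
  have := tk_second c
  exact div_nonneg (by linarith) (sq_nonneg _)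

/-- Log-concavity of `tk2` at symmetric points. -/
lemma tk2_mul_le (c : ℝ) : tk2 c * tk2 (-c) ≤ tk2 0 ^ 2 := by
  wlog hc : 0 ≤ c generalizing c
  · have := this (-c) (by linarith)
    rw [neg_neg] at this; linarith
  have hneg : ∀ s, HasDerivAt (fun s => tk2 (-s)) (2 * tk1 (-s)) s := fun s =>
    ((hasDerivAt_tk2 (-s)).scomp s (hasDerivAt_neg s)).congr_deriv (by simp)
  have hanti : AntitoneOn (fun s => tk2 s * tk2 (-s)) (Ici 0) := by
    refine antitoneOn_of_hasDerivWithinAt_nonpos (convex_Ici 0)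
      (f' := fun s => -(2 * tk1 s) * tk2 (-s) + tk2 s * (2 * tk1 (-s)))
      (fun s _ => ((hasDerivAt_tk2 s).mul (hneg s)).continuousAt.continuousWithinAt)
      (fun s _ => ((hasDerivAt_tk2 s).mul (hneg s)).hasDerivWithinAt) ?_
    intro s hs
    rw [interior_Ici] at hs
    have hs' : (0 : ℝ) < s := hs
    have h1 := tk_ratio_mono (show -s ≤ s by linarith)
    simp only at h1
    rw [div_le_div_iff₀ (tk2_pos _) (tk2_pos _)] at h1
    linarith
  have := hanti (self_mem_Ici) hc hc
  simp at this
  linarith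

lemma tk2_zero : tk2 0 = √(2 * Real.pi) / 2 := by
  have : tk2 0 = tk0 0 := by simp [tk2]
  rw [this]
  unfold tk0 tp
  rw [integral_gaussian_Ioi]
  congr 2; ring

end Tail

/-! ### The two-phase Gaussian eigenvalue inequality -/

section FH
open ProbabilityTheory
variable {n : ℕ}

lemma integral_cauchy_schwarz {α : Type*} [MeasurableSpace α] {μ : Measure α} {f g : α → ℝ}
    (hf : Integrable (fun x => f x ^ 2) μ) (hg : Integrable (fun x => g x ^ 2) μ)
    (hfg : Integrable (fun x => f x * g x) μ) :
    (∫ x, f x * g x ∂μ) ^ 2 ≤ (∫ x, f x ^ 2 ∂μ) * ∫ x, g x ^ 2 ∂μ := by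
  have h : ∀ t : ℝ, 0 ≤ (∫ x, g x ^ 2 ∂μ) * (t * t) + (2 * ∫ x, f x * g x ∂μ) * t +
      ∫ x, f x ^ 2 ∂μ := fun t => by
    have h1 : 0 ≤ ∫ x, (f x + t * g x) ^ 2 ∂μ := integral_nonneg fun x => sq_nonneg _
    have h2 : ∀ x, (f x + t * g x) ^ 2 = f x ^ 2 + 2 * t * (f x * g x) + t ^ 2 * g x ^ 2 :=
      fun x => by ring
    simp_rw [h2] at h1
    have h3 : Integrable (fun x => f x ^ 2 + 2 * t * (f x * g x)) μ := hf.add (hfg.const_mul _)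
    rw [integral_add h3 (hg.const_mul _),
      integral_add hf (hfg.const_mul _), integral_const_mul, integral_const_mul] at h1
    linarith
  have := discrim_le_zero h
  unfold discrim at this
  nlinarith

/-- The one-dimensional marginals of `gam` are standard normal. -/
lemma gam_map_inner {e : Euc n} (he : ‖e‖ = 1) :
    (gam n).map (fun y => ⟪e, y⟫) = gaussianReal 0 1 := by
  have hm : Measurable fun y : Euc n => ⟪e, y⟫ := (by fun_prop : Continuous _).measurable
  have : IsProbabilityMeasure ((gam n).map (fun y => ⟪e, y⟫)) :=
    Measure.isProbabilityMeasure_map hm.aemeasurable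
  refine Measure.ext_of_charFun ?_
  ext t
  rw [charFun_gaussianReal, charFun_apply_real, integral_map hm.aemeasurable
    (by fun_prop : Continuous _).aestronglyMeasurable, integral_gam]
  have h1 := GaussianFourier.integral_cexp_neg_mul_sq_norm_add (V := Euc n) (b := 1 / 2)
    (by norm_num) (t * Complex.I) e
  have h0 := GaussianFourier.integral_cexp_neg_mul_sq_norm_add (V := Euc n) (b := 1 / 2)
    (by norm_num) 0 e
  simp only [zero_mul, add_zero, ne_eq, OfNat.ofNat_ne_zero, not_false_eq_true, zero_pow,
    zero_div, Complex.exp_zero, mul_one] at h0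
  have hZ : (gaussZ n : ℂ) = (Real.pi / (1 / 2 : ℂ)) ^ (Module.finrank ℝ (Euc n) / 2 : ℂ) := by
    rw [← h0]
    unfold gaussZ
    rw [← integral_complex_ofReal]
    congr 1; ext y
    simp only [gauss, Complex.ofReal_exp]
    congr 1; push_cast; ring
  have hZ0 : (gaussZ n : ℂ) ≠ 0 := by exact_mod_cast (gaussZ_pos n).ne'
  rw [← hZ] at h1
  have h2 : ∀ y : Euc n, ((gaussZ n)⁻¹ * gauss y) • Complex.exp (t * (⟪e, y⟫ : ℝ) * Complex.I) =
      (gaussZ n : ℂ)⁻¹ * Complex.exp (-(1 / 2) * (‖y‖ : ℂ) ^ 2 + t * Complex.I * (⟪e, y⟫ : ℝ)) := by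
    intro y
    rw [Complex.exp_add, Complex.real_smul]
    simp only [gauss]
    push_cast
    rw [mul_assoc]
    congr 2
    · congr 1; ring
    · congr 1; ring
  simp_rw [h2]
  rw [integral_const_mul, h1, ← mul_assoc, inv_mul_cancel₀ hZ0, one_mul, he]
  congr 1
  rw [mul_pow, Complex.I_sq]
  push_cast; ring

lemma integral_tail {e : Euc n} (he : ‖e‖ = 1) (c : ℝ) :
    ∫ y, max (⟪e, y⟫ + c) 0 ^ 2 ∂(gam n) = tk2 (-c) / √(2 * Real.pi) := by
  have hm : Measurable fun y : Euc n => ⟪e, y⟫ := (by fun_prop : Continuous _).measurable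
  have h1 : ∫ y, max (⟪e, y⟫ + c) 0 ^ 2 ∂(gam n) =
      ∫ t, max (t + c) 0 ^ 2 ∂((gam n).map (fun y => ⟪e, y⟫)) := by
    rw [integral_map hm.aemeasurable (by fun_prop : Continuous _).aestronglyMeasurable]
  rw [h1, gam_map_inner he, integral_gaussianReal_eq_integral_smul (by simp), ← tk2_eq,
    ← integral_indicator measurableSet_Ioi, ← integral_div]
  congr 1; ext t
  simp only [gaussianPDFReal, indicator, mem_Ioi, smul_eq_mul, tp]
  have e1 : -(t - 0) ^ 2 / (2 * ((1 : NNReal) : ℝ)) = -(1 / 2) * t ^ 2 := by simp; ring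
  have e2 : 2 * Real.pi * ((1 : NNReal) : ℝ) = 2 * Real.pi := by simp
  rw [e1, e2]
  split_ifs with h
  · rw [max_eq_left (by linarith)]; field_simp; ring
  · rw [max_eq_right (by linarith)]; simp

lemma tail_product {e : Euc n} (he : ‖e‖ = 1) (c : ℝ) :
    (∫ y, max (⟪e, y⟫ + c) 0 ^ 2 ∂(gam n)) * ∫ y, max (-(⟪e, y⟫ + c)) 0 ^ 2 ∂(gam n) ≤ 1 / 4 := by
  have h2 : ∫ y, max (-(⟪e, y⟫ + c)) 0 ^ 2 ∂(gam n) = tk2 c / √(2 * Real.pi) := by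
    have := integral_tail (e := -e) (by rwa [norm_neg]) (-c)
    rw [neg_neg] at this
    rw [← this]
    congr 1; ext y
    rw [inner_neg_left]; congr 2; ring
  rw [integral_tail he, h2]
  have h3 := tk2_mul_le c
  rw [tk2_zero] at h3
  have hpi : 0 < √(2 * Real.pi) := by positivity
  have : tk2 (-c) / √(2 * Real.pi) * (tk2 c / √(2 * Real.pi)) =
    (tk2 c * tk2 (-c)) / √(2 * Real.pi) ^ 2 := by field_simp
  rw [this, div_le_iff₀ (by positivity)]
  linarith

/-- Affine functions: `‖φ⁺‖² ‖φ⁻‖² ≤ (|b|²/8)²` for `φ = a + ⟨b, y⟩ / 2`. -/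
lemma affine_parts (a : ℝ) (b : Euc n) :
    (∫ y, max (a + ⟪b, y⟫ / 2) 0 ^ 2 ∂(gam n)) * ∫ y, max (-(a + ⟪b, y⟫ / 2)) 0 ^ 2 ∂(gam n) ≤
      (‖b‖ ^ 2 / 8) ^ 2 := by
  by_cases hb : b = 0
  · subst hb
    rcases le_total 0 a with h | h
    · simp [h]
    · simp [h]
  have hb0 : 0 < ‖b‖ := norm_pos_iff.2 hb
  set e : Euc n := ‖b‖⁻¹ • b with he
  have hen : ‖e‖ = 1 := by rw [he, norm_smul, norm_inv, norm_norm, inv_mul_cancel₀ hb0.ne']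
  have hbe : ∀ y : Euc n, a + ⟪b, y⟫ / 2 = ‖b‖ / 2 * (⟪e, y⟫ + 2 * a / ‖b‖) := fun y => by
    rw [he, real_inner_smul_left]; field_simp; ring
  have hmax : ∀ s : ℝ, max (‖b‖ / 2 * s) 0 ^ 2 = ‖b‖ ^ 2 / 4 * max s 0 ^ 2 := fun s => by
    have : max (‖b‖ / 2 * s) 0 = ‖b‖ / 2 * max s 0 := by
      rw [mul_max_of_nonneg _ _ (by positivity), mul_zero]
    rw [this]; ring
  have hmax' : ∀ s : ℝ, max (-(‖b‖ / 2 * s)) 0 ^ 2 = ‖b‖ ^ 2 / 4 * max (-s) 0 ^ 2 := fun s => by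
    rw [← hmax]; congr 2; ring
  simp_rw [hbe, hmax, hmax']
  rw [integral_const_mul, integral_const_mul]
  have := tail_product hen (2 * a / ‖b‖)
  have h4 : 0 ≤ (‖b‖ ^ 2 / 4) ^ 2 := by positivity
  calc _ = (‖b‖ ^ 2 / 4) ^ 2 * ((∫ y, max (⟪e, y⟫ + 2 * a / ‖b‖) 0 ^ 2 ∂(gam n)) *
        ∫ y, max (-(⟪e, y⟫ + 2 * a / ‖b‖)) 0 ^ 2 ∂(gam n)) := by ring
    _ ≤ (‖b‖ ^ 2 / 4) ^ 2 * (1 / 4) := by gcongr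
    _ = _ := by ring

lemma integral_inner_sq (b : Euc n) : ∫ y, ⟪b, y⟫ ^ 2 ∂(gam n) = ‖b‖ ^ 2 := by
  have hd : Differentiable ℝ (fun y : Euc n => ⟪b, y⟫) := TG.diff (by fun_prop)
  have hi : ∀ y : Euc n, ⟪b, y⟫ = ∑ i, y i * b i := fun y => by
    simp [PiLp.inner_apply, mul_comm]
  have hp : ∀ i y, pd i (fun y : Euc n => ⟪b, y⟫) y = b i := fun i y => by
    have : (fun y : Euc n => ⟪b, y⟫) = (innerSL ℝ b : Euc n → ℝ) := rfl
    rw [pd, this, ContinuousLinearMap.fderiv]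
    simp [EuclideanSpace.inner_single_right]
  have h1 : ∀ y : Euc n, ⟪b, y⟫ ^ 2 = ∑ i, b i * (y i * ⟪b, y⟫) := fun y => by
    rw [sq]; nth_rewrite 1 [hi]; rw [Finset.sum_mul]
    exact Finset.sum_congr rfl fun i _ => by ring
  simp_rw [h1]
  rw [integral_finsetSum _ (fun i _ => TG.integrable (by fun_prop)), EuclideanSpace.norm_sq_eq]
  refine Finset.sum_congr rfl fun i _ => ?_
  rw [integral_const_mul, ← gam_ibp (f := fun y => ⟪b, y⟫) (by fun_prop) i]
  simp_rw [hp]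
  simp [sq]

lemma integral_inner_eq (b : Euc n) : ∫ y, ⟪b, y⟫ ∂(gam n) = 0 := by
  have hi : ∀ y : Euc n, ⟪b, y⟫ = ∑ i, b i * (y i * 1) := fun y => by
    simp [PiLp.inner_apply, mul_comm]
  simp_rw [hi]
  rw [integral_finsetSum _ (fun i _ => TG.integrable (by fun_prop))]
  refine Finset.sum_eq_zero fun i _ => ?_
  rw [integral_const_mul, ← gam_ibp (f := fun _ => (1 : ℝ)) (by fun_prop) i]
  simp [pd_const]

/-- The constant and linear Hermite coefficients `a`, `b` of `U - V` satisfy `2a² + |b|² ≤ 2`: test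
with the affine function `φ = a + ⟨b, y⟩ / 2`, bound `∫ φ (U - V)` by `‖φ⁺‖ + ‖φ⁻‖`, and use the
sharp bound for `‖φ⁺‖ ‖φ⁻‖`. -/
lemma fh_moment {U V : Euc n → ℝ} (hU : U.HasTemperateGrowth) (hV : V.HasTemperateGrowth)
    (hU0 : ∀ y, 0 ≤ U y) (hV0 : ∀ y, 0 ≤ V y)
    (hU1 : ∫ y, U y ^ 2 ∂(gam n) = 1) (hV1 : ∫ y, V y ^ 2 ∂(gam n) = 1) :
    2 * (∫ y, (U y - V y) ∂(gam n)) ^ 2 + ∑ i, (∫ y, y i * (U y - V y) ∂(gam n)) ^ 2 ≤ 2 := by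
  set a := ∫ y, (U y - V y) ∂(gam n) with ha
  set b : Euc n := WithLp.toLp 2 fun i => ∫ y, y i * (U y - V y) ∂(gam n) with hb
  have hbn : ∑ i, (∫ y, y i * (U y - V y) ∂(gam n)) ^ 2 = ‖b‖ ^ 2 := by
    rw [EuclideanSpace.norm_sq_eq]; simp [hb]
  rw [hbn]
  set φ : Euc n → ℝ := fun y => a + ⟪b, y⟫ / 2 with hφ
  have hφT : φ.HasTemperateGrowth := by rw [hφ]; simp_rw [div_eq_mul_inv]; fun_prop
  have hφw : ∫ y, φ y * (U y - V y) ∂(gam n) = a ^ 2 + ‖b‖ ^ 2 / 2 := by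
    have hi : ∀ y : Euc n, φ y * (U y - V y) =
        a * (U y - V y) + ∑ i, b i / 2 * (y i * (U y - V y)) := fun y => by
      have : ⟪b, y⟫ = ∑ i, b i * y i := by simp [PiLp.inner_apply, mul_comm]
      simp only [hφ, this, add_mul, Finset.sum_div, Finset.sum_mul]
      congr 1
      exact Finset.sum_congr rfl fun i _ => by ring
    simp_rw [hi]
    rw [integral_add (TG.integrable (by fun_prop)) (TG.integrable (by fun_prop)),
      integral_finsetSum _ (fun i _ => TG.integrable (by fun_prop)), integral_const_mul,
      EuclideanSpace.norm_sq_eq, Finset.sum_div, ← ha, sq]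
    congr 1
    refine Finset.sum_congr rfl fun i _ => ?_
    rw [integral_const_mul]
    simp [hb]; ring
  have hφ2 : ∫ y, φ y ^ 2 ∂(gam n) = a ^ 2 + ‖b‖ ^ 2 / 4 := by
    have : ∀ y, φ y ^ 2 = a ^ 2 + a * ⟪b, y⟫ + 1 / 4 * ⟪b, y⟫ ^ 2 := fun y => by
      simp only [hφ]; ring
    simp_rw [this]
    rw [integral_add (TG.integrable (by fun_prop)) (TG.integrable (by fun_prop)),
      integral_add (TG.integrable (by fun_prop)) (TG.integrable (by fun_prop)),
      integral_const_mul, integral_const_mul, integral_inner_sq, integral_inner_eq]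
    simp; ring
  -- positive and negative parts
  have hφc : Continuous φ := TG.cont hφT
  have hφi : Integrable (fun y => φ y ^ 2) (gam n) := TG.integrable (by fun_prop)
  have ip : Integrable (fun y => max (φ y) 0 ^ 2) (gam n) :=
    hφi.mono' (by fun_prop : Continuous _).aestronglyMeasurable (Filter.Eventually.of_forall fun y => by
      rw [Real.norm_of_nonneg (by positivity)]
      rcases le_total 0 (φ y) with h | h
      · rw [max_eq_left h]
      · rw [max_eq_right h, zero_pow two_ne_zero]; positivity)
  have im : Integrable (fun y => max (-φ y) 0 ^ 2) (gam n) :=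
    hφi.mono' (by fun_prop : Continuous _).aestronglyMeasurable (Filter.Eventually.of_forall fun y => by
      rw [Real.norm_of_nonneg (by positivity)]
      rcases le_total 0 (φ y) with h | h
      · rw [max_eq_right (by linarith), zero_pow two_ne_zero]; positivity
      · rw [max_eq_left (by linarith)]; simp)
  have hUc := TG.cont hU
  have hVc := TG.cont hV
  have iU : Integrable (fun y => U y ^ 2) (gam n) := TG.integrable (by fun_prop)
  have iV : Integrable (fun y => V y ^ 2) (gam n) := TG.integrable (by fun_prop)
  have ipU : Integrable (fun y => max (φ y) 0 * U y) (gam n) :=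
    (ip.add iU).mono' (by fun_prop : Continuous _).aestronglyMeasurable
      (Filter.Eventually.of_forall fun y => by
        rw [Real.norm_of_nonneg (mul_nonneg (le_max_right _ _) (hU0 y))]
        have := sq_nonneg (max (φ y) 0 - U y)
        simp only [Pi.add_apply]
        nlinarith [mul_nonneg (le_max_right (φ y) 0) (hU0 y)])
  have imV : Integrable (fun y => max (-φ y) 0 * V y) (gam n) :=
    (im.add iV).mono' (by fun_prop : Continuous _).aestronglyMeasurable
      (Filter.Eventually.of_forall fun y => by
        rw [Real.norm_of_nonneg (mul_nonneg (le_max_right _ _) (hV0 y))]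
        have := sq_nonneg (max (-φ y) 0 - V y)
        simp only [Pi.add_apply]
        nlinarith [mul_nonneg (le_max_right (-φ y) 0) (hV0 y)])
  have csU := integral_cauchy_schwarz ip iU ipU
  have csV := integral_cauchy_schwarz im iV imV
  rw [hU1, mul_one] at csU
  rw [hV1, mul_one] at csV
  have hprod := affine_parts a b
  have hsplit : (∫ y, max (φ y) 0 ^ 2 ∂(gam n)) + ∫ y, max (-φ y) 0 ^ 2 ∂(gam n) =
      a ^ 2 + ‖b‖ ^ 2 / 4 := by
    rw [← hφ2, ← integral_add ip im]
    congr 1; ext y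
    rcases le_total 0 (φ y) with h | h
    · rw [max_eq_left h, max_eq_right (by linarith)]; ring
    · rw [max_eq_right h, max_eq_left (by linarith)]; ring
  have hle : a ^ 2 + ‖b‖ ^ 2 / 2 ≤ (∫ y, max (φ y) 0 * U y ∂(gam n)) +
      ∫ y, max (-φ y) 0 * V y ∂(gam n) := by
    rw [← hφw, ← integral_add ipU imV]
    refine integral_mono (TG.integrable (by fun_prop)) (ipU.add imV) fun y => ?_
    have h1 := mul_le_mul_of_nonneg_right (le_max_left (φ y) 0) (hU0 y)
    have h2 := mul_le_mul_of_nonneg_right (le_max_left (-φ y) 0) (hV0 y)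
    simp only
    linarith
  set P := ∫ y, max (φ y) 0 ^ 2 ∂(gam n) with hP
  set Q := ∫ y, max (-φ y) 0 ^ 2 ∂(gam n) with hQ
  have hP0 : 0 ≤ P := integral_nonneg fun y => sq_nonneg _
  have hQ0 : 0 ≤ Q := integral_nonneg fun y => sq_nonneg _
  have hPQ : P * Q ≤ (‖b‖ ^ 2 / 8) ^ 2 := hprod
  set p := ∫ y, max (φ y) 0 * U y ∂(gam n)
  set q := ∫ y, max (-φ y) 0 * V y ∂(gam n)
  set L := a ^ 2 + ‖b‖ ^ 2 / 2 with hL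
  have hL0 : 0 ≤ L := by positivity
  have h2 : 2 * (p * q) ≤ ‖b‖ ^ 2 / 4 := by
    have h3 : (p * q) ^ 2 ≤ (‖b‖ ^ 2 / 8) ^ 2 := by
      rw [mul_pow]
      exact (mul_le_mul csU csV (sq_nonneg _) hP0).trans hPQ
    have := abs_le_of_sq_le_sq' h3 (by positivity)
    linarith [this.2]
  have h4 : L ^ 2 ≤ (p + q) ^ 2 := by gcongr
  have h5 : L ^ 2 ≤ L := by nlinarith
  have h6 : L ≤ 1 := by nlinarith
  linarith

end FH

/-! ### Rayleigh quotients of two disjoint phases, and a smooth positive part -/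

section FHgrad
variable {n : ℕ}

/-- The two-phase inequality for normalised functions: the second order Poincaré inequality for
`U - V` together with `fh_moment`. -/
lemma fh_norm {U V : Euc n → ℝ} (hU : U.HasTemperateGrowth) (hV : V.HasTemperateGrowth)
    (hU0 : ∀ y, 0 ≤ U y) (hV0 : ∀ y, 0 ≤ V y) (hUV : ∀ y, U y * V y = 0)
    (hU1 : ∫ y, U y ^ 2 ∂(gam n) = 1) (hV1 : ∫ y, V y ^ 2 ∂(gam n) = 1) :
    2 ≤ ∫ y, ∑ i, pd i U y ^ 2 ∂(gam n) + ∫ y, ∑ i, pd i V y ^ 2 ∂(gam n) := by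
  have h1 := fh_moment hU hV hU0 hV0 hU1 hV1
  have h2 := gaussian_poincare_two (f := fun y => U y - V y) (by fun_prop)
  have h3 : ∀ i, ∫ y, pd i (fun y => U y - V y) y ∂(gam n) = ∫ y, y i * (U y - V y) ∂(gam n) :=
    fun i => gam_ibp (f := fun y => U y - V y) (by fun_prop) i
  simp_rw [h3] at h2
  have h4 : ∫ y, (U y - V y) ^ 2 ∂(gam n) = 2 := by
    have : ∀ y, (U y - V y) ^ 2 = U y ^ 2 + V y ^ 2 := fun y => by
      have := hUV y; nlinarith
    simp_rw [this]
    rw [integral_add (TG.integrable (by fun_prop)) (TG.integrable (by fun_prop)), hU1, hV1]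
    norm_num
  -- a nonnegative function has vanishing gradient on its zero set
  have hz : ∀ {W : Euc n → ℝ}, W.HasTemperateGrowth → (∀ y, 0 ≤ W y) → ∀ i y, W y = 0 →
      pd i W y = 0 := fun {W} hW hW0 i y h => by
    have : IsLocalMin W y := Filter.Eventually.of_forall fun z => by rw [h]; exact hW0 z
    rw [pd, this.fderiv_eq_zero]; rfl
  have h5 : ∫ y, ∑ i, pd i (fun y => U y - V y) y ^ 2 ∂(gam n) =
      ∫ y, ∑ i, pd i U y ^ 2 ∂(gam n) + ∫ y, ∑ i, pd i V y ^ 2 ∂(gam n) := by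
    rw [← integral_add (TG.integrable (by fun_prop)) (TG.integrable (by fun_prop))]
    congr 1; ext y
    rw [← Finset.sum_add_distrib]
    refine Finset.sum_congr rfl fun i _ => ?_
    rw [pd_sub (TG.diff hU y) (TG.diff hV y)]
    rcases mul_eq_zero.1 (hUV y) with h | h
    · rw [hz hU hU0 i y h]; ring
    · rw [hz hV hV0 i y h]; ring
  rw [h4, h5] at h2
  linarith

/-- Two nonnegative functions with disjoint supports: the Rayleigh quotients add up to at
least `2` (the Friedland–Hayman inequality in Gauss space). -/
lemma fh_ineq {U V : Euc n → ℝ} (hU : U.HasTemperateGrowth) (hV : V.HasTemperateGrowth)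
    (hU0 : ∀ y, 0 ≤ U y) (hV0 : ∀ y, 0 ≤ V y) (hUV : ∀ y, U y * V y = 0)
    (hU1 : 0 < ∫ y, U y ^ 2 ∂(gam n)) (hV1 : 0 < ∫ y, V y ^ 2 ∂(gam n)) :
    2 ≤ (∫ y, ∑ i, pd i U y ^ 2 ∂(gam n)) / (∫ y, U y ^ 2 ∂(gam n)) +
      (∫ y, ∑ i, pd i V y ^ 2 ∂(gam n)) / (∫ y, V y ^ 2 ∂(gam n)) := by
  have key : ∀ {W : Euc n → ℝ}, W.HasTemperateGrowth → 0 < ∫ y, W y ^ 2 ∂(gam n) →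
      (∫ y, ((√(∫ y, W y ^ 2 ∂(gam n)))⁻¹ * W y) ^ 2 ∂(gam n) = 1) ∧
      ∫ y, ∑ i, pd i (fun y => (√(∫ y, W y ^ 2 ∂(gam n)))⁻¹ * W y) y ^ 2 ∂(gam n) =
      (∫ y, ∑ i, pd i W y ^ 2 ∂(gam n)) / (∫ y, W y ^ 2 ∂(gam n)) := by
    intro W hW hpos
    have hs : ((√(∫ y, W y ^ 2 ∂(gam n)))⁻¹) ^ 2 = (∫ y, W y ^ 2 ∂(gam n))⁻¹ := by
      rw [inv_pow, Real.sq_sqrt hpos.le]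
    constructor
    · simp_rw [mul_pow, hs]
      rw [integral_const_mul, inv_mul_cancel₀ hpos.ne']
    · have : ∀ i y, pd i (fun y => (√(∫ y, W y ^ 2 ∂(gam n)))⁻¹ * W y) y =
          (√(∫ y, W y ^ 2 ∂(gam n)))⁻¹ * pd i W y := fun i y => pd_const_mul _ (TG.diff hW y)
      simp_rw [this, mul_pow, hs, ← Finset.mul_sum]
      rw [integral_const_mul, div_eq_inv_mul]
  obtain ⟨a1, a2⟩ := key hU hU1
  obtain ⟨b1, b2⟩ := key hV hV1
  rw [← a2, ← b2]
  refine fh_norm (by fun_prop) (by fun_prop) (fun y => ?_) (fun y => ?_) (fun y => ?_) a1 b1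
  · have := hU0 y; positivity
  · have := hV0 y; positivity
  · have := hUV y
    rw [mul_mul_mul_comm, this, mul_zero]

end FHgrad

section Chi

/-- A smooth convex positive part: `s - 1 ≤ χ(s) ≤ s⁺`. -/
noncomputable def chi (s : ℝ) : ℝ := ∫ t in (0 : ℝ)..s, Real.smoothTransition t

lemma hasDerivAt_chi (s : ℝ) : HasDerivAt chi (Real.smoothTransition s) s :=
  intervalIntegral.integral_hasDerivAt_right
    (Real.smoothTransition.continuous.intervalIntegrable _ _)
    Real.smoothTransition.continuous.aestronglyMeasurable.stronglyMeasurableAtFilter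
    Real.smoothTransition.continuous.continuousAt

lemma chi_mono : Monotone chi :=
  monotone_of_hasDerivAt_nonneg hasDerivAt_chi fun s => Real.smoothTransition.nonneg s

lemma chi_of_nonpos {s : ℝ} (hs : s ≤ 0) : chi s = 0 := by
  unfold chi
  rw [intervalIntegral.integral_congr (g := fun _ => 0), intervalIntegral.integral_zero]
  intro t ht
  rw [uIcc_of_ge hs] at ht
  exact Real.smoothTransition.zero_of_nonpos ht.2

lemma chi_nonneg (s : ℝ) : 0 ≤ chi s := by
  rcases le_total s 0 with h | h
  · rw [chi_of_nonpos h]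
  · rw [← chi_of_nonpos le_rfl]; exact chi_mono h

lemma chi_le {s : ℝ} (hs : 0 ≤ s) : chi s ≤ s := by
  have : Monotone (fun s => s - chi s) :=
    monotone_of_hasDerivAt_nonneg (fun s => (hasDerivAt_id s).sub (hasDerivAt_chi s))
      fun s => sub_nonneg.2 (Real.smoothTransition.le_one s)
  have := this hs
  simp only [chi_of_nonpos le_rfl, sub_zero] at this
  linarith

lemma le_chi (s : ℝ) : s - 1 ≤ chi s := by
  rcases le_total s 1 with h | h
  · linarith [chi_nonneg s]
  · have h1 : chi s = chi 1 + ∫ t in (1 : ℝ)..s, Real.smoothTransition t := by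
      unfold chi
      rw [intervalIntegral.integral_add_adjacent_intervals] <;>
      exact Real.smoothTransition.continuous.intervalIntegrable _ _
    rw [h1, intervalIntegral.integral_congr (g := fun _ => 1)]
    · simp; exact chi_nonneg 1
    · intro t ht
      rw [uIcc_of_le h] at ht
      exact Real.smoothTransition.one_of_one_le ht.1

lemma hasDerivAt_smoothTransition (s : ℝ) :
    HasDerivAt Real.smoothTransition (deriv Real.smoothTransition s) s :=
  ((Real.smoothTransition.contDiff (n := 1)).differentiable (by simp) s).hasDerivAt

lemma deriv_smoothTransition_nonneg (s : ℝ) : 0 ≤ deriv Real.smoothTransition s :=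
  Real.smoothTransition.monotone.deriv_nonneg

lemma deriv_smoothTransition_eq_zero {s : ℝ} (hs : s < 0 ∨ 1 < s) :
    deriv Real.smoothTransition s = 0 := by
  rcases hs with h | h
  · have : Real.smoothTransition =ᶠ[nhds s] fun _ => 0 :=
      Filter.eventually_of_mem (Iio_mem_nhds h) fun t ht =>
        Real.smoothTransition.zero_of_nonpos (le_of_lt ht)
    rw [this.deriv_eq]; simp
  · have : Real.smoothTransition =ᶠ[nhds s] fun _ => 1 :=
      Filter.eventually_of_mem (Ioi_mem_nhds h) fun t ht =>
        Real.smoothTransition.one_of_one_le (le_of_lt ht)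
    rw [this.deriv_eq]; simp

lemma TG_deriv_smoothTransition :
    Function.HasTemperateGrowth (deriv Real.smoothTransition) := by
  have hc : HasCompactSupport (deriv Real.smoothTransition) :=
    HasCompactSupport.intro (K := Icc 0 1) isCompact_Icc fun x hx =>
      deriv_smoothTransition_eq_zero (by
        by_contra h; push Not at h; exact hx ⟨h.1, h.2⟩)
  have hs : ContDiff ℝ (⊤ : ℕ∞) (deriv Real.smoothTransition) := by
    have h1 := Real.smoothTransition.contDiff (n := ⊤)
    exact (contDiff_infty_iff_deriv.1 h1).2
  exact (hc.toSchwartzMap hs).hasTemperateGrowth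

lemma TG_of_deriv {f f' : ℝ → ℝ} (h : ∀ s, HasDerivAt f (f' s) s) (hf' : f'.HasTemperateGrowth)
    {k : ℕ} {C : ℝ} (hb : ∀ s, |f s| ≤ C * (1 + ‖s‖) ^ k) : f.HasTemperateGrowth := by
  refine Function.HasTemperateGrowth.of_fderiv (k := k) (C := C) ?_
    (fun s => (h s).differentiableAt) hb
  have : fderiv ℝ f = fun s =>
      (ContinuousLinearMap.smulRightL ℝ ℝ ℝ (ContinuousLinearMap.id ℝ ℝ)) (f' s) := by
    funext s
    rw [(h s).hasFDerivAt.fderiv]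
    ext; simp
  rw [this]
  exact (ContinuousLinearMap.hasTemperateGrowth _).comp hf'

@[fun_prop]
lemma TG_smoothTransition : Function.HasTemperateGrowth Real.smoothTransition :=
  TG_of_deriv hasDerivAt_smoothTransition TG_deriv_smoothTransition (k := 0) (C := 1) fun s => by
    simpa [abs_of_nonneg (Real.smoothTransition.nonneg s)] using Real.smoothTransition.le_one s

@[fun_prop]
lemma TG_chi : Function.HasTemperateGrowth chi :=
  TG_of_deriv hasDerivAt_chi TG_smoothTransition (k := 1) (C := 1) fun s => by
    rw [abs_of_nonneg (chi_nonneg s), pow_one, one_mul]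
    rcases le_total s 0 with h | h
    · rw [chi_of_nonpos h]; positivity
    · have := chi_le h
      rw [Real.norm_of_nonneg h]; linarith

end Chi

/-! ### The Alt–Caffarelli–Friedman monotonicity formula -/

section ACF
variable {n : ℕ}

/-- Gaussian `L²` mass of the regularised positive part of `G(x₀ + r y) + c r²`. -/
noncomputable def acfI (x₀ : Euc n) (G : Euc n → ℝ) (c r : ℝ) : ℝ :=
  ∫ y, chi (G (x₀ + r • y) + c * r ^ 2) ^ 2 ∂(gam n)

lemma acfI_nonneg (x₀ : Euc n) (G : Euc n → ℝ) (c r : ℝ) : 0 ≤ acfI x₀ G c r :=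
  integral_nonneg fun _ => sq_nonneg _

/-- The differential inequality for the mass; `-2c ≤ ΔG` makes `G(x₀ + r y) + c r²` a subsolution
of the drifted heat equation. -/
lemma acf_deriv {G : Euc n → ℝ} (hG : G.HasTemperateGrowth) {c : ℝ} (hl : ∀ x, -(2 * c) ≤ lap G x)
    (x₀ : Euc n) (r : ℝ) :
    ∃ D, HasDerivAt (acfI x₀ G c) D r ∧
      2 * ∫ y, ∑ i, pd i (fun y => chi (G (x₀ + r • y) + c * r ^ 2)) y ^ 2 ∂(gam n) ≤ r * D := by
  have hd := TG.diff hG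
  refine ⟨∫ y, 2 * chi (G (x₀ + r • y) + c * r ^ 2) *
    (Real.smoothTransition (G (x₀ + r • y) + c * r ^ 2) *
      ((∑ i, y i * pd i G (x₀ + r • y)) + c * (2 * r))) ∂(gam n), ?_, ?_⟩
  · refine hasDerivAt_gam (G := fun r y => chi (G (x₀ + r • y) + c * r ^ 2) ^ 2) (by fun_prop)
      fun y => ?_
    have h1 : HasDerivAt (fun r : ℝ => x₀ + r • y) y r := by
      simpa using ((hasDerivAt_id r).smul_const y).const_add x₀
    have h2 : HasDerivAt (fun r : ℝ => G (x₀ + r • y)) (fderiv ℝ G (x₀ + r • y) y) r :=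
      (hd _).hasFDerivAt.comp_hasDerivAt r h1
    have h3 : HasDerivAt (fun r : ℝ => c * r ^ 2) (c * (2 * r)) r := by
      simpa using (hasDerivAt_pow 2 r).const_mul c
    have h4 := ((hasDerivAt_chi _).comp r (h2.fun_add h3)).fun_pow 2
    refine h4.congr_deriv ?_
    rw [← fderiv_eq_sum]; simp
  · set F : Euc n → ℝ := fun y => G (x₀ + r • y) + c * r ^ 2 with hF
    have hFT : F.HasTemperateGrowth := by rw [hF]; fun_prop
    have hFd := TG.diff hFT
    have hpF : ∀ i y, pd i F y = r * pd i G (x₀ + r • y) := fun i y => by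
      rw [hF, pd_add (TG.diff (by fun_prop) _) (differentiableAt_const _), pd_const,
        pd_scale hd, add_zero]
    have hlF : ∀ y, lap F y = r ^ 2 * lap G (x₀ + r • y) := fun y => by
      have h2 := contDiff_infty.1 (TG.contDiff hG) 2
      rw [hF, lap_add ((contDiff_infty.1 (TG.contDiff (TG_scale hG x₀ r)) 2)) contDiff_const,
        lap_scale h2]
      have : lap (fun _ : Euc n => c * r ^ 2) y = 0 := by
        simp [lap]
      rw [this, add_zero]
    have hW : ∀ i y, pd i (fun y => chi (F y)) y = Real.smoothTransition (F y) * pd i F y :=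
      fun i y => pd_comp (hasDerivAt_chi _) (hFd y)
    have ha : ∀ i y, pd i (fun y => chi (F y) * Real.smoothTransition (F y)) y =
        (Real.smoothTransition (F y) ^ 2 + chi (F y) * deriv Real.smoothTransition (F y)) *
          pd i F y := fun i y => by
      rw [pd_mul (TG.diff (by fun_prop) _) (TG.diff (by fun_prop) _), hW,
        pd_comp (hasDerivAt_smoothTransition _) (hFd y)]
      ring
    have hg := gam_green (a := fun y => chi (F y) * Real.smoothTransition (F y)) (b := F)
      (by fun_prop) hFT
    have h1 : ∫ y, ∑ i, pd i (fun y => chi (F y)) y ^ 2 ∂(gam n) ≤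
        ∫ y, ∑ i, pd i (fun y => chi (F y) * Real.smoothTransition (F y)) y * pd i F y
          ∂(gam n) := by
      refine integral_mono (TG.integrable (by fun_prop)) (TG.integrable (by fun_prop)) fun y => ?_
      refine Finset.sum_le_sum fun i _ => ?_
      rw [hW, ha]
      have := mul_nonneg (mul_nonneg (chi_nonneg (F y)) (deriv_smoothTransition_nonneg (F y)))
        (sq_nonneg (pd i F y))
      nlinarith
    have h2 : ∫ y, chi (F y) * Real.smoothTransition (F y) *
          ((∑ i, y i * pd i F y) - lap F y) ∂(gam n) ≤
        ∫ y, chi (F y) * Real.smoothTransition (F y) *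
          ((∑ i, y i * pd i F y) + 2 * c * r ^ 2) ∂(gam n) := by
      refine integral_mono (TG.integrable (by fun_prop)) (TG.integrable (by fun_prop)) fun y => ?_
      refine mul_le_mul_of_nonneg_left ?_
        (mul_nonneg (chi_nonneg _) (Real.smoothTransition.nonneg _))
      rw [hlF]
      nlinarith [mul_le_mul_of_nonneg_left (hl (x₀ + r • y)) (sq_nonneg r)]
    have h3 : r * ∫ y, 2 * chi (F y) * (Real.smoothTransition (F y) *
        ((∑ i, y i * pd i G (x₀ + r • y)) + c * (2 * r))) ∂(gam n) =
        2 * ∫ y, chi (F y) * Real.smoothTransition (F y) *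
          ((∑ i, y i * pd i F y) + 2 * c * r ^ 2) ∂(gam n) := by
      rw [← integral_const_mul, ← integral_const_mul]
      congr 1; funext y
      have : ∑ i, y i * pd i F y = r * ∑ i, y i * pd i G (x₀ + r • y) := by
        rw [Finset.mul_sum]; exact Finset.sum_congr rfl fun i _ => by rw [hpF]; ring
      rw [this]; ring
    rw [h3]
    linarith

lemma acfI_mono {G : Euc n → ℝ} (hG : G.HasTemperateGrowth) {c : ℝ}
    (hl : ∀ x, -(2 * c) ≤ lap G x) (x₀ : Euc n) {r s : ℝ} (hr : 0 < r) (hrs : r ≤ s) :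
    acfI x₀ G c r ≤ acfI x₀ G c s := by
  have hm : MonotoneOn (acfI x₀ G c) (Icc r s) := by
    have hp : ∀ t ∈ Icc r s, 0 < t := fun t ht => lt_of_lt_of_le hr ht.1
    refine monotoneOn_of_deriv_nonneg (convex_Icc _ _) (fun t ht => ?_) (fun t ht => ?_)
      (fun t ht => ?_)
    · obtain ⟨D, hD, -⟩ := acf_deriv hG hl x₀ t
      exact hD.continuousAt.continuousWithinAt
    · obtain ⟨D, hD, -⟩ := acf_deriv hG hl x₀ t
      exact hD.differentiableAt.differentiableWithinAt
    · obtain ⟨D, hD, h2⟩ := acf_deriv hG hl x₀ t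
      rw [hD.deriv]
      have h3 : 0 ≤ t * D := le_trans (mul_nonneg (by norm_num)
        (integral_nonneg fun y => Finset.sum_nonneg fun i _ => sq_nonneg _)) h2
      exact nonneg_of_mul_nonneg_right h3 (hp t (interior_subset ht))
  exact hm ⟨le_rfl, hrs⟩ ⟨hrs, le_rfl⟩ hrs

/-- Gaussian version of the Alt–Caffarelli–Friedman formula, for the parts of two functions above
a common barrier that dominates their minimum. -/
lemma acf_mono {G₁ G₂ : Euc n → ℝ} (h₁ : G₁.HasTemperateGrowth) (h₂ : G₂.HasTemperateGrowth)
    {c : ℝ} (hl₁ : ∀ x, -(2 * c) ≤ lap G₁ x) (hl₂ : ∀ x, -(2 * c) ≤ lap G₂ x) (x₀ : Euc n)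
    {r s : ℝ} (hr : 0 < r) (hrs : r ≤ s)
    (hm : ∀ t ∈ Icc r s, ∀ y, min (G₁ (x₀ + t • y)) (G₂ (x₀ + t • y)) + c * t ^ 2 ≤ 0) :
    acfI x₀ G₁ c r * acfI x₀ G₂ c r / r ^ 4 ≤ acfI x₀ G₁ c s * acfI x₀ G₂ c s / s ^ 4 := by
  have hs : 0 < s := lt_of_lt_of_le hr hrs
  rcases (acfI_nonneg x₀ G₁ c r).eq_or_lt with h0 | hp1
  · rw [← h0, zero_mul, zero_div]
    exact div_nonneg (mul_nonneg (acfI_nonneg _ _ _ _) (acfI_nonneg _ _ _ _)) (by positivity)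
  rcases (acfI_nonneg x₀ G₂ c r).eq_or_lt with h0 | hp2
  · rw [← h0, mul_zero, zero_div]
    exact div_nonneg (mul_nonneg (acfI_nonneg _ _ _ _) (acfI_nonneg _ _ _ _)) (by positivity)
  have hp : ∀ t ∈ Icc r s, 0 < t := fun t ht => lt_of_lt_of_le hr ht.1
  have key : ∀ t ∈ Icc r s, ∃ D, HasDerivAt (fun t => acfI x₀ G₁ c t * acfI x₀ G₂ c t / t ^ 4) D t
      ∧ 0 ≤ D := by
    intro t ht
    have ht0 := hp t ht
    obtain ⟨D₁, hD₁, e₁⟩ := acf_deriv h₁ hl₁ x₀ t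
    obtain ⟨D₂, hD₂, e₂⟩ := acf_deriv h₂ hl₂ x₀ t
    refine ⟨_, (hD₁.fun_mul hD₂).fun_div (hasDerivAt_pow 4 t) (by positivity), ?_⟩
    have q1 : 0 < acfI x₀ G₁ c t := lt_of_lt_of_le hp1 (acfI_mono h₁ hl₁ x₀ hr ht.1)
    have q2 : 0 < acfI x₀ G₂ c t := lt_of_lt_of_le hp2 (acfI_mono h₂ hl₂ x₀ hr ht.1)
    have hfh := fh_ineq (U := fun y => chi (G₁ (x₀ + t • y) + c * t ^ 2))
      (V := fun y => chi (G₂ (x₀ + t • y) + c * t ^ 2)) (by fun_prop) (by fun_prop)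
      (fun y => chi_nonneg _) (fun y => chi_nonneg _) (fun y => by
        rcases min_le_iff.1 (by have := hm t ht y; linarith :
          min (G₁ (x₀ + t • y)) (G₂ (x₀ + t • y)) ≤ - (c * t ^ 2)) with h | h
        · rw [chi_of_nonpos (s := G₁ _ + _) (by linarith), zero_mul]
        · rw [chi_of_nonpos (s := G₂ _ + _) (by linarith), mul_zero]) q1 q2
    change 2 ≤ _ / acfI x₀ G₁ c t + _ / acfI x₀ G₂ c t at hfh
    rw [div_add_div _ _ q1.ne' q2.ne', le_div_iff₀ (mul_pos q1 q2)] at hfh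
    refine div_nonneg ?_ (by positivity)
    have h5 := mul_le_mul_of_nonneg_right e₁ q2.le
    have h6 := mul_le_mul_of_nonneg_right e₂ q1.le
    have h7 : 0 ≤ t ^ 3 * (t * D₁ * acfI x₀ G₂ c t + t * D₂ * acfI x₀ G₁ c t -
      4 * (acfI x₀ G₁ c t * acfI x₀ G₂ c t)) := mul_nonneg (by positivity) (by linarith)
    norm_num
    linarith
  have hmo : MonotoneOn (fun t => acfI x₀ G₁ c t * acfI x₀ G₂ c t / t ^ 4) (Icc r s) := by
    refine monotoneOn_of_deriv_nonneg (convex_Icc _ _) (fun t ht => ?_) (fun t ht => ?_)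
      (fun t ht => ?_)
    · obtain ⟨D, hD, -⟩ := key t ht
      exact hD.continuousAt.continuousWithinAt
    · obtain ⟨D, hD, -⟩ := key t (interior_subset ht)
      exact hD.differentiableAt.differentiableWithinAt
    · obtain ⟨D, hD, h2⟩ := key t (interior_subset ht)
      rw [hD.deriv]; exact h2
  exact hmo ⟨le_rfl, hrs⟩ ⟨hrs, le_rfl⟩ hrs

end ACF

/-! ### The Almgren-type frequency formula -/

section Almgren
variable {n : ℕ}

/-- Positive entire solutions of the system with at most linear growth. Temperate growth of `u` and
`v` is included as a field; it follows from the other properties and smoothness by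
`TG_of_solution`. -/
structure IsSol (u v : Euc n → ℝ) : Prop where
  tu : u.HasTemperateGrowth
  tv : v.HasTemperateGrowth
  pu : ∀ x, 0 < u x
  pv : ∀ x, 0 < v x
  eu : ∀ x, lap u x = u x * v x ^ 2
  ev : ∀ x, lap v x = v x * u x ^ 2
  gr : ∃ C, ∀ x, u x + v x ≤ C * (1 + ‖x‖)

lemma IsSol.symm {u v : Euc n → ℝ} (h : IsSol u v) : IsSol v u where
  tu := h.tv
  tv := h.tu
  pu := h.pv
  pv := h.pu
  eu := h.ev
  ev := h.eu
  gr := by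
    obtain ⟨C, hC⟩ := h.gr
    exact ⟨C, fun x => by rw [add_comm]; exact hC x⟩

/-- The system is invariant under `u ↦ l u(x₀ + l ·)`. -/
lemma IsSol.scale {u v : Euc n → ℝ} (h : IsSol u v) (x₀ : Euc n) {l : ℝ} (hl : 0 < l) :
    IsSol (fun y => l * u (x₀ + l • y)) (fun y => l * v (x₀ + l • y)) where
  tu := by have := h.tu; fun_prop
  tv := by have := h.tv; fun_prop
  pu := fun x => mul_pos hl (h.pu _)
  pv := fun x => mul_pos hl (h.pv _)
  eu := fun x => by
    rw [lap_const_mul (contDiff_infty.1 (TG.contDiff (TG_scale h.tu x₀ l)) 2),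
      lap_scale (contDiff_infty.1 (TG.contDiff h.tu) 2), h.eu]
    ring
  ev := fun x => by
    rw [lap_const_mul (contDiff_infty.1 (TG.contDiff (TG_scale h.tv x₀ l)) 2),
      lap_scale (contDiff_infty.1 (TG.contDiff h.tv) 2), h.ev]
    ring
  gr := by
    obtain ⟨C, hC⟩ := h.gr
    have hC0 : 0 ≤ C := by
      have := hC 0
      rw [norm_zero] at this
      linarith [h.pu 0, h.pv 0]
    refine ⟨l * C * (1 + ‖x₀‖ + l), fun x => ?_⟩
    have h1 := hC (x₀ + l • x)
    have h2 : ‖x₀ + l • x‖ ≤ ‖x₀‖ + l * ‖x‖ := by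
      refine (norm_add_le _ _).trans ?_
      rw [norm_smul, Real.norm_of_nonneg hl.le]
    have h3 : 1 + ‖x₀ + l • x‖ ≤ (1 + ‖x₀‖ + l) * (1 + ‖x‖) := by
      nlinarith [norm_nonneg x, norm_nonneg x₀, mul_nonneg (norm_nonneg x) (norm_nonneg x₀)]
    calc l * u (x₀ + l • x) + l * v (x₀ + l • x) = l * (u (x₀ + l • x) + v (x₀ + l • x)) := by ring
      _ ≤ l * (C * ((1 + ‖x₀‖ + l) * (1 + ‖x‖))) := by
        gcongr; exact h1.trans (by gcongr)
      _ = _ := by ring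

lemma lap_sq {f : Euc n → ℝ} (hf : f.HasTemperateGrowth) (x : Euc n) :
    lap (fun y => f y ^ 2) x = 2 * (f x * lap f x + ∑ i, pd i f x ^ 2) := by
  have hd := TG.diff hf
  have h1 : ∀ i : Fin n, pd i (fun y => f y ^ 2) = fun y => 2 * (f y * pd i f y) :=
    fun i => funext fun y => by rw [pd_sq (hd y)]; ring
  rw [lap_eq, lap_eq, Finset.mul_sum, ← Finset.sum_add_distrib, Finset.mul_sum]
  refine Finset.sum_congr rfl fun i _ => ?_
  have hp : DifferentiableAt ℝ (pd i f) x := TG.diff (by fun_prop) x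
  rw [h1, pd_const_mul _ ((hd x).fun_mul hp), pd_mul (hd x) hp]
  ring

/-- The Gaussian height `∫ (u² + v²)(x₀ + r y) dγ(y)`. -/
noncomputable def almH (u v : Euc n → ℝ) (x₀ : Euc n) (r : ℝ) : ℝ :=
  ∫ y, (u (x₀ + r • y) ^ 2 + v (x₀ + r • y) ^ 2) ∂(gam n)

/-- The interaction term `r² ∫ u²v²(x₀ + r y) dγ(y)`. -/
noncomputable def almB (u v : Euc n → ℝ) (x₀ : Euc n) (r : ℝ) : ℝ :=
  ∫ y, r ^ 2 * (u (x₀ + r • y) ^ 2 * v (x₀ + r • y) ^ 2) ∂(gam n)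

/-- The Gaussian energy `r² ∫ (|∇u|² + |∇v|² + u²v²)(x₀ + r y) dγ(y)`. -/
noncomputable def almE (u v : Euc n → ℝ) (x₀ : Euc n) (r : ℝ) : ℝ :=
  ∫ y, r ^ 2 * ((∑ i, pd i u (x₀ + r • y) ^ 2) + (∑ i, pd i v (x₀ + r • y) ^ 2) +
    u (x₀ + r • y) ^ 2 * v (x₀ + r • y) ^ 2) ∂(gam n)

/-- The radial derivative `y · ∇_y [f(x₀ + r y)]`. -/
noncomputable def radial (f : Euc n → ℝ) (x₀ : Euc n) (r : ℝ) (y : Euc n) : ℝ :=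
  r * ∑ i, y i * pd i f (x₀ + r • y)

@[fun_prop]
lemma TG_radial {f : Euc n → ℝ} (hf : f.HasTemperateGrowth) (x₀ : Euc n) (r : ℝ) :
    Function.HasTemperateGrowth (radial f x₀ r) := by
  unfold radial; fun_prop

lemma hasDerivAt_comp_scale {f : Euc n → ℝ} (hf : Differentiable ℝ f) (x₀ y : Euc n) (r : ℝ) :
    HasDerivAt (fun r : ℝ => f (x₀ + r • y)) (∑ i, y i * pd i f (x₀ + r • y)) r := by
  rw [← fderiv_eq_sum]
  have h1 : HasDerivAt (fun r : ℝ => x₀ + r • y) y r := by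
    simpa using ((hasDerivAt_id r).smul_const y).const_add x₀
  exact (hf _).hasFDerivAt.comp_hasDerivAt r h1

lemma almH_deriv {u v : Euc n → ℝ} (h : IsSol u v) (x₀ : Euc n) (r : ℝ) :
    ∃ D, HasDerivAt (almH u v x₀) D r ∧ r * D = 2 * (almE u v x₀ r + almB u v x₀ r) ∧
      r * D = 2 * ∫ y, (u (x₀ + r • y) * radial u x₀ r y + v (x₀ + r • y) * radial v x₀ r y)
        ∂(gam n) := by
  have tu := h.tu
  have tv := h.tv
  have hf : Function.HasTemperateGrowth (fun x => u x ^ 2 + v x ^ 2) := by fun_prop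
  refine ⟨_, hasDerivAt_scale_lap hf x₀ r, ?_, ?_⟩
  · unfold almE almB
    rw [← integral_add (TG.integrable (by fun_prop)) (TG.integrable (by fun_prop)),
      ← integral_const_mul, ← integral_const_mul, ← integral_const_mul]
    congr 1; funext y
    rw [lap_add (contDiff_infty.1 (TG.contDiff (by fun_prop)) 2)
      (contDiff_infty.1 (TG.contDiff (by fun_prop)) 2), lap_sq tu, lap_sq tv, h.eu, h.ev]
    ring
  · rw [← integral_euler hf, ← integral_const_mul, ← integral_const_mul]
    congr 1; funext y
    unfold radial
    have : ∑ i, y i * pd i (fun x => u x ^ 2 + v x ^ 2) (x₀ + r • y) =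
        2 * u (x₀ + r • y) * (∑ i, y i * pd i u (x₀ + r • y)) +
        2 * v (x₀ + r • y) * (∑ i, y i * pd i v (x₀ + r • y)) := by
      rw [Finset.mul_sum, Finset.mul_sum, ← Finset.sum_add_distrib]
      refine Finset.sum_congr rfl fun i _ => ?_
      rw [pd_add (TG.diff (by fun_prop) _) (TG.diff (by fun_prop) _), pd_sq (TG.diff tu _),
        pd_sq (TG.diff tv _)]
      ring
    rw [this]; ring

/-- The Dirichlet part of the energy derivative. -/
lemma dirichlet_deriv {u : Euc n → ℝ} (tu : u.HasTemperateGrowth) (x₀ : Euc n) (r : ℝ) :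
    ∃ D, HasDerivAt (fun r => ∫ y, r ^ 2 * ∑ i, pd i u (x₀ + r • y) ^ 2 ∂(gam n)) D r ∧
      r * D = 2 * ∫ y, radial u x₀ r y * (radial u x₀ r y - r ^ 2 * lap u (x₀ + r • y))
        ∂(gam n) := by
  have hd := TG.diff tu
  refine ⟨∫ y, (2 * r * (∑ i, pd i u (x₀ + r • y) ^ 2) +
    r ^ 2 * ∑ i, 2 * pd i u (x₀ + r • y) * ∑ j, y j * pd j (pd i u) (x₀ + r • y)) ∂(gam n),
    ?_, ?_⟩
  · refine hasDerivAt_gam (G := fun r y => r ^ 2 * ∑ i, pd i u (x₀ + r • y) ^ 2) (by fun_prop)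
      fun y => ?_
    have h1 : HasDerivAt (fun r : ℝ => ∑ i, pd i u (x₀ + r • y) ^ 2)
        (∑ i, 2 * pd i u (x₀ + r • y) * ∑ j, y j * pd j (pd i u) (x₀ + r • y)) r := by
      refine HasDerivAt.fun_sum fun i _ => ?_
      have := (hasDerivAt_comp_scale (f := pd i u) (TG.diff (by fun_prop)) x₀ y r).fun_pow 2
      exact this.congr_deriv (by simp)
    have h2 : HasDerivAt (fun r : ℝ => r ^ 2) (2 * r) r := by simpa using hasDerivAt_pow 2 r
    exact h2.fun_mul h1
  · have hg := gam_green (a := radial u x₀ r) (b := fun y => u (x₀ + r • y)) (by fun_prop)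
      (by fun_prop)
    have e1 : ∀ y, (∑ i, y i * pd i (fun y => u (x₀ + r • y)) y) -
        lap (fun y => u (x₀ + r • y)) y = radial u x₀ r y - r ^ 2 * lap u (x₀ + r • y) := fun y => by
      rw [lap_scale (contDiff_infty.1 (TG.contDiff tu) 2)]
      unfold radial
      rw [Finset.mul_sum]
      congr 1
      exact Finset.sum_congr rfl fun i _ => by rw [pd_scale hd]; ring
    simp_rw [e1] at hg
    rw [← hg, ← integral_const_mul, ← integral_const_mul]
    congr 1; funext y
    rw [Finset.mul_sum, Finset.mul_sum, Finset.mul_sum, ← Finset.sum_add_distrib, Finset.mul_sum]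
    refine Finset.sum_congr rfl fun i _ => ?_
    have e2 : pd i (radial u x₀ r) y = r * (pd i u (x₀ + r • y) +
        r * ∑ j, y j * pd j (pd i u) (x₀ + r • y)) := by
      unfold radial
      rw [pd_const_mul _ (TG.diff (by fun_prop) _), pd_sum (F := fun j (y : Euc n) => y j * pd j u (x₀ + r • y)) _ (fun j _ => TG.diff (by fun_prop) _)]
      congr 1
      have : ∀ j, pd i (fun y : Euc n => y j * pd j u (x₀ + r • y)) y =
          (if j = i then pd j u (x₀ + r • y) else 0) +
            r * (y j * pd j (pd i u) (x₀ + r • y)) := fun j => by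
        rw [pd_mul (TG.diff (by fun_prop) _) (TG.diff (by fun_prop) _), pd_coord,
          pd_scale (f := pd j u) (TG.diff (by fun_prop)), pd_comm (contDiff_infty.1 (TG.contDiff tu) 2)]
        split_ifs <;> ring
      simp_rw [this]
      rw [Finset.sum_add_distrib, Finset.mul_sum]
      simp
    rw [e2, pd_scale hd]
    ring

lemma almB_nonneg (u v : Euc n → ℝ) (x₀ : Euc n) (r : ℝ) : 0 ≤ almB u v x₀ r :=
  integral_nonneg fun _ => by positivity

lemma almE_nonneg (u v : Euc n → ℝ) (x₀ : Euc n) (r : ℝ) : 0 ≤ almE u v x₀ r :=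
  integral_nonneg fun _ => by
    have : ∀ f : Euc n → ℝ, ∀ x, 0 ≤ ∑ i, pd i f x ^ 2 := fun f x =>
      Finset.sum_nonneg fun i _ => sq_nonneg _
    exact mul_nonneg (sq_nonneg _) (add_nonneg (add_nonneg (this _ _) (this _ _)) (by positivity))

lemma almE_deriv {u v : Euc n → ℝ} (h : IsSol u v) (x₀ : Euc n) (r : ℝ) :
    ∃ D, HasDerivAt (almE u v x₀) D r ∧
      r * D = 2 * (∫ y, (radial u x₀ r y ^ 2 + radial v x₀ r y ^ 2) ∂(gam n)) +
        2 * almB u v x₀ r := by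
  have tu := h.tu
  have tv := h.tv
  obtain ⟨D₁, d₁, e₁⟩ := dirichlet_deriv tu x₀ r
  obtain ⟨D₂, d₂, e₂⟩ := dirichlet_deriv tv x₀ r
  have d₃ : HasDerivAt (almB u v x₀) (∫ y, (2 * r * (u (x₀ + r • y) ^ 2 * v (x₀ + r • y) ^ 2) +
      r ^ 2 * (2 * u (x₀ + r • y) * (∑ i, y i * pd i u (x₀ + r • y)) * v (x₀ + r • y) ^ 2 +
        u (x₀ + r • y) ^ 2 * (2 * v (x₀ + r • y) * ∑ i, y i * pd i v (x₀ + r • y)))) ∂(gam n)) r := by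
    refine hasDerivAt_gam (G := fun r y => r ^ 2 * (u (x₀ + r • y) ^ 2 * v (x₀ + r • y) ^ 2))
      (by fun_prop) fun y => ?_
    have h1 := (hasDerivAt_comp_scale (TG.diff tu) x₀ y r).fun_pow 2
    have h2 := (hasDerivAt_comp_scale (TG.diff tv) x₀ y r).fun_pow 2
    have h3 : HasDerivAt (fun r : ℝ => r ^ 2) (2 * r) r := by simpa using hasDerivAt_pow 2 r
    exact (h3.fun_mul (h1.fun_mul h2)).congr_deriv (by simp)
  refine ⟨_, ((d₁.fun_add d₂).fun_add d₃).congr_of_eventuallyEq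
    (Filter.Eventually.of_forall fun s => ?_), ?_⟩
  · unfold almE almB
    beta_reduce
    rw [← integral_add (TG.integrable (by fun_prop)) (TG.integrable (by fun_prop)),
      ← integral_add (TG.integrable (by fun_prop)) (TG.integrable (by fun_prop))]
    congr 1; funext y; ring
  · rw [mul_add, mul_add, e₁, e₂]
    unfold almB
    rw [← integral_const_mul, ← integral_const_mul, ← integral_const_mul, ← integral_const_mul,
      ← integral_const_mul, ← integral_add (TG.integrable (by fun_prop)) (TG.integrable (by fun_prop)),
      ← integral_add (TG.integrable (by fun_prop)) (TG.integrable (by fun_prop)),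
      ← integral_add (TG.integrable (by fun_prop)) (TG.integrable (by fun_prop))]
    congr 1; funext y
    rw [h.eu, h.ev]
    unfold radial
    ring

lemma alm_cs {u v : Euc n → ℝ} (h : IsSol u v) (x₀ : Euc n) (r : ℝ) :
    (almE u v x₀ r + almB u v x₀ r) ^ 2 ≤
      (∫ y, (radial u x₀ r y ^ 2 + radial v x₀ r y ^ 2) ∂(gam n)) * almH u v x₀ r := by
  have tu := h.tu
  have tv := h.tv
  obtain ⟨D, -, e1, e2⟩ := almH_deriv h x₀ r
  have e3 : almE u v x₀ r + almB u v x₀ r = ∫ y, (u (x₀ + r • y) * radial u x₀ r y +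
      v (x₀ + r • y) * radial v x₀ r y) ∂(gam n) := by linarith
  rw [e3]
  set a : Euc n → ℝ := fun y => u (x₀ + r • y)
  set b : Euc n → ℝ := fun y => v (x₀ + r • y)
  have ta : a.HasTemperateGrowth := by fun_prop
  have tb : b.HasTemperateGrowth := by fun_prop
  set A := ∫ y, (radial u x₀ r y ^ 2 + radial v x₀ r y ^ 2) ∂(gam n)
  set P := ∫ y, (a y * radial u x₀ r y + b y * radial v x₀ r y) ∂(gam n)
  have hq : ∀ t : ℝ, 0 ≤ almH u v x₀ r * (t * t) + (-2 * P) * t + A := fun t => by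
    have : almH u v x₀ r * (t * t) + (-2 * P) * t + A =
        ∫ y, ((t * a y - radial u x₀ r y) ^ 2 + (t * b y - radial v x₀ r y) ^ 2) ∂(gam n) := by
      change (∫ y, (a y ^ 2 + b y ^ 2) ∂(gam n)) * (t * t) + (-2 * P) * t + A = _
      have e : ∀ X : ℝ, X * (t * t) + (-2 * P) * t + A = (t * t) * X + (-2 * t) * P + A :=
        fun X => by ring
      rw [e, ← integral_const_mul, ← integral_const_mul, ← integral_add (TG.integrable (by fun_prop))
          (TG.integrable (by fun_prop)),
        ← integral_add (TG.integrable (by fun_prop)) (TG.integrable (by fun_prop))]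
      congr 1; funext y; ring
    rw [this]
    exact integral_nonneg fun y => by positivity
  have := discrim_le_zero hq
  unfold discrim at this
  linarith

lemma almH_mono {u v : Euc n → ℝ} (h : IsSol u v) (x₀ : Euc n) {r s : ℝ} (hr : 0 ≤ r)
    (hrs : r ≤ s) : almH u v x₀ r ≤ almH u v x₀ s := by
  have hm : MonotoneOn (almH u v x₀) (Ici 0) := by
    refine monotoneOn_of_deriv_nonneg (convex_Ici _) (fun t ht => ?_) (fun t ht => ?_)
      (fun t ht => ?_)
    · obtain ⟨D, hD, -⟩ := almH_deriv h x₀ t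
      exact hD.continuousAt.continuousWithinAt
    · obtain ⟨D, hD, -⟩ := almH_deriv h x₀ t
      exact hD.differentiableAt.differentiableWithinAt
    · obtain ⟨D, hD, h2, -⟩ := almH_deriv h x₀ t
      rw [interior_Ici] at ht
      rw [hD.deriv]
      refine nonneg_of_mul_nonneg_right (a := t) ?_ ht
      rw [h2]
      linarith [almE_nonneg u v x₀ t, almB_nonneg u v x₀ t]
  exact hm (mem_Ici.2 hr) (mem_Ici.2 (hr.trans hrs)) hrs

lemma almH_pos {u v : Euc n → ℝ} (h : IsSol u v) (x₀ : Euc n) {r : ℝ} (hr : 0 ≤ r) :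
    u x₀ ^ 2 + v x₀ ^ 2 ≤ almH u v x₀ r := by
  have h0 : almH u v x₀ 0 = u x₀ ^ 2 + v x₀ ^ 2 := by simp [almH]
  rw [← h0]
  exact almH_mono h x₀ le_rfl hr

lemma almH_pos' {u v : Euc n → ℝ} (h : IsSol u v) (x₀ : Euc n) {r : ℝ} (hr : 0 ≤ r) :
    0 < almH u v x₀ r :=
  lt_of_lt_of_le (by have := h.pu x₀; positivity) (almH_pos h x₀ hr)

/-- The frequency `E/H` is nondecreasing, quantitatively. -/
lemma almN_deriv {u v : Euc n → ℝ} (h : IsSol u v) (x₀ : Euc n) {r : ℝ} (hr : 0 < r) :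
    ∃ D, HasDerivAt (fun r => almE u v x₀ r / almH u v x₀ r) D r ∧
      2 * almB u v x₀ r / almH u v x₀ r ≤ r * D := by
  obtain ⟨D₁, d₁, e₁⟩ := almE_deriv h x₀ r
  obtain ⟨D₂, d₂, e₂, -⟩ := almH_deriv h x₀ r
  have hH := almH_pos' h x₀ hr.le
  refine ⟨_, d₁.fun_div d₂ hH.ne', ?_⟩
  have hcs := alm_cs h x₀ r
  have hB := almB_nonneg u v x₀ r
  have hE := almE_nonneg u v x₀ r
  rw [← mul_div_assoc, div_le_div_iff₀ hH (by positivity)]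
  have k : r * (D₁ * almH u v x₀ r - almE u v x₀ r * D₂) =
      (r * D₁) * almH u v x₀ r - almE u v x₀ r * (r * D₂) := by ring
  rw [k, e₁, e₂]
  have : 2 * almB u v x₀ r * almH u v x₀ r ≤ (2 * (∫ y, (radial u x₀ r y ^ 2 +
      radial v x₀ r y ^ 2) ∂(gam n)) + 2 * almB u v x₀ r) * almH u v x₀ r -
      almE u v x₀ r * (2 * (almE u v x₀ r + almB u v x₀ r)) := by
    nlinarith [mul_nonneg hB hE, mul_nonneg hB hB]
  calc _ = (2 * almB u v x₀ r * almH u v x₀ r) * almH u v x₀ r := by ring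
    _ ≤ _ := mul_le_mul_of_nonneg_right this hH.le

lemma almN_mono {u v : Euc n → ℝ} (h : IsSol u v) (x₀ : Euc n) :
    MonotoneOn (fun r => almE u v x₀ r / almH u v x₀ r) (Ioi 0) := by
  refine monotoneOn_of_deriv_nonneg (convex_Ioi _) (fun t ht => ?_) (fun t ht => ?_)
      (fun t ht => ?_)
  · obtain ⟨D, hD, -⟩ := almN_deriv h x₀ ht
    exact hD.continuousAt.continuousWithinAt
  · obtain ⟨D, hD, -⟩ := almN_deriv h x₀ (interior_subset ht)
    exact hD.differentiableAt.differentiableWithinAt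
  · have ht0 : 0 < t := interior_subset ht
    obtain ⟨D, hD, h2⟩ := almN_deriv h x₀ ht0
    rw [hD.deriv]
    refine nonneg_of_mul_nonneg_right (a := t) (le_trans ?_ h2) ht0
    have := almB_nonneg u v x₀ t
    have := (almH_pos' h x₀ ht0.le).le
    positivity

lemma almH_growth {u v : Euc n → ℝ} (h : IsSol u v) (x₀ : Euc n) :
    ∃ C, ∀ r, 0 ≤ r → almH u v x₀ r ≤ C * (1 + r) ^ 2 := by
  obtain ⟨C, hC⟩ := h.gr
  have tu := h.tu
  have tv := h.tv
  have hC0 : 0 ≤ C := by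
    have := hC 0
    rw [norm_zero] at this
    linarith [h.pu 0, h.pv 0]
  refine ⟨∫ y : Euc n, (C * (1 + ‖x₀‖)) ^ 2 * (1 + ‖y‖) ^ 2 ∂(gam n), fun r hr => ?_⟩
  rw [mul_comm, ← integral_const_mul]
  unfold almH
  refine integral_mono (TG.integrable (by fun_prop))
    (((integrable_poly_gam n 2).const_mul _).const_mul _) fun y => ?_
  have h1 := hC (x₀ + r • y)
  have hu := h.pu (x₀ + r • y)
  have hv := h.pv (x₀ + r • y)
  have h2 : ‖x₀ + r • y‖ ≤ ‖x₀‖ + r * ‖y‖ := by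
    refine (norm_add_le _ _).trans ?_
    rw [norm_smul, Real.norm_of_nonneg hr]
  have h3 : 1 + ‖x₀ + r • y‖ ≤ (1 + ‖x₀‖) * (1 + ‖y‖) * (1 + r) := by
    have a1 := norm_nonneg y
    have a2 := norm_nonneg x₀
    have : 0 ≤ ‖y‖ + ‖x₀‖ * ‖y‖ + r * (1 + ‖x₀‖ + ‖x₀‖ * ‖y‖) := by positivity
    nlinarith
  have h4 : u (x₀ + r • y) + v (x₀ + r • y) ≤ C * ((1 + ‖x₀‖) * (1 + ‖y‖) * (1 + r)) :=
    h1.trans (by gcongr)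
  calc u (x₀ + r • y) ^ 2 + v (x₀ + r • y) ^ 2 ≤ (u (x₀ + r • y) + v (x₀ + r • y)) ^ 2 := by
        nlinarith [mul_pos hu hv]
    _ ≤ (C * ((1 + ‖x₀‖) * (1 + ‖y‖) * (1 + r))) ^ 2 := by gcongr
    _ = _ := by ring

/-- The frequency of a solution of linear growth is at most one: otherwise `H` would grow faster
than quadratically. -/
lemma almN_le_one {u v : Euc n → ℝ} (h : IsSol u v) (x₀ : Euc n) {r : ℝ} (hr : 0 < r) :
    almE u v x₀ r ≤ almH u v x₀ r := by
  by_contra hcon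
  push Not at hcon
  have hH := fun {t : ℝ} (ht : 0 < t) => almH_pos' h x₀ ht.le
  set d := almE u v x₀ r / almH u v x₀ r - 1 with hd
  have hd0 : 0 < d := by
    rw [hd, sub_pos, lt_div_iff₀ (hH hr)]; linarith
  have hE : ∀ t, r ≤ t → (1 + d) * almH u v x₀ t ≤ almE u v x₀ t := fun t ht => by
    have ht0 := lt_of_lt_of_le hr ht
    have := almN_mono h x₀ hr ht0 ht
    simp only at this
    rw [le_div_iff₀ (hH ht0)] at this
    have e : 1 + d = almE u v x₀ r / almH u v x₀ r := by rw [hd]; ring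
    rw [e]; exact this
  -- the normalised height `H/t²` has logarithmic derivative at least `2d`
  have key : ∀ t, r ≤ t → ∃ D, HasDerivAt (fun t => almH u v x₀ t / t ^ 2) D t ∧
      2 * d * (almH u v x₀ t / t ^ 2) ≤ t * D := fun t ht => by
    have ht0 := lt_of_lt_of_le hr ht
    obtain ⟨D, dD, e, -⟩ := almH_deriv h x₀ t
    refine ⟨_, dD.fun_div (hasDerivAt_pow 2 t) (by positivity), ?_⟩
    have hB := almB_nonneg u v x₀ t
    have h1 := hE t ht
    rw [← mul_div_assoc, ← mul_div_assoc, div_le_div_iff₀ (by positivity) (by positivity)]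
    have e2 : t * (D * t ^ 2 - almH u v x₀ t * (↑2 * t ^ (2 - 1))) =
        (t * D - 2 * almH u v x₀ t) * t ^ 2 := by norm_num; ring
    push_cast
    push_cast at e2
    rw [e2, e]
    have : 2 * d * almH u v x₀ t ≤ 2 * (almE u v x₀ t + almB u v x₀ t) - 2 * almH u v x₀ t := by
      linarith
    calc _ = (2 * d * almH u v x₀ t) * (t ^ 2 * t ^ 2) := by ring
      _ ≤ _ := mul_le_mul_of_nonneg_right this (by positivity)
      _ = _ := by ring
  have hm1 : MonotoneOn (fun t => almH u v x₀ t / t ^ 2) (Ici r) := by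
    refine monotoneOn_of_deriv_nonneg (convex_Ici _) (fun t ht => ?_) (fun t ht => ?_)
      (fun t ht => ?_)
    · obtain ⟨D, hD, -⟩ := key t ht
      exact hD.continuousAt.continuousWithinAt
    · obtain ⟨D, hD, -⟩ := key t (interior_subset ht)
      exact hD.differentiableAt.differentiableWithinAt
    · have ht' : r ≤ t := interior_subset ht
      have ht0 := lt_of_lt_of_le hr ht'
      obtain ⟨D, hD, h2⟩ := key t ht'
      rw [hD.deriv]
      refine nonneg_of_mul_nonneg_right (a := t) (le_trans ?_ h2) ht0
      have := (hH ht0).le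
      positivity
  set q := 2 * d * (almH u v x₀ r / r ^ 2) with hq
  have hq0 : 0 < q := by have := hH hr; positivity
  have hm2 : MonotoneOn (fun t => almH u v x₀ t / t ^ 2 - q * Real.log t) (Ici r) := by
    have key2 : ∀ t, r ≤ t → ∃ D, HasDerivAt (fun t => almH u v x₀ t / t ^ 2 - q * Real.log t) D t
        ∧ 0 ≤ D := fun t ht => by
      have ht0 := lt_of_lt_of_le hr ht
      obtain ⟨D, hD, h2⟩ := key t ht
      refine ⟨_, hD.fun_sub ((Real.hasDerivAt_log ht0.ne').const_mul q), ?_⟩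
      have h3 : q ≤ t * D := le_trans (by
        rw [hq]; exact mul_le_mul_of_nonneg_left (hm1 (mem_Ici.2 le_rfl) ht ht) (by positivity)) h2
      rw [sub_nonneg, ← div_eq_mul_inv, div_le_iff₀ ht0]; linarith
    refine monotoneOn_of_deriv_nonneg (convex_Ici _) (fun t ht => ?_) (fun t ht => ?_)
      (fun t ht => ?_)
    · obtain ⟨D, hD, -⟩ := key2 t ht
      exact hD.continuousAt.continuousWithinAt
    · obtain ⟨D, hD, -⟩ := key2 t (interior_subset ht)
      exact hD.differentiableAt.differentiableWithinAt
    · obtain ⟨D, hD, h2⟩ := key2 t (interior_subset ht)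
      rw [hD.deriv]; exact h2
  obtain ⟨C, hC⟩ := almH_growth h x₀
  have hb : ∀ t, max r 1 ≤ t → q * Real.log t ≤ |C| * 4 + q * Real.log r := fun t ht => by
    have hrt := (le_max_left _ _).trans ht
    have h1t := (le_max_right _ _).trans ht
    have h1 := hm2 (mem_Ici.2 le_rfl) hrt hrt
    simp only at h1
    have h2 : almH u v x₀ t / t ^ 2 ≤ |C| * 4 := by
      rw [div_le_iff₀ (by positivity)]
      calc almH u v x₀ t ≤ C * (1 + t) ^ 2 := hC t (by linarith)
        _ ≤ |C| * (2 * t) ^ 2 := by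
          gcongr
          · exact le_abs_self C
          · linarith
        _ = _ := by ring
    have h3 : 0 ≤ almH u v x₀ r / r ^ 2 := by have := hH hr; positivity
    linarith
  have hlim := Real.tendsto_log_atTop.const_mul_atTop hq0
  obtain ⟨t, ht1, ht2⟩ := ((hlim.eventually_gt_atTop (|C| * 4 + q * Real.log r)).and
    (Filter.eventually_ge_atTop (max r 1))).exists
  exact absurd (hb t ht2) (not_le.2 ht1)

/-- Almost monotonicity of the normalised height `H/r²`: the function `log (H/r²) - E/H` is
nonincreasing and `0 ≤ E/H ≤ 1`. -/
lemma almH_ratio {u v : Euc n → ℝ} (h : IsSol u v) (x₀ : Euc n) {r s : ℝ} (hr : 0 < r)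
    (hrs : r ≤ s) : almH u v x₀ s * r ^ 2 ≤ Real.exp 1 * (s ^ 2 * almH u v x₀ r) := by
  have hH := fun {t : ℝ} (ht : 0 < t) => almH_pos' h x₀ ht.le
  have hs := lt_of_lt_of_le hr hrs
  have key : ∀ t, 0 < t → ∃ D, HasDerivAt (fun t => Real.log (almH u v x₀ t) - 2 * Real.log t -
      almE u v x₀ t / almH u v x₀ t) D t ∧ D ≤ 0 := fun t ht => by
    obtain ⟨D₁, d₁, e₁, -⟩ := almH_deriv h x₀ t
    obtain ⟨D₂, d₂, e₂⟩ := almN_deriv h x₀ ht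
    refine ⟨_, ((d₁.log (hH ht).ne').fun_sub ((Real.hasDerivAt_log ht.ne').const_mul 2)).fun_sub d₂,
      ?_⟩
    have h1 := almN_le_one h x₀ ht
    refine nonpos_of_mul_nonpos_right (a := t) ?_ ht
    have e3 : t * (D₁ / almH u v x₀ t - 2 * t⁻¹ - D₂) =
        (t * D₁) / almH u v x₀ t - 2 - t * D₂ := by field_simp
    rw [e3, e₁]
    have : 2 * (almE u v x₀ t + almB u v x₀ t) / almH u v x₀ t - 2 -
        2 * almB u v x₀ t / almH u v x₀ t ≤ 0 := by
      have h2 : 2 * (almE u v x₀ t + almB u v x₀ t) / almH u v x₀ t - 2 -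
        2 * almB u v x₀ t / almH u v x₀ t = 2 * (almE u v x₀ t / almH u v x₀ t - 1) := by ring
      rw [h2]
      have := (div_le_one (hH ht)).2 h1
      linarith
    linarith
  have hm : AntitoneOn (fun t => Real.log (almH u v x₀ t) - 2 * Real.log t -
      almE u v x₀ t / almH u v x₀ t) (Ioi 0) := by
    refine antitoneOn_of_deriv_nonpos (convex_Ioi _) (fun t ht => ?_) (fun t ht => ?_)
      (fun t ht => ?_)
    · obtain ⟨D, hD, -⟩ := key t ht
      exact hD.continuousAt.continuousWithinAt
    · obtain ⟨D, hD, -⟩ := key t (interior_subset ht)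
      exact hD.differentiableAt.differentiableWithinAt
    · obtain ⟨D, hD, h2⟩ := key t (interior_subset ht)
      rw [hD.deriv]; exact h2
  have h1 := hm hr hs hrs
  simp only at h1
  have h2 := (div_le_one (hH hs)).2 (almN_le_one h x₀ hs)
  have h3 : 0 ≤ almE u v x₀ r / almH u v x₀ r := div_nonneg (almE_nonneg _ _ _ _) (hH hr).le
  have h4 : Real.log (almH u v x₀ s * r ^ 2) ≤ Real.log (Real.exp 1 * (s ^ 2 * almH u v x₀ r)) := by
    rw [Real.log_mul (hH hs).ne' (by positivity), Real.log_mul (by positivity)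
      (mul_pos (by positivity) (hH hr)).ne', Real.log_mul (by positivity) (hH hr).ne', Real.log_exp,
      Real.log_pow, Real.log_pow]
    push_cast
    linarith
  have := hH hr
  have := hH hs
  exact (Real.log_le_log_iff (by positivity) (by positivity)).1 h4

end Almgren

/-! ### Nondegeneracy of normalised solutions -/

section Core
variable {n : ℕ}

lemma subharm_mono {f : Euc n → ℝ} (hf : f.HasTemperateGrowth) (hl : ∀ x, 0 ≤ lap f x)
    (x₀ : Euc n) {r s : ℝ} (hr : 0 ≤ r) (hrs : r ≤ s) :
    ∫ y, f (x₀ + r • y) ∂(gam n) ≤ ∫ y, f (x₀ + s • y) ∂(gam n) := by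
  have hm : MonotoneOn (fun r : ℝ => ∫ y, f (x₀ + r • y) ∂(gam n)) (Ici 0) := by
    refine monotoneOn_of_deriv_nonneg (convex_Ici _) (fun t ht => ?_) (fun t ht => ?_)
      (fun t ht => ?_)
    · exact (hasDerivAt_scale_lap hf x₀ t).continuousAt.continuousWithinAt
    · exact (hasDerivAt_scale_lap hf x₀ t).differentiableAt.differentiableWithinAt
    · rw [(hasDerivAt_scale_lap hf x₀ t).deriv]
      rw [interior_Ici] at ht
      exact mul_nonneg (le_of_lt ht) (integral_nonneg fun y => hl _)
  exact hm (mem_Ici.2 hr) (mem_Ici.2 (hr.trans hrs)) hrs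

lemma subharm_le {f : Euc n → ℝ} (hf : f.HasTemperateGrowth) (hl : ∀ x, 0 ≤ lap f x)
    (x₀ : Euc n) {r : ℝ} (hr : 0 ≤ r) : f x₀ ≤ ∫ y, f (x₀ + r • y) ∂(gam n) := by
  have := subharm_mono hf hl x₀ le_rfl hr
  simpa using this

lemma integral_mul_le {f g : Euc n → ℝ} (hf : f.HasTemperateGrowth) (hg : g.HasTemperateGrowth)
    {a b : ℝ} (ha : ∫ y, f y ^ 2 ∂(gam n) ≤ a ^ 2) (hb : ∫ y, g y ^ 2 ∂(gam n) ≤ b ^ 2)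
    (ha0 : 0 ≤ a) (hb0 : 0 ≤ b) : ∫ y, f y * g y ∂(gam n) ≤ a * b := by
  have h := integral_cauchy_schwarz (μ := gam n) (f := f) (g := g) (TG.integrable (by fun_prop))
    (TG.integrable (by fun_prop)) (TG.integrable (by fun_prop))
  refine le_of_sq_le_sq ?_ (mul_nonneg ha0 hb0)
  rw [mul_pow]
  exact h.trans (mul_le_mul ha hb (integral_nonneg fun _ => sq_nonneg _) (sq_nonneg _))

/-- The constant `1 + ∫ |y|⁴ dγ`. -/
noncomputable def mom4 (n : ℕ) : ℝ := 1 + ∫ y : Euc n, ‖y‖ ^ 4 ∂(gam n)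

lemma one_le_mom4 : 1 ≤ mom4 n := by
  have : 0 ≤ ∫ y : Euc n, ‖y‖ ^ 4 ∂(gam n) := integral_nonneg fun _ => by positivity
  unfold mom4; linarith

lemma IsSol.lap_sq_v {u v : Euc n → ℝ} (h : IsSol u v) (x : Euc n) :
    2 * (u x ^ 2 * v x ^ 2) ≤ lap (fun y => v y ^ 2) x := by
  rw [lap_sq h.tv, h.ev]
  have : 0 ≤ ∑ i, pd i v x ^ 2 := Finset.sum_nonneg fun i _ => sq_nonneg _
  nlinarith

/-- If `∫ v²` is close to `v(x₀)²`, then `h = u(x₀) = v(x₀)` is small: `uv` is small at some scale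
in `(1/2, 1)`, where `v ≈ h` while `∫ u ≥ h`. -/
lemma core_h {u v : Euc n → ℝ} (h : IsSol u v) (x₀ : Euc n) (h0 : u x₀ = v x₀)
    (hH : almH u v x₀ 1 = 1) {t : ℝ} (ht : 0 < t)
    (hv : ∫ y, v (x₀ + (1 : ℝ) • y) ^ 2 ∂(gam n) ≤ v x₀ ^ 2 + t ^ 4) :
    v x₀ ^ 2 ≤ 3 * t ^ 2 := by
  have tu := h.tu
  have tv := h.tv
  have tv2 : Function.HasTemperateGrowth (fun y => v y ^ 2) := by fun_prop
  have hlap : ∀ x, 0 ≤ lap (fun y => v y ^ 2) x := fun x =>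
    le_trans (by positivity) (h.lap_sq_v x)
  have hlv : ∀ x, 0 ≤ lap v x := fun x => by rw [h.ev]; have := (h.pv x).le; positivity
  have hlu : ∀ x, 0 ≤ lap u x := fun x => by rw [h.eu]; have := (h.pu x).le; positivity
  have hd := hasDerivAt_scale_lap tv2 x₀
  obtain ⟨r, ⟨hr1, hr2⟩, hr⟩ := exists_deriv_eq_slope
    (fun r : ℝ => ∫ y, v (x₀ + r • y) ^ 2 ∂(gam n)) (a := 1 / 2) (b := 1) (by norm_num)
    (fun s _ => (hd s).continuousAt.continuousWithinAt)
    (fun s _ => (hd s).differentiableAt.differentiableWithinAt)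
  rw [(hd r).deriv] at hr
  have hr0 : 0 ≤ r := by linarith
  have hhalf := subharm_le tv2 hlap x₀ (r := 1 / 2) (by norm_num)
  have h1 : r * ∫ y, lap (fun y => v y ^ 2) (x₀ + r • y) ∂(gam n) ≤ 2 * t ^ 4 := by
    rw [hr]; norm_num at hv hhalf ⊢; linarith
  have h2 : 2 * ∫ y, u (x₀ + r • y) ^ 2 * v (x₀ + r • y) ^ 2 ∂(gam n) ≤
      ∫ y, lap (fun y => v y ^ 2) (x₀ + r • y) ∂(gam n) := by
    rw [← integral_const_mul]
    exact integral_mono (TG.integrable (by fun_prop)) (TG.integrable (by fun_prop))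
      fun y => h.lap_sq_v _
  set X := ∫ y, u (x₀ + r • y) ^ 2 * v (x₀ + r • y) ^ 2 ∂(gam n) with hX
  have hX0 : 0 ≤ X := integral_nonneg fun y => by positivity
  have h3 : X ≤ 2 * t ^ 4 := by nlinarith
  have hvr : ∫ y, v (x₀ + r • y) ^ 2 ∂(gam n) ≤ v x₀ ^ 2 + t ^ 4 :=
    (subharm_mono tv2 hlap x₀ hr0 hr2.le).trans hv
  have hVr : v x₀ ≤ ∫ y, v (x₀ + r • y) ∂(gam n) := subharm_le tv hlv x₀ hr0
  have hUr : v x₀ ≤ ∫ y, u (x₀ + r • y) ∂(gam n) := h0 ▸ subharm_le tu hlu x₀ hr0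
  have hdev : ∫ y, (v x₀ - v (x₀ + r • y)) ^ 2 ∂(gam n) ≤ (t ^ 2) ^ 2 := by
    have e : ∫ y, (v x₀ - v (x₀ + r • y)) ^ 2 ∂(gam n) = v x₀ ^ 2 -
        2 * v x₀ * (∫ y, v (x₀ + r • y) ∂(gam n)) + ∫ y, v (x₀ + r • y) ^ 2 ∂(gam n) := by
      have e0 : v x₀ ^ 2 = ∫ _ : Euc n, v x₀ ^ 2 ∂(gam n) := by simp
      rw [← integral_const_mul, e0, ← integral_sub (TG.integrable (by fun_prop))
        (TG.integrable (by fun_prop)), ← integral_add (TG.integrable (by fun_prop))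
        (TG.integrable (by fun_prop))]
      congr 1; funext y; ring
    rw [e]
    nlinarith [h.pv x₀]
  have hu1 : ∫ y, u (x₀ + r • y) ^ 2 ∂(gam n) ≤ 1 ^ 2 := by
    have hm := almH_mono h x₀ hr0 hr2.le
    rw [hH] at hm
    refine le_trans ?_ (hm.trans (by norm_num))
    exact integral_mono (TG.integrable (by fun_prop)) (TG.integrable (by fun_prop))
      fun y => by simp only; nlinarith [sq_nonneg (v (x₀ + r • y))]
  have hA : ∫ y, (u (x₀ + r • y) * v (x₀ + r • y)) * 1 ∂(gam n) ≤ (2 * t ^ 2) * 1 := by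
    refine integral_mul_le (f := fun y => u (x₀ + r • y) * v (x₀ + r • y)) (g := fun _ => 1)
      (by fun_prop) (by fun_prop) ?_ (by simp) (by positivity) (by norm_num)
    simp_rw [mul_pow]
    rw [← hX]; nlinarith [sq_nonneg (t ^ 2)]
  have hB := integral_mul_le (f := fun y => u (x₀ + r • y)) (g := fun y => v x₀ - v (x₀ + r • y))
    (by fun_prop) (by fun_prop) hu1 hdev (by norm_num) (by positivity)
  have hC : v x₀ * ∫ y, u (x₀ + r • y) ∂(gam n) ≤ 3 * t ^ 2 := by
    have e : v x₀ * ∫ y, u (x₀ + r • y) ∂(gam n) =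
        (∫ y, (u (x₀ + r • y) * v (x₀ + r • y)) * 1 ∂(gam n)) +
        ∫ y, u (x₀ + r • y) * (v x₀ - v (x₀ + r • y)) ∂(gam n) := by
      rw [← integral_const_mul, ← integral_add (TG.integrable (by fun_prop))
        (TG.integrable (by fun_prop))]
      congr 1; funext y; ring
    rw [e]; linarith
  calc v x₀ ^ 2 = v x₀ * v x₀ := by ring
    _ ≤ v x₀ * ∫ y, u (x₀ + r • y) ∂(gam n) := mul_le_mul_of_nonneg_left hUr (h.pv x₀).le
    _ ≤ _ := hC

/-- Likewise the mean of `u` exceeds `u(x₀)` only slightly: `uv² ≤ t²v²/2 + u²v²/(2t²)`,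
and the last term is controlled by `Δ(v²) ≥ 2u²v²`. -/
lemma core_u {u v : Euc n → ℝ} (h : IsSol u v) (x₀ : Euc n)
    (hH : almH u v x₀ 1 = 1) {t : ℝ} (ht : 0 < t)
    (hv : ∫ y, v (x₀ + (1 : ℝ) • y) ^ 2 ∂(gam n) ≤ v x₀ ^ 2 + t ^ 4) :
    ∫ y, u (x₀ + (1 : ℝ) • y) ∂(gam n) ≤ u x₀ + t ^ 2 := by
  have tu := h.tu
  have tv := h.tv
  have tv2 : Function.HasTemperateGrowth (fun y => v y ^ 2) := by fun_prop
  have hm : AntitoneOn (fun r : ℝ => (∫ y, u (x₀ + r • y) ∂(gam n)) - t ^ 2 * r ^ 2 / 4 -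
      (4 * t ^ 2)⁻¹ * ∫ y, v (x₀ + r • y) ^ 2 ∂(gam n)) (Icc 0 1) := by
    have key : ∀ r : ℝ, HasDerivAt (fun r : ℝ => (∫ y, u (x₀ + r • y) ∂(gam n)) -
      t ^ 2 * r ^ 2 / 4 - (4 * t ^ 2)⁻¹ * ∫ y, v (x₀ + r • y) ^ 2 ∂(gam n))
      (r * (∫ y, lap u (x₀ + r • y) ∂(gam n)) - t ^ 2 * (2 * r) / 4 -
        (4 * t ^ 2)⁻¹ * (r * ∫ y, lap (fun y => v y ^ 2) (x₀ + r • y) ∂(gam n))) r := fun r => by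
      have h3 : HasDerivAt (fun r : ℝ => r ^ 2) (2 * r) r := by simpa using hasDerivAt_pow 2 r
      exact ((hasDerivAt_scale_lap tu x₀ r).fun_sub ((h3.const_mul (t ^ 2)).div_const 4)).fun_sub
        ((hasDerivAt_scale_lap tv2 x₀ r).const_mul _)
    refine antitoneOn_of_deriv_nonpos (convex_Icc _ _)
      (fun r _ => (key r).continuousAt.continuousWithinAt)
      (fun r _ => (key r).differentiableAt.differentiableWithinAt) (fun r hr => ?_)
    rw [(key r).deriv]
    rw [interior_Icc] at hr
    have hv1 : ∫ y, v (x₀ + r • y) ^ 2 ∂(gam n) ≤ 1 := by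
      have hm := almH_mono h x₀ hr.1.le hr.2.le
      rw [hH] at hm
      refine le_trans ?_ hm
      exact integral_mono (TG.integrable (by fun_prop)) (TG.integrable (by fun_prop))
        fun y => by simp only; nlinarith [sq_nonneg (u (x₀ + r • y))]
    have h1 : ∫ y, lap u (x₀ + r • y) ∂(gam n) ≤
        t ^ 2 / 2 * (∫ y, v (x₀ + r • y) ^ 2 ∂(gam n)) +
        (4 * t ^ 2)⁻¹ * ∫ y, lap (fun y => v y ^ 2) (x₀ + r • y) ∂(gam n) := by
      rw [← integral_const_mul, ← integral_const_mul, ← integral_add (TG.integrable (by fun_prop))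
        (TG.integrable (by fun_prop))]
      refine integral_mono (TG.integrable (by fun_prop)) (TG.integrable (by fun_prop)) fun y => ?_
      simp only
      rw [h.eu]
      have h2 := mul_le_mul_of_nonneg_left (h.lap_sq_v (x₀ + r • y))
        (by positivity : 0 ≤ (4 * t ^ 2)⁻¹)
      refine le_trans ?_ (add_le_add_right h2 _)
      have e : t ^ 2 / 2 * v (x₀ + r • y) ^ 2 + (4 * t ^ 2)⁻¹ *
          (2 * (u (x₀ + r • y) ^ 2 * v (x₀ + r • y) ^ 2)) - u (x₀ + r • y) * v (x₀ + r • y) ^ 2 =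
          (t - t⁻¹ * u (x₀ + r • y)) ^ 2 * v (x₀ + r • y) ^ 2 / 2 := by
        field_simp; ring
      have : 0 ≤ (t - t⁻¹ * u (x₀ + r • y)) ^ 2 * v (x₀ + r • y) ^ 2 / 2 := by positivity
      linarith
    have h2 : ∫ y, lap u (x₀ + r • y) ∂(gam n) ≤ t ^ 2 / 2 + (4 * t ^ 2)⁻¹ *
        ∫ y, lap (fun y => v y ^ 2) (x₀ + r • y) ∂(gam n) :=
      h1.trans (by gcongr; nlinarith [sq_nonneg t])
    have h3 := mul_le_mul_of_nonneg_left h2 hr.1.le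
    linarith
  have h1 := hm (by simp : (0 : ℝ) ∈ Icc (0 : ℝ) 1) (by simp : (1 : ℝ) ∈ Icc (0 : ℝ) 1) zero_le_one
  simp only [zero_smul, add_zero, integral_const, probReal_univ, smul_eq_mul, one_mul] at h1
  have h2 : (4 * t ^ 2)⁻¹ * ∫ y, v (x₀ + (1 : ℝ) • y) ^ 2 ∂(gam n) ≤
      (4 * t ^ 2)⁻¹ * v x₀ ^ 2 + t ^ 2 / 4 := by
    refine (mul_le_mul_of_nonneg_left hv (by positivity)).trans (le_of_eq ?_)
    field_simp
  nlinarith [sq_nonneg t]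

/-- A normalised solution with `u(x₀) = v(x₀)` cannot have `∫ v²` too close to `v(x₀)²`: otherwise
`u` carries almost the whole height, while its mean and its first moments are small, so that the
second order Poincaré inequality contradicts `E ≤ H`. -/
lemma core_lower {u v : Euc n → ℝ} (h : IsSol u v) (x₀ : Euc n) (h0 : u x₀ = v x₀)
    (hH : almH u v x₀ 1 = 1) {t : ℝ} (ht : 0 < t) (ht1 : t ≤ 1)
    (hv : ∫ y, v (x₀ + (1 : ℝ) • y) ^ 2 ∂(gam n) ≤ v x₀ ^ 2 + t ^ 4) :
    1 ≤ t * (29 * mom4 n) := by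
  have tu := h.tu
  have tv := h.tv
  have hh := core_h h x₀ h0 hH ht hv
  have hU := core_u h x₀ hH ht hv
  have hh2 : v x₀ ≤ 2 * t := by nlinarith [h.pv x₀]
  rw [h0] at hU
  set f : Euc n → ℝ := fun y => u (x₀ + (1 : ℝ) • y) with hf
  have tf : f.HasTemperateGrowth := by fun_prop
  have hP := gaussian_poincare_two tf
  have hE := almN_le_one h x₀ (r := 1) one_pos
  rw [hH] at hE
  have hgrad : ∫ y, ∑ i, pd i f y ^ 2 ∂(gam n) ≤ 1 := by
    refine le_trans ?_ hE
    refine integral_mono (TG.integrable (by fun_prop)) (TG.integrable (by fun_prop)) fun y => ?_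
    have : ∀ i, pd i f y = pd i u (x₀ + (1 : ℝ) • y) := fun i => by
      rw [hf, pd_scale (TG.diff tu), one_mul]
    simp_rw [this]
    have h3 : 0 ≤ ∑ i, pd i v (x₀ + (1 : ℝ) • y) ^ 2 := Finset.sum_nonneg fun i _ => sq_nonneg _
    have h4 : 0 ≤ u (x₀ + (1 : ℝ) • y) ^ 2 * v (x₀ + (1 : ℝ) • y) ^ 2 := by positivity
    simp only [one_pow, one_mul]
    linarith
  have hsum : (∫ y, f y ^ 2 ∂(gam n)) + ∫ y, v (x₀ + (1 : ℝ) • y) ^ 2 ∂(gam n) = 1 := by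
    refine Eq.trans ?_ hH
    unfold almH
    rw [← integral_add (TG.integrable (by fun_prop)) (TG.integrable (by fun_prop))]
  have hf0 : ∀ y, 0 ≤ f y := fun y => (h.pu _).le
  have hfi : 0 ≤ ∫ y, f y ∂(gam n) := integral_nonneg hf0
  have hfle : ∫ y, f y ∂(gam n) ≤ 3 * t := by nlinarith
  have hv2 : ∫ y, v (x₀ + (1 : ℝ) • y) ^ 2 ∂(gam n) ≤ 4 * t := by
    have : t ^ 4 ≤ t := by
      calc t ^ 4 ≤ t ^ 1 := pow_le_pow_of_le_one ht.le ht1 (by norm_num)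
        _ = t := pow_one t
    nlinarith
  -- the first moments are small because `f ≥ 0` has small mean and bounded second moment
  have hfirst : ∀ i, (∫ y, pd i f y ∂(gam n)) ^ 2 ≤
      (∫ y, f y ∂(gam n)) * ∫ y, y i ^ 2 * f y ∂(gam n) := fun i => by
    rw [gam_ibp tf i]
    set P := ∫ y, y i * f y ∂(gam n)
    have hq : ∀ s : ℝ, 0 ≤ (∫ y, f y ∂(gam n)) * (s * s) + (-2 * P) * s +
        ∫ y, y i ^ 2 * f y ∂(gam n) := fun s => by
      have e : ∀ X : ℝ, X * (s * s) + (-2 * P) * s + ∫ y, y i ^ 2 * f y ∂(gam n) =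
        (s * s) * X + (-2 * s) * P + ∫ y, y i ^ 2 * f y ∂(gam n) := fun X => by ring
      rw [e, ← integral_const_mul, ← integral_const_mul,
        ← integral_add (TG.integrable (by fun_prop)) (TG.integrable (by fun_prop)),
        ← integral_add (TG.integrable (by fun_prop)) (TG.integrable (by fun_prop))]
      refine integral_nonneg fun y => ?_
      have e2 : s * s * f y + -2 * s * (y i * f y) + y i ^ 2 * f y = (s - y i) ^ 2 * f y := by ring
      simp only
      rw [e2]
      exact mul_nonneg (sq_nonneg _) (hf0 y)
    have := discrim_le_zero hq
    unfold discrim at this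
    linarith
  have hsec : ∑ i, ∫ y, y i ^ 2 * f y ∂(gam n) ≤ mom4 n := by
    rw [← integral_finsetSum _ (fun i _ => TG.integrable (by fun_prop))]
    have hi4 : Integrable (fun y : Euc n => ‖y‖ ^ 4) (gam n) := by
      have : Function.HasTemperateGrowth (fun y : Euc n => (‖y‖ ^ 2) ^ 2) := by fun_prop
      refine (TG.integrable this).congr (Filter.Eventually.of_forall fun y => ?_)
      simp only; ring
    have h5 : ∫ y, ∑ i, y i ^ 2 * f y ∂(gam n) ≤ ∫ y, (‖y‖ ^ 4 + f y ^ 2) ∂(gam n) := by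
      refine integral_mono (TG.integrable (by fun_prop))
        (hi4.add (TG.integrable (by fun_prop))) fun y => ?_
      simp only
      rw [← Finset.sum_mul, ← EuclideanSpace.real_norm_sq_eq]
      nlinarith [sq_nonneg (‖y‖ ^ 2 - f y), hf0 y, sq_nonneg (‖y‖ ^ 2), sq_nonneg (f y)]
    rw [integral_add hi4 (TG.integrable (by fun_prop))] at h5
    have h6 : 0 ≤ ∫ y, v (x₀ + (1 : ℝ) • y) ^ 2 ∂(gam n) := integral_nonneg fun y => sq_nonneg _
    unfold mom4; linarith
  have hS : ∑ i, (∫ y, pd i f y ∂(gam n)) ^ 2 ≤ 3 * t * mom4 n := by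
    calc ∑ i, (∫ y, pd i f y ∂(gam n)) ^ 2 ≤
        ∑ i, (∫ y, f y ∂(gam n)) * ∫ y, y i ^ 2 * f y ∂(gam n) :=
          Finset.sum_le_sum fun i _ => hfirst i
      _ = (∫ y, f y ∂(gam n)) * ∑ i, ∫ y, y i ^ 2 * f y ∂(gam n) := by rw [Finset.mul_sum]
      _ ≤ 3 * t * mom4 n := by
        refine mul_le_mul hfle hsec (Finset.sum_nonneg fun i _ => integral_nonneg fun y =>
          mul_nonneg (sq_nonneg _) (hf0 y)) (by positivity)
  have hK := one_le_mom4 (n := n)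
  nlinarith [mul_nonneg ht.le (sub_nonneg.2 hK)]

end Core

section Core
variable {n : ℕ}

/-- Nondegeneracy: for a normalised solution, any majorant of `v - v(x₀)` has Gaussian `L²` norm
bounded below by a dimensional constant. -/
lemma core_one (n : ℕ) : ∃ τ : ℝ, 0 < τ ∧ τ ≤ 1 ∧ ∀ (u v g : Euc n → ℝ) (x₀ : Euc n), IsSol u v →
    u x₀ = v x₀ → almH u v x₀ 1 = 1 → g.HasTemperateGrowth →
    (∀ y, v (x₀ + (1 : ℝ) • y) ≤ v x₀ + g y) → τ ^ 2 < ∫ y, g y ^ 2 ∂(gam n) := by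
  have hK := one_le_mom4 (n := n)
  set t : ℝ := 1 / (58 * mom4 n) with ht
  have ht0 : 0 < t := by positivity
  have ht1 : t ≤ 1 := by
    rw [ht, div_le_one (by positivity)]; linarith
  have ht4 : t ^ 4 ≤ 1 := pow_le_one₀ ht0.le ht1
  refine ⟨t ^ 4 / 3, by positivity, by linarith, fun u v g x₀ h h0 hH tg hg => ?_⟩
  by_contra hcon
  push Not at hcon
  have tv := h.tv
  have hh : v x₀ ≤ 1 := by
    have := almH_pos h x₀ (r := 1) zero_le_one
    rw [hH, h0] at this
    nlinarith [h.pv x₀]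
  have hgm : ∫ y, g y * 1 ∂(gam n) ≤ (t ^ 4 / 3) * 1 :=
    integral_mul_le tg (g := fun _ => 1) (by fun_prop) hcon (by simp) (by positivity) (by norm_num)
  simp only [mul_one] at hgm
  have h1 : ∫ y, v (x₀ + (1 : ℝ) • y) ^ 2 ∂(gam n) ≤ v x₀ ^ 2 + t ^ 4 := by
    have e0 : v x₀ ^ 2 = ∫ _ : Euc n, v x₀ ^ 2 ∂(gam n) := by simp
    have h2 : ∫ y, v (x₀ + (1 : ℝ) • y) ^ 2 ∂(gam n) ≤ v x₀ ^ 2 +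
        2 * v x₀ * (∫ y, g y ∂(gam n)) + ∫ y, g y ^ 2 ∂(gam n) := by
      rw [← integral_const_mul, e0, ← integral_add (TG.integrable (by fun_prop))
        (TG.integrable (by fun_prop)), ← integral_add (TG.integrable (by fun_prop))
        (TG.integrable (by fun_prop))]
      refine integral_mono (TG.integrable (by fun_prop)) (TG.integrable (by fun_prop)) fun y => ?_
      have := hg y
      have := h.pv (x₀ + (1 : ℝ) • y)
      simp only
      nlinarith
    have h3 : 2 * v x₀ * (∫ y, g y ∂(gam n)) ≤ 2 * (t ^ 4 / 3) := by
      have := h.pv x₀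
      have hp : (0 : ℝ) ≤ t ^ 4 / 3 := by positivity
      calc 2 * v x₀ * (∫ y, g y ∂(gam n)) ≤ 2 * v x₀ * (t ^ 4 / 3) := by gcongr
        _ ≤ 2 * 1 * (t ^ 4 / 3) := by gcongr
        _ = _ := by ring
    have h4 : (t ^ 4 / 3) ^ 2 ≤ t ^ 4 / 3 := by
      have : 0 ≤ t ^ 4 := by positivity
      nlinarith
    linarith
  have h5 := core_lower h x₀ h0 hH ht0 ht1 h1
  have : t * (29 * mom4 n) = 1 / 2 := by rw [ht]; field_simp; norm_num
  linarith

end Core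

section Apply
variable {n : ℕ}

/-- `∫ (|y|² - n)² dγ`. -/
noncomputable def momC (n : ℕ) : ℝ := ∫ y : Euc n, (‖y‖ ^ 2 - n) ^ 2 ∂(gam n)

lemma momC_nonneg : 0 ≤ momC n := integral_nonneg fun _ => sq_nonneg _

/-- `∫ (1 + |y|)² dγ`. -/
noncomputable def momP (n : ℕ) : ℝ := ∫ y : Euc n, (1 + ‖y‖) ^ 2 ∂(gam n)

lemma momP_nonneg : 0 ≤ momP n := integral_nonneg fun _ => sq_nonneg _

/-- The difference of `u` and the quadratic barrier `α + ⟨β, x - x₀⟩ + κ|x - x₀|²`. -/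
noncomputable def aboveB (u : Euc n → ℝ) (x₀ : Euc n) (α : ℝ) (β : Euc n) (κ : ℝ) (x : Euc n) : ℝ :=
  u x - (α + ⟪β, x - x₀⟫ + κ * ‖x - x₀‖ ^ 2)

lemma TG_norm_sub_sq (x₀ : Euc n) :
    (fun x : Euc n => ‖x - x₀‖ ^ 2).HasTemperateGrowth := by
  have e : (fun x : Euc n => ‖x - x₀‖ ^ 2) =
      fun x => ‖x‖ ^ 2 - 2 * ⟪x, x₀⟫ + ‖x₀‖ ^ 2 := by
    funext x; exact norm_sub_sq_real x x₀
  rw [e]; fun_prop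

lemma TG_aboveB {u : Euc n → ℝ} (tu : u.HasTemperateGrowth) (x₀ : Euc n) (α : ℝ) (β : Euc n)
    (κ : ℝ) : (aboveB u x₀ α β κ).HasTemperateGrowth := by
  have h1 := TG_norm_sub_sq x₀
  have h2 : (fun x : Euc n => α + ⟪β, x - x₀⟫).HasTemperateGrowth := by fun_prop
  have h3 : (fun _ : Euc n => κ).HasTemperateGrowth := by fun_prop
  exact tu.sub (h2.add (h3.mul h1))

lemma lap_aboveB {u : Euc n → ℝ} (tu : u.HasTemperateGrowth) (hl : ∀ x, 0 ≤ lap u x)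
    (x₀ : Euc n) (α : ℝ) (β : Euc n) (κ : ℝ) (x : Euc n) :
    -(2 * (n * κ)) ≤ lap (aboveB u x₀ α β κ) x := by
  have c2 : ∀ {f : Euc n → ℝ}, f.HasTemperateGrowth → ContDiff ℝ 2 f := fun hf =>
    contDiff_infty.1 (TG.contDiff hf) 2
  have h1 : lap (fun x : Euc n => α + ⟪β, x - x₀⟫) x = 0 := by
    rw [lap_eq]
    refine Finset.sum_eq_zero fun i _ => ?_
    have : pd i (fun x : Euc n => α + ⟪β, x - x₀⟫) = fun _ => ⟪β, EuclideanSpace.single i 1⟫ := by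
      funext z
      have hh : HasFDerivAt (fun x : Euc n => α + ⟪β, x - x₀⟫) (innerSL ℝ β) z := by
        have := ((innerSL ℝ β).hasFDerivAt.comp z ((hasFDerivAt_id z).sub_const x₀)).const_add α
        simpa using this
      unfold pd
      rw [hh.fderiv]; simp
    rw [this, pd_const]
  have h2 : lap (fun x : Euc n => ‖x - x₀‖ ^ 2) x = 2 * n := by
    have := lap_scale (f := fun z : Euc n => ‖z‖ ^ 2) (c2 (by fun_prop)) (-x₀) 1 x
    simp only [one_smul, one_pow, one_mul] at this
    rw [lap_norm_sq] at this
    rw [← this]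
    congr 1; funext z
    rw [neg_add_eq_sub]
  have h3 : lap (aboveB u x₀ α β κ) x = lap u x - (0 + κ * (2 * n)) := by
    unfold aboveB
    have t1 := TG_norm_sub_sq x₀
    have t2 : (fun x : Euc n => α + ⟪β, x - x₀⟫).HasTemperateGrowth := by fun_prop
    have t3 : (fun _ : Euc n => κ).HasTemperateGrowth := by fun_prop
    have t4 : (fun x : Euc n => κ * ‖x - x₀‖ ^ 2).HasTemperateGrowth := t3.mul t1
    have t5 : (fun x : Euc n => α + ⟪β, x - x₀⟫ + κ * ‖x - x₀‖ ^ 2).HasTemperateGrowth := t2.add t4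
    rw [lap_sub (c2 tu) (c2 t5), lap_add (c2 t2) (c2 t4), h1,
      lap_const_mul (c2 t1), h2]
  rw [h3]
  linarith [hl x]

lemma aboveB_shift (u : Euc n → ℝ) (x₀ : Euc n) (α : ℝ) (β : Euc n) (κ r : ℝ) (y : Euc n) :
    aboveB u x₀ α β κ (x₀ + r • y) + n * κ * r ^ 2 =
      u (x₀ + r • y) - (α + r * ⟪β, y⟫ + κ * r ^ 2 * (‖y‖ ^ 2 - n)) := by
  unfold aboveB
  rw [add_sub_cancel_left, real_inner_smul_right, norm_smul, mul_pow, Real.norm_eq_abs, sq_abs]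
  ring

/-- Lower bound for the mass of `v` above the barrier at the scale `l` where the rescaled solution
is normalised. -/
lemma acfI_lower (n : ℕ) : ∃ τ : ℝ, 0 < τ ∧ τ ≤ 1 ∧ ∀ (u v : Euc n → ℝ) (x₀ : Euc n), IsSol u v →
    u x₀ = v x₀ → ∀ l : ℝ, 0 < l → l ^ 2 * almH u v x₀ l = 1 → ∀ (α : ℝ) (β : Euc n) (κ : ℝ),
    3 * l ^ 2 * ((α - v x₀ + 1) ^ 2 + l ^ 2 * ‖β‖ ^ 2 + κ ^ 2 * l ^ 4 * momC n) ≤ τ ^ 2 / 4 →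
    τ ^ 2 / 4 ≤ l ^ 2 * acfI x₀ (aboveB v x₀ α β κ) (n * κ) l := by
  obtain ⟨τ, h0, h1, hτ⟩ := core_one n
  refine ⟨τ, h0, h1, fun u v x₀ h he l hl hH α β κ hq => ?_⟩
  have tv := h.tv
  have tu := h.tu
  have hs := h.scale x₀ hl
  have tB := TG_aboveB tv x₀ α β κ
  set a : Euc n → ℝ := fun y => l * chi (aboveB v x₀ α β κ (x₀ + l • y) + n * κ * l ^ 2) with ha
  set q : Euc n → ℝ := fun y => l * ((α - v x₀ + 1) + l * ⟪β, y⟫ + κ * l ^ 2 * (‖y‖ ^ 2 - n)) with hqd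
  have ta : a.HasTemperateGrowth := by fun_prop
  have tq : q.HasTemperateGrowth := by fun_prop
  have hk := hτ _ _ (fun y => a y + q y) 0 hs (by simp [he]) (by
    refine Eq.trans ?_ hH; unfold almH; rw [← integral_const_mul]; congr 1; funext y
    simp only [zero_add, one_smul]; ring) (by fun_prop) (fun y => by
    simp only [zero_add, one_smul, smul_zero, add_zero, ha, hqd]
    have := le_chi (aboveB v x₀ α β κ (x₀ + l • y) + n * κ * l ^ 2)
    rw [aboveB_shift] at this ⊢
    have h3 := mul_le_mul_of_nonneg_left this hl.le
    linarith)
  have hqi : ∫ y, q y ^ 2 ∂(gam n) ≤ τ ^ 2 / 4 := by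
    refine le_trans ?_ hq
    have e : 3 * l ^ 2 * ((α - v x₀ + 1) ^ 2 + l ^ 2 * ‖β‖ ^ 2 + κ ^ 2 * l ^ 4 * momC n) =
        ∫ y : Euc n, (3 * l ^ 2 * (α - v x₀ + 1) ^ 2 + 3 * l ^ 4 * ⟪β, y⟫ ^ 2 +
          3 * κ ^ 2 * l ^ 6 * (‖y‖ ^ 2 - n) ^ 2) ∂(gam n) := by
      have i1 : Integrable (fun y : Euc n => 3 * l ^ 2 * (α - v x₀ + 1) ^ 2) (gam n) :=
        integrable_const _
      have i2 : Integrable (fun y : Euc n => 3 * l ^ 4 * ⟪β, y⟫ ^ 2) (gam n) :=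
        TG.integrable (by fun_prop)
      have i3 : Integrable (fun y : Euc n => 3 * κ ^ 2 * l ^ 6 * (‖y‖ ^ 2 - n) ^ 2) (gam n) :=
        TG.integrable (by fun_prop)
      have i12 : Integrable (fun y : Euc n => 3 * l ^ 2 * (α - v x₀ + 1) ^ 2 +
          3 * l ^ 4 * ⟪β, y⟫ ^ 2) (gam n) := i1.add i2
      rw [integral_add i12 i3, integral_add i1 i2, integral_const_mul (3 * l ^ 4),
        integral_const_mul (3 * κ ^ 2 * l ^ 6), integral_inner_sq, ← momC, integral_const]
      simp only [probReal_univ, one_smul]; ring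
    rw [e]
    refine integral_mono (TG.integrable (by fun_prop)) (TG.integrable (by fun_prop)) fun y => ?_
    simp only [hqd]
    have : ∀ A B C : ℝ, (l * (A + B + C)) ^ 2 ≤ 3 * l ^ 2 * (A ^ 2 + B ^ 2 + C ^ 2) := fun A B C => by
      nlinarith [mul_nonneg (sq_nonneg l) (add_nonneg (add_nonneg (sq_nonneg (A - B))
        (sq_nonneg (B - C))) (sq_nonneg (A - C)))]
    refine (this _ _ _).trans (le_of_eq ?_)
    ring
  have h5 : ∫ y, (a y + q y) ^ 2 ∂(gam n) ≤ 2 * (∫ y, a y ^ 2 ∂(gam n)) +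
      2 * ∫ y, q y ^ 2 ∂(gam n) := by
    rw [← integral_const_mul, ← integral_const_mul, ← integral_add (TG.integrable (by fun_prop))
      (TG.integrable (by fun_prop))]
    refine integral_mono (TG.integrable (by fun_prop)) (TG.integrable (by fun_prop)) fun y => ?_
    simp only
    nlinarith [sq_nonneg (a y - q y)]
  have h6 : ∫ y, a y ^ 2 ∂(gam n) = l ^ 2 * acfI x₀ (aboveB v x₀ α β κ) (n * κ) l := by
    unfold acfI
    rw [← integral_const_mul]
    congr 1; funext y; simp only [ha]; ring
  linarith

lemma acfI_upper {u v : Euc n → ℝ} (h : IsSol u v) (x₀ : Euc n) {α : ℝ} {β : Euc n} {κ S L : ℝ}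
    (hS : 0 < S)
    (hm : ∀ z, 0 ≤ α + ⟪β, z⟫ + κ * ‖z‖ ^ 2 - n * κ * S ^ 2)
    (hL : ∀ z, u (x₀ + z) ≤ L * (S + ‖z‖)) :
    acfI x₀ (aboveB u x₀ α β κ) (n * κ) S ≤ L ^ 2 * S ^ 2 * momP n := by
  have tu := h.tu
  have tB := TG_aboveB tu x₀ α β κ
  unfold acfI momP
  rw [← integral_const_mul]
  refine integral_mono (TG.integrable (by fun_prop))
    ((integrable_poly_gam n 2).const_mul _) fun y => ?_
  have h1 : aboveB u x₀ α β κ (x₀ + S • y) + n * κ * S ^ 2 ≤ u (x₀ + S • y) := by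
    unfold aboveB
    rw [add_sub_cancel_left]
    linarith [hm (S • y)]
  have h2 : chi (aboveB u x₀ α β κ (x₀ + S • y) + n * κ * S ^ 2) ≤ u (x₀ + S • y) :=
    (chi_mono h1).trans (chi_le (h.pu _).le)
  have h3 := hL (S • y)
  rw [norm_smul, Real.norm_of_nonneg hS.le] at h3
  simp only
  calc chi (aboveB u x₀ α β κ (x₀ + S • y) + n * κ * S ^ 2) ^ 2 ≤ (L * (S + S * ‖y‖)) ^ 2 :=
      pow_le_pow_left₀ (chi_nonneg _) (h2.trans h3) 2
    _ = _ := by ring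

/-- Quantitative lower bound for the normalising scale `l`, from a barrier that dominates
`min u v` up to scale `S`. -/
lemma scale_lower (n : ℕ) : ∃ τ : ℝ, 0 < τ ∧ τ ≤ 1 ∧ ∀ (u v : Euc n → ℝ) (x₀ : Euc n), IsSol u v →
    u x₀ = v x₀ → ∀ l : ℝ, 0 < l → l ^ 2 * almH u v x₀ l = 1 → ∀ (α : ℝ) (β : Euc n) (κ S L : ℝ),
    0 ≤ κ → l ≤ S → (∀ z, min (u (x₀ + z)) (v (x₀ + z)) ≤
      α + ⟪β, z⟫ + κ * ‖z‖ ^ 2 - n * κ * S ^ 2) →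
    (∀ z, u (x₀ + z) + v (x₀ + z) ≤ L * (S + ‖z‖)) →
    3 * l ^ 2 * ((α - v x₀ + 1) ^ 2 + l ^ 2 * ‖β‖ ^ 2 + κ ^ 2 * l ^ 4 * momC n) ≤ τ ^ 2 / 4 →
    (τ ^ 2 / 4) ^ 2 ≤ l ^ 8 * (L ^ 2 * momP n) ^ 2 := by
  obtain ⟨τ, h0, h1, hτ⟩ := acfI_lower n
  refine ⟨τ, h0, h1, fun u v x₀ h he l hl hH α β κ S L hκ hlS hm hL hq => ?_⟩
  have hS : 0 < S := lt_of_lt_of_le hl hlS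
  have q1 := hτ u v x₀ h he l hl hH α β κ hq
  have q2 := hτ v u x₀ h.symm he.symm l hl (by
    refine Eq.trans ?_ hH; unfold almH; congr 2; funext y; ring) α β κ (by rw [he]; exact hq)
  have hm0 : ∀ z, 0 ≤ α + ⟪β, z⟫ + κ * ‖z‖ ^ 2 - n * κ * S ^ 2 := fun z =>
    (le_min (h.pu _).le (h.pv _).le).trans (hm z)
  have p1 := acfI_upper h x₀ hS hm0 (L := L) (fun z => by linarith [hL z, h.pv (x₀ + z)])
  have p2 := acfI_upper h.symm x₀ hS hm0 (L := L) (fun z => by linarith [hL z, h.pu (x₀ + z)])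
  have hlu : ∀ x, 0 ≤ lap u x := fun x => by rw [h.eu]; have := (h.pu x).le; positivity
  have hlv : ∀ x, 0 ≤ lap v x := fun x => by rw [h.ev]; have := (h.pv x).le; positivity
  have hacf := acf_mono (TG_aboveB h.tu x₀ α β κ) (TG_aboveB h.tv x₀ α β κ)
    (lap_aboveB h.tu hlu x₀ α β κ) (lap_aboveB h.tv hlv x₀ α β κ) x₀ hl hlS (fun t ht y => by
      have h2 := hm (t • y)
      unfold aboveB
      rw [add_sub_cancel_left, min_sub_sub_right]
      have h3 : n * κ * t ^ 2 ≤ n * κ * S ^ 2 := by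
        have := ht.2
        have := lt_of_lt_of_le hl ht.1
        gcongr
      linarith)
  set I₁ := acfI x₀ (aboveB u x₀ α β κ) (n * κ) l
  set I₂ := acfI x₀ (aboveB v x₀ α β κ) (n * κ) l
  set K₁ := acfI x₀ (aboveB u x₀ α β κ) (n * κ) S
  set K₂ := acfI x₀ (aboveB v x₀ α β κ) (n * κ) S
  have hup : K₁ * K₂ / S ^ 4 ≤ (L ^ 2 * momP n) ^ 2 := by
    rw [div_le_iff₀ (by positivity)]
    calc K₁ * K₂ ≤ (L ^ 2 * S ^ 2 * momP n) * (L ^ 2 * S ^ 2 * momP n) :=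
          mul_le_mul p1 p2 (acfI_nonneg _ _ _ _) (by have := momP_nonneg (n := n); positivity)
      _ = _ := by ring
  have hlow : I₁ * I₂ ≤ (L ^ 2 * momP n) ^ 2 * l ^ 4 := by
    rw [← div_le_iff₀ (by positivity)]; exact hacf.trans hup
  calc (τ ^ 2 / 4) ^ 2 = (τ ^ 2 / 4) * (τ ^ 2 / 4) := by ring
    _ ≤ (l ^ 2 * I₁) * (l ^ 2 * I₂) := mul_le_mul q2 q1 (by positivity)
        (mul_nonneg (sq_nonneg _) (acfI_nonneg _ _ _ _))
    _ = l ^ 4 * (I₁ * I₂) := by ring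
    _ ≤ l ^ 4 * ((L ^ 2 * momP n) ^ 2 * l ^ 4) := by gcongr
    _ = _ := by ring

end Apply

section Bounded
variable {n : ℕ} {u v : Euc n → ℝ}

/-- The normalising scale `l`: the rescaled solution `l u(x₀ + l ·)`, `l v(x₀ + l ·)` has Gaussian
height one. -/
lemma exists_norm_scale (h : IsSol u v) (x₀ : Euc n) (he : u x₀ = v x₀) :
    ∃ l : ℝ, 0 < l ∧ l ^ 2 * almH u v x₀ l = 1 ∧ l * v x₀ ≤ 1 := by
  have hv := h.pv x₀
  have hc : Continuous fun r => r ^ 2 * almH u v x₀ r :=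
    (continuous_pow 2).mul (continuous_iff_continuousAt.2 fun r => by
      obtain ⟨D, hD, -⟩ := almH_deriv h x₀ r
      exact hD.continuousAt)
  have hi : (0 : ℝ) ≤ 1 / v x₀ := by positivity
  have hend : 1 ≤ (1 / v x₀) ^ 2 * almH u v x₀ (1 / v x₀) := by
    have h1 := almH_pos h x₀ hi
    rw [he] at h1
    calc (1 : ℝ) ≤ (1 / v x₀) ^ 2 * (v x₀ ^ 2 + v x₀ ^ 2) := by
          have : (1 / v x₀) ^ 2 * (v x₀ ^ 2 + v x₀ ^ 2) = 2 := by field_simp; norm_num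
          rw [this]; norm_num
      _ ≤ _ := by gcongr
  obtain ⟨l, hl, hl1⟩ := intermediate_value_Icc hi hc.continuousOn
    (show (1 : ℝ) ∈ Icc _ _ from ⟨by simp, hend⟩)
  simp only at hl1
  have h0 : l ≠ 0 := by rintro rfl; simp at hl1
  refine ⟨l, lt_of_le_of_ne hl.1 h0.symm, hl1, ?_⟩
  have := mul_le_mul_of_nonneg_right hl.2 hv.le
  rwa [one_div_mul_cancel hv.ne'] at this

lemma scale_arith {τ l K : ℝ} (hl : 0 < l) (hl1 : l ≤ 1) (hK : 0 ≤ K)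
    (h : (τ ^ 2 / 4) ^ 2 ≤ l ^ 8 * K ^ 2) : τ ^ 2 / (8 * (K + 1)) ≤ l := by
  have h1 : τ ^ 2 / 4 ≤ l ^ 4 * K := by
    refine le_of_sq_le_sq ?_ (by positivity)
    linarith [show (l ^ 4 * K) ^ 2 = l ^ 8 * K ^ 2 by ring]
  have h2 : l ^ 4 ≤ l := by
    calc l ^ 4 ≤ l ^ 1 := pow_le_pow_of_le_one hl.le hl1 (by norm_num)
      _ = l := pow_one l
  rw [div_le_iff₀ (by positivity)]
  have h3 : l ^ 4 * K ≤ l * K := by gcongr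
  nlinarith [sq_nonneg τ]

/-- If `min u v` is bounded, then the normalising scales are uniformly bounded below. -/
lemma scale_lower_uniform (h : IsSol u v) {M : ℝ} (hM : ∀ x, min (u x) (v x) ≤ M) :
    ∃ l₀ : ℝ, 0 < l₀ ∧ ∀ x₀, u x₀ = v x₀ → ∀ l, 0 < l → l ^ 2 * almH u v x₀ l = 1 → l₀ ≤ l := by
  obtain ⟨τ, h0, h1, hτ⟩ := scale_lower n
  obtain ⟨C, hC⟩ := h.gr
  have hC0 : 0 < C := by
    have := hC 0; have := h.pu 0; have := h.pv 0
    simp at *; linarith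
  have hM0 : 0 < M := (lt_min (h.pu 0) (h.pv 0)).trans_le (hM 0)
  have hP := momP_nonneg (n := n)
  have hK : 0 ≤ C ^ 2 * momP n := by positivity
  refine ⟨min (min 1 (τ / (4 * (M + 1)))) (τ ^ 2 / (8 * (C ^ 2 * momP n + 1))),
    by positivity, fun x₀ he l hl hH => ?_⟩
  by_contra hcon
  push Not at hcon
  have a1 : l < 1 := hcon.trans_le ((min_le_left _ _).trans (min_le_left _ _))
  have a2 : l < τ / (4 * (M + 1)) := hcon.trans_le ((min_le_left _ _).trans (min_le_right _ _))
  have a3 : l < τ ^ 2 / (8 * (C ^ 2 * momP n + 1)) := hcon.trans_le (min_le_right _ _)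
  refine absurd (scale_arith hl a1.le hK ?_) (not_le.2 a3)
  refine hτ u v x₀ h he l hl hH M 0 0 (1 + ‖x₀‖ + l) C le_rfl (by linarith [norm_nonneg x₀]) ?_ ?_ ?_
  · intro z; simpa using hM (x₀ + z)
  · intro z
    refine (hC _).trans ?_
    refine mul_le_mul_of_nonneg_left ?_ hC0.le
    linarith [norm_add_le x₀ z]
  · have hv := h.pv x₀
    have hvM : v x₀ ≤ M := by have := hM x₀; rwa [he, min_self] at this
    rw [lt_div_iff₀ (by positivity)] at a2
    have h3 : l * (M - v x₀ + 1) ≤ τ / 4 := by nlinarith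
    have h4 : 0 ≤ l * (M - v x₀ + 1) := mul_nonneg hl.le (by linarith)
    have h5 := pow_le_pow_left₀ h4 h3 2
    simp only [norm_zero]
    nlinarith

/-- At a maximum point of `min u v / (1 + ε|x|²)` where `v < u`, the value of `min u v` is at
most one: there `v u² = Δv ≤ 2nε v ≤ v`. -/
lemma max_case_lt (h : IsSol u v) {ε : ℝ} (hε : 0 < ε) (hεn : 2 * n * ε ≤ 1) {x₀ : Euc n}
    (hlt : v x₀ < u x₀) (hmax : ∀ x, min (u x) (v x) ≤
      min (u x₀) (v x₀) / (1 + ε * ‖x₀‖ ^ 2) * (1 + ε * ‖x‖ ^ 2)) : min (u x₀) (v x₀) ≤ 1 := by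
  have tv := h.tv
  have c2 : ∀ {f : Euc n → ℝ}, f.HasTemperateGrowth → ContDiff ℝ 2 f := fun hf =>
    contDiff_infty.1 (TG.contDiff hf) 2
  rw [min_eq_right hlt.le] at hmax ⊢
  have hv := h.pv x₀
  set p := 1 + ε * ‖x₀‖ ^ 2 with hp
  have hp1 : 1 ≤ p := by rw [hp]; nlinarith [sq_nonneg ‖x₀‖]
  have hloc : IsLocalMax (fun x => v x - v x₀ / p * (1 + ε * ‖x‖ ^ 2)) x₀ := by
    have : ∀ᶠ x in nhds x₀, v x < u x :=
      (TG.cont h.tv).continuousAt.eventually_lt (TG.cont h.tu).continuousAt hlt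
    filter_upwards [this] with x hx
    have := hmax x
    rw [min_eq_right hx.le] at this
    rw [← hp, div_mul_cancel₀ _ (by positivity)]
    linarith
  have t1 : (fun x : Euc n => ‖x‖ ^ 2).HasTemperateGrowth := by fun_prop
  have t2 : (fun x : Euc n => v x₀ / p * (1 + ε * ‖x‖ ^ 2)).HasTemperateGrowth := by fun_prop
  have hl := lap_nonpos_of_isLocalMax (c2 (f := fun x => v x - v x₀ / p * (1 + ε * ‖x‖ ^ 2))
    (tv.sub t2)) hloc
  have e1 : lap (fun _ : Euc n => (1 : ℝ)) x₀ = 0 := by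
    rw [lap_eq]; refine Finset.sum_eq_zero fun i _ => ?_
    have : pd i (fun _ : Euc n => (1 : ℝ)) = fun _ => 0 := by funext z; rw [pd_const]
    rw [this, pd_const]
  rw [lap_sub (c2 tv) (c2 t2), lap_const_mul (c2 (by fun_prop)),
    lap_add (c2 (by fun_prop)) (c2 (by fun_prop)), lap_const_mul (c2 t1), lap_norm_sq, e1, h.ev] at hl
  have h3 : v x₀ / p * (0 + ε * (2 * n)) ≤ v x₀ * 1 := by
    have : v x₀ / p ≤ v x₀ := div_le_self hv.le hp1
    have h4 : 0 ≤ v x₀ / p := by positivity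
    calc v x₀ / p * (0 + ε * (2 * n)) ≤ v x₀ / p * 1 := by gcongr; linarith
      _ ≤ v x₀ * 1 := by gcongr
  have h5 : v x₀ * u x₀ ^ 2 ≤ v x₀ * 1 := by linarith
  have h6 := le_of_mul_le_mul_left h5 hv
  nlinarith [h.pu x₀]

/-- Since `min u v` grows at most linearly, `min u v / (1 + ε|x|²)` attains its maximum. -/
lemma exists_max (h : IsSol u v) {ε : ℝ} (hε : 0 < ε) : ∃ x₀ : Euc n, ∀ x, min (u x) (v x) ≤
      min (u x₀) (v x₀) / (1 + ε * ‖x₀‖ ^ 2) * (1 + ε * ‖x‖ ^ 2) := by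
  obtain ⟨C, hC⟩ := h.gr
  have hC0 : 0 < C := by
    have := hC 0; have := h.pu 0; have := h.pv 0
    simp at *; linarith
  have hp : ∀ x : Euc n, 0 < 1 + ε * ‖x‖ ^ 2 := fun x => by positivity
  have hcont : Continuous fun x : Euc n => min (u x) (v x) / (1 + ε * ‖x‖ ^ 2) :=
    ((TG.cont h.tu).min (TG.cont h.tv)).div (by fun_prop) fun x => (hp x).ne'
  obtain ⟨x₀, hx₀⟩ := hcont.exists_forall_ge' 0 (by
    have ha : 0 < min (u 0) (v 0) := lt_min (h.pu 0) (h.pv 0)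
    filter_upwards [(tendsto_norm_cocompact_atTop (E := Euc n)).eventually_ge_atTop
      (max 1 (2 * C / (min (u 0) (v 0) * ε)))] with x hx
    have h1 : 1 ≤ ‖x‖ := (le_max_left _ _).trans hx
    have h2 := (le_max_right _ _).trans hx
    rw [div_le_iff₀ (by positivity)] at h2
    simp only [norm_zero, ne_eq, OfNat.ofNat_ne_zero, not_false_eq_true, zero_pow, mul_zero,
      add_zero, div_one]
    rw [div_le_iff₀ (hp x)]
    have h3 : min (u x) (v x) ≤ C * (1 + ‖x‖) :=
      (min_le_left _ _).trans (by linarith [hC x, h.pv x])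
    nlinarith)
  refine ⟨x₀, fun x => ?_⟩
  have := hx₀ x
  rwa [div_le_iff₀ (hp x)] at this

/-- At a maximum point of `min u v / (1 + ε|x|²)` where `u = v`, the value of `v` is bounded by
a constant `1/l₂` which does not depend on `ε`. The paraboloid touching `min u v` from above at this
point serves as the barrier in `scale_lower`, and `l v(x₀) ≤ 1` for the normalising scale `l`. -/
lemma max_case_eq (h : IsSol u v) : ∃ l₂ ε₁ : ℝ, 0 < l₂ ∧ 0 < ε₁ ∧ ∀ ε, 0 < ε → ε ≤ ε₁ →
    ∀ x₀, u x₀ = v x₀ → (∀ x, min (u x) (v x) ≤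
      v x₀ / (1 + ε * ‖x₀‖ ^ 2) * (1 + ε * ‖x‖ ^ 2)) → l₂ * v x₀ ≤ 1 := by
  obtain ⟨τ, h0, h1, hτ⟩ := scale_lower n
  obtain ⟨C, hC⟩ := h.gr
  have hC0 : 0 < C := by
    have := hC 0; have := h.pu 0; have := h.pv 0
    simp at *; linarith
  have hP := momP_nonneg (n := n)
  have hc := momC_nonneg (n := n)
  set c := momC n with hcd
  set d : ℝ := τ / (8 * (n + 1)) with hd
  have hd0 : 0 < d := by positivity
  have hnd : n * d + d = τ / 8 := by rw [hd]; field_simp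
  have hd1 : d ≤ 1 := by
    have : 0 ≤ n * d := by positivity
    linarith
  set L := 2 * C / d with hL
  have hLC : C ≤ L := by
    rw [hL, le_div_iff₀ hd0]; linarith [mul_le_mul_of_nonneg_left hd1 hC0.le]
  have hK : 0 ≤ L ^ 2 * momP n := by positivity
  set l₁ := τ / (24 * (6 + c)) with hl₁
  have hl10 : 0 < l₁ := by positivity
  have hl1 : (6 + c) * l₁ = τ / 24 := by rw [hl₁]; field_simp
  have hl11 : l₁ ≤ 1 := by linarith [mul_nonneg hc hl10.le]
  refine ⟨min l₁ (τ ^ 2 / (8 * (L ^ 2 * momP n + 1))), d ^ 2, by positivity, by positivity,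
    fun ε hε hεd x₀ he hmax => ?_⟩
  obtain ⟨l, hl, hH, hlv⟩ := exists_norm_scale h x₀ he
  have hv := h.pv x₀
  by_contra hcon
  push Not at hcon
  have hcon : l < min l₁ (τ ^ 2 / (8 * (L ^ 2 * momP n + 1))) :=
    lt_of_mul_lt_mul_right (hlv.trans_lt hcon) hv.le
  have a1 : l < l₁ := hcon.trans_le (min_le_left _ _)
  have a3 : l < τ ^ 2 / (8 * (L ^ 2 * momP n + 1)) := hcon.trans_le (min_le_right _ _)
  have hl1' : l ≤ 1 := a1.le.trans hl11
  have hε1 : ε ≤ 1 := hεd.trans (pow_le_one₀ hd0.le hd1)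
  set p := 1 + ε * ‖x₀‖ ^ 2 with hp
  have hp1 : 1 ≤ p := by rw [hp]; linarith [mul_nonneg hε.le (sq_nonneg ‖x₀‖)]
  have hp0 : 0 < p := by linarith
  set A := v x₀ with hA
  set S := d * Real.sqrt (p / ε) with hS
  have hS2 : ε * S ^ 2 = d ^ 2 * p := by
    rw [hS, mul_pow, Real.sq_sqrt (by positivity)]; field_simp
  have hS0 : 0 < S := by positivity
  have hS1 : 1 ≤ S := by
    refine le_of_sq_le_sq ?_ hS0.le
    have h3 : ε * 1 ≤ ε * S ^ 2 := by
      rw [hS2]; linarith [mul_le_mul_of_nonneg_left hp1 (sq_nonneg d)]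
    have := le_of_mul_le_mul_left h3 hε
    simpa using this
  have hSx : d * (1 + ‖x₀‖) ≤ 2 * S := by
    refine le_of_sq_le_sq ?_ (by positivity)
    have h3 : ε * (d ^ 2 * (1 + ‖x₀‖ ^ 2)) ≤ ε * S ^ 2 := by
      rw [hS2, hp]
      linarith [mul_nonneg (sq_nonneg d) (sub_nonneg.2 hε1)]
    have h4 := le_of_mul_le_mul_left h3 hε
    have h5 := mul_nonneg (sq_nonneg d) (sq_nonneg (1 - ‖x₀‖))
    linarith [sq_nonneg S]
  refine absurd (scale_arith hl hl1' hK ?_) (not_le.2 a3)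
  refine hτ u v x₀ h he l hl hH (A + n * d ^ 2 * A) ((2 * ε * A / p) • x₀) (A * ε / p) S L
    (by positivity) (hl1'.trans hS1) ?_ ?_ ?_
  · intro z
    refine (hmax _).trans (le_of_eq ?_)
    have e1 : n * (A * ε / p) * S ^ 2 = n * d ^ 2 * A := by
      rw [show n * (A * ε / p) * S ^ 2 = n * (A / p) * (ε * S ^ 2) by ring, hS2]; field_simp
    have e2 : A / p * p = A := div_mul_cancel₀ _ hp0.ne'
    rw [e1, norm_add_sq_real, real_inner_smul_left]
    calc A / p * (1 + ε * (‖x₀‖ ^ 2 + 2 * ⟪x₀, z⟫ + ‖z‖ ^ 2)) =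
        A / p * p + 2 * ε * A / p * ⟪x₀, z⟫ + A * ε / p * ‖z‖ ^ 2 := by rw [hp]; ring
      _ = _ := by rw [e2]; ring
  · intro z
    refine (hC _).trans ?_
    have h3 : C * (1 + ‖x₀‖) ≤ L * S := by
      rw [hL, div_mul_eq_mul_div, le_div_iff₀ hd0]
      linarith [mul_le_mul_of_nonneg_left hSx hC0.le]
    have h4 : C * ‖z‖ ≤ L * ‖z‖ := by gcongr
    have h5 : C * (1 + ‖x₀ + z‖) ≤ C * (1 + ‖x₀‖ + ‖z‖) := by
      refine mul_le_mul_of_nonneg_left ?_ hC0.le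
      linarith [norm_add_le x₀ z]
    linarith
  · rw [show A + n * d ^ 2 * A - A + 1 = n * d ^ 2 * A + 1 by ring]
    have hlA : l * A ≤ 1 := hlv
    have hlA0 : 0 ≤ l * A := by positivity
    have hlA2 : (l * A) ^ 2 ≤ 1 := pow_le_one₀ hlA0 hlA
    -- the three parts of the quadratic
    have b1 : l * (n * d ^ 2 * A + 1) ≤ τ / 8 + l := by
      have : n * d ^ 2 ≤ τ / 8 := by
        have : n * d ^ 2 ≤ n * d := by
          have : d ^ 2 ≤ d := pow_le_of_le_one hd0.le hd1 two_ne_zero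
          gcongr
        linarith
      have : (n * d ^ 2) * (l * A) ≤ (n * d ^ 2) * 1 := by gcongr
      linarith
    have b1' : l ^ 2 * (n * d ^ 2 * A + 1) ^ 2 ≤ (τ / 8 + l) ^ 2 := by
      rw [← mul_pow]; exact pow_le_pow_left₀ (by positivity) b1 2
    have b2 : ‖(2 * ε * A / p) • x₀‖ ^ 2 ≤ 4 * A ^ 2 := by
      rw [norm_smul, mul_pow, Real.norm_eq_abs, sq_abs, div_pow, div_mul_eq_mul_div,
        div_le_iff₀ (by positivity)]
      have h3 : ε * ‖x₀‖ ^ 2 ≤ p := by rw [hp]; linarith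
      have h4 : ε * (ε * ‖x₀‖ ^ 2) ≤ 1 * p := by gcongr
      have h5 : p ≤ p ^ 2 := le_self_pow₀ hp1 two_ne_zero
      calc (2 * ε * A) ^ 2 * ‖x₀‖ ^ 2 = 4 * A ^ 2 * (ε * (ε * ‖x₀‖ ^ 2)) := by ring
        _ ≤ 4 * A ^ 2 * p ^ 2 := by gcongr; linarith
    have b2' : l ^ 2 * (l ^ 2 * ‖(2 * ε * A / p) • x₀‖ ^ 2) ≤ 4 * l ^ 2 := by
      calc l ^ 2 * (l ^ 2 * ‖(2 * ε * A / p) • x₀‖ ^ 2) ≤ l ^ 2 * (l ^ 2 * (4 * A ^ 2)) := by gcongr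
        _ = 4 * l ^ 2 * (l * A) ^ 2 := by ring
        _ ≤ 4 * l ^ 2 * 1 := by gcongr
        _ = _ := by ring
    have b3 : l ^ 2 * ((A * ε / p) ^ 2 * l ^ 4 * c) ≤ l ^ 2 * c := by
      have h3 : l * (A * ε / p) ≤ 1 := by
        have : A * ε / p ≤ A := (div_le_self (by positivity) hp1).trans
          (mul_le_of_le_one_right hv.le hε1)
        exact (mul_le_mul_of_nonneg_left this hl.le).trans hlA
      have h4 : l ^ 2 * (l * (A * ε / p)) ≤ 1 :=
        mul_le_one₀ (pow_le_one₀ hl.le hl1') (by positivity) h3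
      have h5 : l * (l * (A * ε / p)) ≤ 1 := mul_le_one₀ hl1' (by positivity) h3
      have h6 : (l * (l * (A * ε / p))) ^ 2 ≤ 1 := pow_le_one₀ (by positivity) h5
      calc l ^ 2 * ((A * ε / p) ^ 2 * l ^ 4 * c) = l ^ 2 * c * (l * (l * (A * ε / p))) ^ 2 := by ring
        _ ≤ l ^ 2 * c * 1 := by gcongr
        _ = _ := by ring
    have b4 : (6 + c) * l ^ 2 ≤ τ ^ 2 / 24 := by
      have h3 : (6 + c) * l ≤ τ / 24 := by rw [← hl1]; gcongr
      have h4 : l ≤ τ := by linarith [mul_nonneg hc hl.le]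
      calc (6 + c) * l ^ 2 = ((6 + c) * l) * l := by ring
        _ ≤ τ / 24 * τ := by gcongr
        _ = _ := by ring
    have b5 : (τ / 8 + l) ^ 2 ≤ τ ^ 2 / 32 + 2 * l ^ 2 := by
      linarith [sq_nonneg (τ / 8 - l)]
    linarith [sq_nonneg τ]

/-- `min u v` is globally bounded. -/
lemma min_bounded (h : IsSol u v) : ∃ M : ℝ, 0 < M ∧ ∀ x, min (u x) (v x) ≤ M := by
  obtain ⟨l₂, ε₁, hl₂, hε₁, hme⟩ := max_case_eq h
  set ε₂ := min ε₁ (1 / (2 * n + 1)) with hε₂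
  have hε₂0 : 0 < ε₂ := by positivity
  have key : ∀ ε, 0 < ε → ε ≤ ε₂ → ∀ x, min (u x) (v x) ≤ max 1 (1 / l₂) * (1 + ε * ‖x‖ ^ 2) := by
    intro ε hε hεle x
    obtain ⟨x₀, hx₀⟩ := exists_max h hε
    have hεn : 2 * n * ε ≤ 1 := by
      have := hεle.trans (min_le_right _ _)
      rw [le_div_iff₀ (by positivity)] at this
      nlinarith
    have hA : min (u x₀) (v x₀) ≤ max 1 (1 / l₂) := by
      rcases lt_trichotomy (u x₀) (v x₀) with hlt | he | hlt
      · refine le_max_of_le_left ?_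
        have := max_case_lt h.symm hε hεn hlt (fun x => by
          rw [min_comm, min_comm (v x₀)]; exact hx₀ x)
        rwa [min_comm]
      · refine le_max_of_le_right ?_
        rw [he, min_self] at hx₀ ⊢
        have := hme ε hε (hεle.trans (min_le_left _ _)) x₀ he hx₀
        rw [le_div_iff₀ hl₂]; linarith
      · exact le_max_of_le_left (max_case_lt h hε hεn hlt hx₀)
    refine (hx₀ x).trans ?_
    have hp : (1 : ℝ) ≤ 1 + ε * ‖x₀‖ ^ 2 := by nlinarith [sq_nonneg ‖x₀‖]
    have h0 : 0 ≤ min (u x₀) (v x₀) := le_min (h.pu _).le (h.pv _).le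
    gcongr
    exact (div_le_self h0 hp).trans hA
  refine ⟨max 1 (1 / l₂), by positivity, fun x => ?_⟩
  set M := max 1 (1 / l₂)
  have hM : 0 < M := by positivity
  refine le_of_forall_pos_le_add fun δ hδ => ?_
  have hpos : 0 < δ / (M * (‖x‖ ^ 2 + 1)) := by positivity
  refine (key (min ε₂ (δ / (M * (‖x‖ ^ 2 + 1)))) (lt_min hε₂0 hpos) (min_le_left _ _) x).trans ?_
  have h1 : min ε₂ (δ / (M * (‖x‖ ^ 2 + 1))) * (M * (‖x‖ ^ 2 + 1)) ≤ δ := by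
    rw [← le_div_iff₀ (by positivity)]; exact min_le_right _ _
  have h2 : 0 < min ε₂ (δ / (M * (‖x‖ ^ 2 + 1))) * M := mul_pos (lt_min hε₂0 hpos) hM
  linarith

/-- Quadratic growth of the Gaussian height, uniformly over the points of `{u = v}`. -/
lemma almH_quadratic (h : IsSol u v) : ∃ K : ℝ, 0 < K ∧ ∀ x₀, u x₀ = v x₀ → ∀ r, 1 ≤ r →
    almH u v x₀ r ≤ K * r ^ 2 := by
  obtain ⟨M, -, hM⟩ := min_bounded h
  obtain ⟨l₀, hl₀, hl⟩ := scale_lower_uniform h hM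
  refine ⟨Real.exp 1 / l₀ ^ 4 + 1, by positivity, fun x₀ he r hr => ?_⟩
  obtain ⟨l, hlp, hH, -⟩ := exists_norm_scale h x₀ he
  have hle := hl x₀ he l hlp hH
  rcases le_total l r with hlr | hrl
  · have h1 := almH_ratio h x₀ hlp hlr
    have h2 : almH u v x₀ r * l ^ 4 ≤ Real.exp 1 * r ^ 2 := by
      calc almH u v x₀ r * l ^ 4 = (almH u v x₀ r * l ^ 2) * l ^ 2 := by ring
        _ ≤ (Real.exp 1 * (r ^ 2 * almH u v x₀ l)) * l ^ 2 := by gcongr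
        _ = Real.exp 1 * r ^ 2 * (l ^ 2 * almH u v x₀ l) := by ring
        _ = _ := by rw [hH, mul_one]
    have h3 : almH u v x₀ r ≤ Real.exp 1 * r ^ 2 / l ^ 4 := by
      rwa [le_div_iff₀ (by positivity)]
    have h4 : Real.exp 1 * r ^ 2 / l ^ 4 ≤ Real.exp 1 * r ^ 2 / l₀ ^ 4 := by gcongr
    calc _ ≤ _ := h3.trans h4
      _ = Real.exp 1 / l₀ ^ 4 * r ^ 2 := by ring
      _ ≤ _ := by gcongr; linarith
  · have h1 := almH_mono h x₀ (by linarith : (0 : ℝ) ≤ r) hrl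
    have h2 : almH u v x₀ l ≤ 1 := by
      have : 1 ≤ l ^ 2 := one_le_pow₀ (hr.trans hrl)
      have h0 := almH_pos' h x₀ hlp.le
      nlinarith
    have h3 : (0 : ℝ) ≤ Real.exp 1 / l₀ ^ 4 := by positivity
    have h4 : (1 : ℝ) ≤ r ^ 2 := one_le_pow₀ hr
    nlinarith

end Bounded

section Final
variable {n : ℕ}

/-- A smooth convex even approximation of `|t|`, from below and up to an error of one. -/
noncomputable def sabs (t : ℝ) : ℝ := chi t + chi (-t)

/-- The derivative of `sabs`. -/
noncomputable def sabs' (t : ℝ) : ℝ := Real.smoothTransition t - Real.smoothTransition (-t)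

/-- The second derivative of `sabs`. -/
noncomputable def sabs'' (t : ℝ) : ℝ :=
  deriv Real.smoothTransition t + deriv Real.smoothTransition (-t)

lemma hasDerivAt_sabs (t : ℝ) : HasDerivAt sabs (sabs' t) t := by
  have h := (hasDerivAt_chi t).fun_add ((hasDerivAt_chi (-t)).comp t (hasDerivAt_neg t))
  refine (h.congr_deriv ?_)
  unfold sabs'; ring

lemma hasDerivAt_sabs' (t : ℝ) : HasDerivAt sabs' (sabs'' t) t := by
  have h := (hasDerivAt_smoothTransition t).fun_sub
    ((hasDerivAt_smoothTransition (-t)).comp t (hasDerivAt_neg t))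
  refine (h.congr_deriv ?_)
  unfold sabs''; ring

lemma sabs_le (t : ℝ) : sabs t ≤ |t| := by
  unfold sabs
  rcases le_total 0 t with h | h
  · rw [chi_of_nonpos (by linarith : -t ≤ 0), abs_of_nonneg h]; linarith [chi_le h]
  · rw [chi_of_nonpos h, abs_of_nonpos h]; linarith [chi_le (by linarith : 0 ≤ -t)]

lemma le_sabs (t : ℝ) : |t| - 1 ≤ sabs t := by
  unfold sabs
  rcases abs_cases t with ⟨h, -⟩ | ⟨h, -⟩ <;> rw [h]
  · linarith [le_chi t, chi_nonneg (-t)]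
  · linarith [le_chi (-t), chi_nonneg t]

lemma sabs_nonneg (t : ℝ) : 0 ≤ sabs t := add_nonneg (chi_nonneg _) (chi_nonneg _)

lemma abs_sabs'_le (t : ℝ) : |sabs' t| ≤ 1 := by
  unfold sabs'
  rw [abs_le]
  constructor <;> linarith [Real.smoothTransition.nonneg t, Real.smoothTransition.nonneg (-t),
    Real.smoothTransition.le_one t, Real.smoothTransition.le_one (-t)]

lemma sabs'_mul_nonneg (t : ℝ) : 0 ≤ sabs' t * t := by
  unfold sabs'
  rcases le_total 0 t with h | h
  · rw [Real.smoothTransition.zero_of_nonpos (by linarith : -t ≤ 0), sub_zero]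
    exact mul_nonneg (Real.smoothTransition.nonneg t) h
  · rw [Real.smoothTransition.zero_of_nonpos h, zero_sub]
    nlinarith [Real.smoothTransition.nonneg (-t)]

lemma sabs''_nonneg (t : ℝ) : 0 ≤ sabs'' t :=
  add_nonneg (deriv_smoothTransition_nonneg _) (deriv_smoothTransition_nonneg _)

lemma sabs''_eq_zero {t : ℝ} (ht : 1 < |t|) : sabs'' t = 0 := by
  unfold sabs''
  rcases abs_cases t with ⟨h, h'⟩ | ⟨h, h'⟩ <;> rw [h] at ht
  · rw [deriv_smoothTransition_eq_zero (Or.inr ht),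
      deriv_smoothTransition_eq_zero (Or.inl (by linarith)), add_zero]
  · rw [deriv_smoothTransition_eq_zero (Or.inl h'),
      deriv_smoothTransition_eq_zero (Or.inr ht), add_zero]

@[fun_prop]
lemma TG_sabs : Function.HasTemperateGrowth sabs := by
  unfold sabs; fun_prop

@[fun_prop]
lemma TG_sabs' : Function.HasTemperateGrowth sabs' := by
  unfold sabs'; fun_prop

/-- The pointwise inequality behind the final estimate: here `s = U + V`, `w = U - V`,
`F = sabs w`, `p = sabs' w`, `q = sabs'' w`, `g = |∇w|²`, `Y = |y|² - n`, `Ds = y · ∇s` and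
`Dw = y · ∇w`. Every term of the right-hand side except those in the last
line has mean zero. -/
lemma final_pointwise {U V k M F p q g Ds Dw Y : ℝ} (hU : 0 < U) (hV : 0 < V) (hk : 0 ≤ k)
    (hM : min U V ≤ M) (hM0 : 0 < M) (hF0 : 0 ≤ F) (hF : F ≤ |U - V|) (hF1 : |U - V| - 1 ≤ F)
    (hp : |p| ≤ 1) (hpw : 0 ≤ p * (U - V)) (hq : 0 ≤ q) (hq0 : 1 < |U - V| → q = 0) (hg : 0 ≤ g) :
    k * (U * V * (U - V) ^ 2) ≤
      -(F * (Ds - k * (U * V * (U + V))) -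
          (U + V) * (p * Dw - (q * g + p * (-(k * (U * V * (U - V)))))) +
          (Y * (F * (U + V - F)) - (F * (Ds - p * Dw) + (U + V - F) * (p * Dw)))) +
      (2 * M + 1) * ((q * g + p * (-(k * (U * V * (U - V))))) - p * Dw) +
      (2 * M + 2) * (k * (U * V * (U + V)) - Ds) +
      (2 * M + 2) * |Ds| + 3 * (2 * M + 1) * |Dw| + (2 * M + 1) * (|Y| * |U - V|) := by
  have hs : U + V = |U - V| + 2 * min U V := by
    rcases le_total U V with h | h
    · rw [min_eq_left h, abs_of_nonpos (by linarith)]; ring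
    · rw [min_eq_right h, abs_of_nonneg (by linarith)]; ring
  have hm0 : 0 < min U V := lt_min hU hV
  have hUV : 0 < U * V := mul_pos hU hV
  have hkUV : 0 ≤ k * (U * V) := by positivity
  set a := |U - V| with ha
  have ha0 : 0 ≤ a := abs_nonneg _
  have hρ : |U + V - F| ≤ 2 * M + 1 := by rw [abs_le]; constructor <;> linarith
  have hρ0 : 0 ≤ U + V - F := by linarith
  have hρ1 : U + V - F ≤ 2 * M + 1 := by linarith
  have e1 : (U - V) ^ 2 ≤ (U + V) * (F + 1) := by
    rw [← sq_abs, ← ha]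
    have : a ≤ U + V := by linarith
    have : a ≤ F + 1 := by linarith
    nlinarith
  have e2 : (U + V) * (q * g) ≤ (2 * M + 1) * (q * g) := by
    by_cases h : 1 < a
    · rw [hq0 h]; simp
    · have : U + V ≤ 2 * M + 1 := by linarith
      have : 0 ≤ q * g := mul_nonneg hq hg
      gcongr
  have e3 : 0 ≤ (U + V) * (p * (k * (U * V * (U - V)))) := by
    have := mul_nonneg (mul_nonneg (by positivity : 0 ≤ U + V) hkUV) hpw
    linarith
  have e4 : |p * Dw| ≤ |Dw| := by
    rw [abs_mul]; nlinarith [abs_nonneg Dw, abs_nonneg p]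
  have e5 : -(2 * ((U + V - F) * (p * Dw))) ≤ 2 * (2 * M + 1) * |Dw| := by
    have h1 : -((U + V - F) * (p * Dw)) ≤ (U + V - F) * |Dw| := by
      have := neg_abs_le (p * Dw)
      have : -(p * Dw) ≤ |Dw| := by linarith
      nlinarith
    have h2 : (U + V - F) * |Dw| ≤ (2 * M + 1) * |Dw| := by gcongr
    linarith
  have e6 : Y * (F * (U + V - F)) ≤ (2 * M + 1) * (|Y| * a) := by
    calc Y * (F * (U + V - F)) ≤ |Y| * (F * (U + V - F)) := by
          gcongr; exact le_abs_self Y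
      _ ≤ |Y| * (a * (2 * M + 1)) := by gcongr
      _ = _ := by ring
  have e7 : p * (k * (U * V * (U - V))) ≤ k * (U * V * (U + V)) := by
    have h1 : p * (U - V) ≤ U + V := by
      calc p * (U - V) ≤ |p * (U - V)| := le_abs_self _
        _ = |p| * a := by rw [abs_mul]
        _ ≤ 1 * a := by gcongr
        _ ≤ U + V := by linarith
    have := mul_le_mul_of_nonneg_left h1 hkUV
    linarith
  have e8 : k * (U * V * (U - V) ^ 2) ≤ F * (k * (U * V * (U + V))) + k * (U * V * (U + V)) := by
    have := mul_le_mul_of_nonneg_left e1 hkUV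
    linarith
  have e9 : (2 * M + 1) * (p * (k * (U * V * (U - V)))) ≤ (2 * M + 1) * (k * (U * V * (U + V))) := by
    gcongr
  have e10 : (2 * M + 1) * (p * Dw) ≤ (2 * M + 1) * |Dw| := by
    gcongr; exact (le_abs_self _).trans e4
  have e11 : (2 * M + 2) * Ds ≤ (2 * M + 2) * |Ds| := by gcongr; exact le_abs_self _
  linarith

lemma radial_young {G : ℝ} {Q : ℝ} (hQ : 0 < Q) (a y : Fin n → ℝ) (hG : ∑ i, a i ^ 2 ≤ 2 * G) :
    |∑ i, y i * a i| ≤ Q / 2 * (∑ i, y i ^ 2) + Q⁻¹ * G := by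
  have h1 : |∑ i, y i * a i| ≤ ∑ i, (Q / 2 * y i ^ 2 + Q⁻¹ / 2 * a i ^ 2) := by
    refine (Finset.abs_sum_le_sum_abs _ _).trans (Finset.sum_le_sum fun i _ => ?_)
    rw [abs_mul, ← sq_abs (y i), ← sq_abs (a i)]
    have h2 : 0 ≤ Q⁻¹ / 2 * (Q * |y i| - |a i|) ^ 2 := by positivity
    have h3 : Q⁻¹ / 2 * (Q * |y i| - |a i|) ^ 2 =
        Q / 2 * |y i| ^ 2 + Q⁻¹ / 2 * |a i| ^ 2 - |y i| * |a i| := by field_simp; ring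
    linarith
  rw [Finset.sum_add_distrib, ← Finset.mul_sum, ← Finset.mul_sum] at h1
  have h4 : Q⁻¹ / 2 * ∑ i, a i ^ 2 ≤ Q⁻¹ / 2 * (2 * G) := by gcongr
  linarith

/-- `∫ |y|² dγ`. -/
noncomputable def momN (n : ℕ) : ℝ := ∫ y : Euc n, ‖y‖ ^ 2 ∂(gam n)

lemma momN_nonneg : 0 ≤ momN n := integral_nonneg fun _ => sq_nonneg _

/-- The estimate for a solution of the system with coupling `k` whose
Gaussian height and Dirichlet energy are at most `Q²`. -/
lemma final_estimate {U V : Euc n → ℝ} (tU : U.HasTemperateGrowth) (tV : V.HasTemperateGrowth)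
    (pU : ∀ x, 0 < U x) (pV : ∀ x, 0 < V x) {k M Q : ℝ} (hk : 0 ≤ k) (hM0 : 0 < M) (hQ : 0 < Q)
    (eU : ∀ x, lap U x = k * (U x * V x ^ 2)) (eV : ∀ x, lap V x = k * (V x * U x ^ 2))
    (hM : ∀ x, min (U x) (V x) ≤ M)
    (hH : ∫ y, (U y ^ 2 + V y ^ 2) ∂(gam n) ≤ Q ^ 2)
    (hE : ∫ y, ((∑ i, pd i U y ^ 2) + ∑ i, pd i V y ^ 2) ∂(gam n) ≤ Q ^ 2) :
    ∫ y, k * (U y * V y * (U y - V y) ^ 2) ∂(gam n) ≤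
      ((8 * M + 5) * (momN n / 2 + 1) + (2 * M + 1) * (momC n / 2 + 1 / 2)) * Q := by
  have c2 : ∀ {f : Euc n → ℝ}, f.HasTemperateGrowth → ContDiff ℝ 2 f := fun hf =>
    contDiff_infty.1 (TG.contDiff hf) 2
  set w : Euc n → ℝ := fun y => U y - V y with hw
  set s : Euc n → ℝ := fun y => U y + V y with hs
  set F : Euc n → ℝ := fun y => sabs (w y) with hF
  set ρ : Euc n → ℝ := fun y => s y - F y with hρ
  have tw : w.HasTemperateGrowth := by fun_prop
  have ts : s.HasTemperateGrowth := by fun_prop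
  have tF : F.HasTemperateGrowth := by fun_prop
  have tρ : ρ.HasTemperateGrowth := by fun_prop
  have dw := TG.diff tw
  have ds := TG.diff ts
  have dF := TG.diff tF
  have lw : ∀ y, lap w y = -(k * (U y * V y * (U y - V y))) := fun y => by
    rw [hw, lap_sub (c2 tU) (c2 tV), eU, eV]; ring
  have ls : ∀ y, lap s y = k * (U y * V y * (U y + V y)) := fun y => by
    rw [hs, lap_add (c2 tU) (c2 tV), eU, eV]; ring
  have pw : ∀ i y, pd i w y = pd i U y - pd i V y := fun i y =>
    pd_sub (TG.diff tU y) (TG.diff tV y)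
  have ps : ∀ i y, pd i s y = pd i U y + pd i V y := fun i y =>
    pd_add (TG.diff tU y) (TG.diff tV y)
  have pF : ∀ i y, pd i F y = sabs' (w y) * pd i w y := fun i y =>
    pd_comp (hasDerivAt_sabs (w y)) (dw y)
  have pρ : ∀ i y, pd i ρ y = pd i s y - pd i F y := fun i y => pd_sub (ds y) (dF y)
  have lF : ∀ y, lap F y = sabs'' (w y) * (∑ i, pd i w y ^ 2) + sabs' (w y) * lap w y := fun y => by
    rw [lap_eq, lap_eq, Finset.mul_sum, Finset.mul_sum, ← Finset.sum_add_distrib]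
    refine Finset.sum_congr rfl fun i _ => ?_
    have e : pd i F = fun y => sabs' (w y) * pd i w y := funext (pF i)
    have t1 : (fun y => sabs' (w y)).HasTemperateGrowth := by fun_prop
    have t2 : (pd i w).HasTemperateGrowth := by fun_prop
    rw [e, pd_mul (TG.diff t1 y) (TG.diff t2 y), pd_comp (hasDerivAt_sabs' (w y)) (dw y)]
    ring
  -- integrals that vanish by Green's formula or by Gaussian integration by parts
  have z1 : ∫ y, (F y * ((∑ i, y i * pd i s y) - lap s y) -
      s y * ((∑ i, y i * pd i F y) - lap F y)) ∂(gam n) = 0 := by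
    rw [integral_sub (TG.integrable (by fun_prop)) (TG.integrable (by fun_prop)),
      ← gam_green tF ts, ← gam_green ts tF, sub_eq_zero]
    congr 1; funext y; exact Finset.sum_congr rfl fun i _ => mul_comm _ _
  have z0 : ∀ {f : Euc n → ℝ}, f.HasTemperateGrowth →
      ∫ y, (lap f y - ∑ i, y i * pd i f y) ∂(gam n) = 0 := fun {f} tf => by
    have h1 := gam_green (a := fun _ : Euc n => (1 : ℝ)) (by fun_prop) tf
    simp only [pd_const, zero_mul, Finset.sum_const_zero, integral_zero, one_mul] at h1
    rw [← neg_eq_zero, ← integral_neg, h1]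
    congr 1; funext y; ring
  have z2 := z0 tF
  have z3 := z0 ts
  have z4 : ∫ y, ((‖y‖ ^ 2 - n) * (F y * ρ y) -
      (F y * (∑ i, y i * pd i ρ y) + ρ y * (∑ i, y i * pd i F y))) ∂(gam n) = 0 := by
    have t1 : (fun y => F y * ρ y).HasTemperateGrowth := by fun_prop
    have t2 : (fun y : Euc n => ‖y‖ ^ 2).HasTemperateGrowth := by fun_prop
    have h1 := gam_green t1 t2
    rw [← sub_eq_zero, ← integral_sub (TG.integrable (by fun_prop)) (TG.integrable (by fun_prop))]
      at h1
    have h2 : ∀ y : Euc n, (∑ i, pd i (fun y => F y * ρ y) y * pd i (fun y : Euc n => ‖y‖ ^ 2) y) -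
        F y * ρ y * ((∑ i, y i * pd i (fun y : Euc n => ‖y‖ ^ 2) y) -
          lap (fun y : Euc n => ‖y‖ ^ 2) y) = (-2) * ((‖y‖ ^ 2 - n) * (F y * ρ y) -
      (F y * (∑ i, y i * pd i ρ y) + ρ y * (∑ i, y i * pd i F y))) := fun y => by
      have e1 : ∑ i, pd i (fun y => F y * ρ y) y * pd i (fun y : Euc n => ‖y‖ ^ 2) y =
          2 * (F y * (∑ i, y i * pd i ρ y) + ρ y * (∑ i, y i * pd i F y)) := by
        rw [Finset.mul_sum, Finset.mul_sum, ← Finset.sum_add_distrib, Finset.mul_sum]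
        refine Finset.sum_congr rfl fun i _ => ?_
        rw [pd_mul (dF y) (TG.diff tρ y), pd_norm_sq]; ring
      have e2 : ∑ i, y i * pd i (fun y : Euc n => ‖y‖ ^ 2) y = 2 * ‖y‖ ^ 2 := by
        rw [EuclideanSpace.real_norm_sq_eq, Finset.mul_sum]
        refine Finset.sum_congr rfl fun i _ => ?_
        rw [pd_norm_sq]; ring
      rw [e1, e2, lap_norm_sq]; ring
    simp only [h2] at h1
    rw [integral_const_mul] at h1
    linarith
  have key : ∀ y, k * (U y * V y * (U y - V y) ^ 2) ≤
      -((F y * ((∑ i, y i * pd i s y) - lap s y) - s y * ((∑ i, y i * pd i F y) - lap F y)) +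
        ((‖y‖ ^ 2 - n) * (F y * ρ y) -
          (F y * (∑ i, y i * pd i ρ y) + ρ y * (∑ i, y i * pd i F y)))) +
      (2 * M + 1) * (lap F y - ∑ i, y i * pd i F y) +
      (2 * M + 2) * (lap s y - ∑ i, y i * pd i s y) +
      ((8 * M + 5) * (Q / 2 * ‖y‖ ^ 2 + Q⁻¹ * ((∑ i, pd i U y ^ 2) + ∑ i, pd i V y ^ 2)) +
        (2 * M + 1) * (Q / 2 * (‖y‖ ^ 2 - n) ^ 2 + Q⁻¹ / 2 * (U y ^ 2 + V y ^ 2))) := fun y => by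
    have hDF : ∑ i, y i * pd i F y = sabs' (w y) * ∑ i, y i * pd i w y := by
      rw [Finset.mul_sum]; refine Finset.sum_congr rfl fun i _ => ?_
      rw [pF]; ring
    have hDρ : ∑ i, y i * pd i ρ y = (∑ i, y i * pd i s y) - sabs' (w y) * ∑ i, y i * pd i w y := by
      rw [← hDF, ← Finset.sum_sub_distrib]; refine Finset.sum_congr rfl fun i _ => ?_
      rw [pρ]; ring
    have h1 := final_pointwise (pU y) (pV y) hk (hM y) hM0 (sabs_nonneg (w y)) (sabs_le (w y))
      (le_sabs (w y)) (abs_sabs'_le (w y)) (sabs'_mul_nonneg (w y)) (sabs''_nonneg (w y))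
      (fun h => sabs''_eq_zero h) (g := ∑ i, pd i w y ^ 2)
      (Finset.sum_nonneg fun i _ => sq_nonneg (pd i w y)) (Ds := ∑ i, y i * pd i s y) (Dw := ∑ i, y i * pd i w y) (Y := ‖y‖ ^ 2 - n)
    have g1 : ∑ i, pd i s y ^ 2 ≤ 2 * ((∑ i, pd i U y ^ 2) + ∑ i, pd i V y ^ 2) := by
      rw [← Finset.sum_add_distrib, Finset.mul_sum]
      refine Finset.sum_le_sum fun i _ => ?_
      rw [ps]; nlinarith [sq_nonneg (pd i U y - pd i V y)]
    have g2 : ∑ i, pd i w y ^ 2 ≤ 2 * ((∑ i, pd i U y ^ 2) + ∑ i, pd i V y ^ 2) := by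
      rw [← Finset.sum_add_distrib, Finset.mul_sum]
      refine Finset.sum_le_sum fun i _ => ?_
      rw [pw]; nlinarith [sq_nonneg (pd i U y + pd i V y)]
    have r1 := radial_young hQ (fun i => pd i s y) (fun i => y i) g1
    have r2 := radial_young hQ (fun i => pd i w y) (fun i => y i) g2
    rw [← EuclideanSpace.real_norm_sq_eq] at r1 r2
    have r3 : |‖y‖ ^ 2 - n| * |U y - V y| ≤
        Q / 2 * (‖y‖ ^ 2 - n) ^ 2 + Q⁻¹ / 2 * (U y ^ 2 + V y ^ 2) := by
      have a1 : (U y - V y) ^ 2 ≤ U y ^ 2 + V y ^ 2 := by nlinarith [mul_pos (pU y) (pV y)]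
      have a2 : Q⁻¹ / 2 * (U y - V y) ^ 2 ≤ Q⁻¹ / 2 * (U y ^ 2 + V y ^ 2) := by gcongr
      have h2 : 0 ≤ Q⁻¹ / 2 * (Q * |‖y‖ ^ 2 - n| - |U y - V y|) ^ 2 := by positivity
      have h3 : Q⁻¹ / 2 * (Q * |‖y‖ ^ 2 - n| - |U y - V y|) ^ 2 =
          Q / 2 * |‖y‖ ^ 2 - n| ^ 2 + Q⁻¹ / 2 * |U y - V y| ^ 2 -
            |‖y‖ ^ 2 - n| * |U y - V y| := by field_simp; ring
      rw [sq_abs, sq_abs] at h3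
      linarith
    have m1 := mul_le_mul_of_nonneg_left r1 (by positivity : 0 ≤ 2 * M + 2)
    have m2 := mul_le_mul_of_nonneg_left r2 (by positivity : 0 ≤ 3 * (2 * M + 1))
    have m3 := mul_le_mul_of_nonneg_left r3 (by positivity : 0 ≤ 2 * M + 1)
    rw [hDF, hDρ, lF, ls, lw]
    refine h1.trans ?_
    simp only [hF, hρ, hs]
    linarith
  have i1 : ∀ {f : Euc n → ℝ}, f.HasTemperateGrowth → Integrable f (gam n) := TG.integrable
  set f1 : Euc n → ℝ := fun y => F y * ((∑ i, y i * pd i s y) - lap s y) -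
      s y * ((∑ i, y i * pd i F y) - lap F y) with hf1
  set f2 : Euc n → ℝ := fun y => (‖y‖ ^ 2 - n) * (F y * ρ y) -
      (F y * (∑ i, y i * pd i ρ y) + ρ y * (∑ i, y i * pd i F y)) with hf2
  set f3 : Euc n → ℝ := fun y => lap F y - ∑ i, y i * pd i F y with hf3
  set f4 : Euc n → ℝ := fun y => lap s y - ∑ i, y i * pd i s y with hf4
  set f5 : Euc n → ℝ := fun y => (∑ i, pd i U y ^ 2) + ∑ i, pd i V y ^ 2 with hf5
  set f6 : Euc n → ℝ := fun y => U y ^ 2 + V y ^ 2 with hf6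
  set f7 : Euc n → ℝ := fun y => ‖y‖ ^ 2 with hf7
  set f8 : Euc n → ℝ := fun y => (‖y‖ ^ 2 - n) ^ 2 with hf8
  have t1 : Integrable f1 (gam n) := TG.integrable (by fun_prop)
  have t2 : Integrable f2 (gam n) := TG.integrable (by fun_prop)
  have t3 : Integrable f3 (gam n) := TG.integrable (by fun_prop)
  have t4 : Integrable f4 (gam n) := TG.integrable (by fun_prop)
  have t5 : Integrable f5 (gam n) := TG.integrable (by fun_prop)
  have t6 : Integrable f6 (gam n) := TG.integrable (by fun_prop)
  have t7 : Integrable f7 (gam n) := TG.integrable (by fun_prop)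
  have t8 : Integrable f8 (gam n) := TG.integrable (by fun_prop)
  have hsplit : ∫ y, (-(f1 y + f2 y) + (2 * M + 1) * f3 y + (2 * M + 2) * f4 y +
      ((8 * M + 5) * (Q / 2 * f7 y + Q⁻¹ * f5 y) +
        (2 * M + 1) * (Q / 2 * f8 y + Q⁻¹ / 2 * f6 y))) ∂(gam n) =
      (8 * M + 5) * (Q / 2 * momN n + Q⁻¹ * ∫ y, f5 y ∂(gam n)) +
        (2 * M + 1) * (Q / 2 * momC n + Q⁻¹ / 2 * ∫ y, f6 y ∂(gam n)) := by
    have s1 : Integrable (fun y => -(f1 y + f2 y)) (gam n) := (t1.add t2).neg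
    have s2 : Integrable (fun y => -(f1 y + f2 y) + (2 * M + 1) * f3 y) (gam n) :=
      s1.add (t3.const_mul _)
    have s3 : Integrable (fun y => -(f1 y + f2 y) + (2 * M + 1) * f3 y + (2 * M + 2) * f4 y)
      (gam n) := s2.add (t4.const_mul _)
    have s4 : Integrable (fun y => Q / 2 * f7 y + Q⁻¹ * f5 y) (gam n) :=
      (t7.const_mul _).add (t5.const_mul _)
    have s5 : Integrable (fun y => Q / 2 * f8 y + Q⁻¹ / 2 * f6 y) (gam n) :=
      (t8.const_mul _).add (t6.const_mul _)
    have s6 : Integrable (fun y => (8 * M + 5) * (Q / 2 * f7 y + Q⁻¹ * f5 y) +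
        (2 * M + 1) * (Q / 2 * f8 y + Q⁻¹ / 2 * f6 y)) (gam n) :=
      (s4.const_mul _).add (s5.const_mul _)
    rw [integral_add s3 s6, integral_add s2 (t4.const_mul _), integral_add s1 (t3.const_mul _),
      integral_neg, integral_add t1 t2, integral_add (s4.const_mul _) (s5.const_mul _),
      integral_const_mul (2 * M + 1) f3, integral_const_mul (2 * M + 2) f4,
      integral_const_mul (8 * M + 5), integral_const_mul (2 * M + 1),
      integral_add (t7.const_mul _) (t5.const_mul _), integral_add (t8.const_mul _) (t6.const_mul _),
      integral_const_mul (Q / 2), integral_const_mul Q⁻¹, integral_const_mul (Q / 2),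
      integral_const_mul (Q⁻¹ / 2), z1, z2, z3, z4, momN, momC]
    ring
  have hfin := integral_mono (f := fun y => k * (U y * V y * (U y - V y) ^ 2))
    (g := fun y => -(f1 y + f2 y) + (2 * M + 1) * f3 y + (2 * M + 2) * f4 y +
      ((8 * M + 5) * (Q / 2 * f7 y + Q⁻¹ * f5 y) +
        (2 * M + 1) * (Q / 2 * f8 y + Q⁻¹ / 2 * f6 y))) (μ := gam n)
    (TG.integrable (by fun_prop)) (TG.integrable (by fun_prop)) key
  rw [hsplit] at hfin
  refine hfin.trans ?_
  have q1 : Q⁻¹ * ∫ y, f5 y ∂(gam n) ≤ Q := by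
    rw [inv_mul_le_iff₀ hQ, ← sq]; exact hE
  have q2 : Q⁻¹ * ∫ y, f6 y ∂(gam n) ≤ Q := by
    rw [inv_mul_le_iff₀ hQ, ← sq]; exact hH
  have m1 := mul_le_mul_of_nonneg_left q1 (by positivity : 0 ≤ 8 * M + 5)
  have m2 := mul_le_mul_of_nonneg_left q2 (by positivity : 0 ≤ 2 * M + 1)
  linarith

end Final

section Conclusion
variable {n : ℕ} {u v : Euc n → ℝ}

/-- The estimate with the Gaussian measure in place of `η² dx`; in `κ u_κ v_κ (u_κ - v_κ)²` the powers
of `R` cancel. -/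
lemma gauss_estimate (h : IsSol u v) : ∃ C : ℝ, 0 < C ∧ ∀ x₀, u x₀ = v x₀ → ∀ R, 1 ≤ R →
    ∫ y, u (x₀ + R • y) * v (x₀ + R • y) * (u (x₀ + R • y) - v (x₀ + R • y)) ^ 2 ∂(gam n) ≤
      C * R⁻¹ := by
  obtain ⟨M, hM0, hM⟩ := min_bounded h
  obtain ⟨K, hK0, hK⟩ := almH_quadratic h
  have tu := h.tu
  have tv := h.tv
  have hN := momN_nonneg (n := n)
  have hC := momC_nonneg (n := n)
  refine ⟨((8 * M + 5) * (momN n / 2 + 1) + (2 * M + 1) * (momC n / 2 + 1 / 2)) * Real.sqrt K,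
    by positivity, fun x₀ he R hR => ?_⟩
  have hR0 : 0 < R := by linarith
  have hH := hK x₀ he R hR
  have hE := (almN_le_one h x₀ hR0).trans hH
  have hQ2 : (Real.sqrt K * R) ^ 2 = K * R ^ 2 := by rw [mul_pow, Real.sq_sqrt hK0.le]
  have key := final_estimate (U := fun y => u (x₀ + R • y)) (V := fun y => v (x₀ + R • y))
    (by fun_prop) (by fun_prop) (fun y => h.pu _) (fun y => h.pv _) (k := R ^ 2) (M := M)
    (Q := Real.sqrt K * R) (by positivity) hM0 (by positivity)
    (fun y => by rw [lap_scale (contDiff_infty.1 (TG.contDiff tu) 2), h.eu])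
    (fun y => by rw [lap_scale (contDiff_infty.1 (TG.contDiff tv) 2), h.ev])
    (fun y => hM _) (by rw [hQ2]; exact hH) (by
      rw [hQ2]
      refine le_trans ?_ hE
      unfold almE
      refine integral_mono (TG.integrable (by fun_prop)) (TG.integrable (by fun_prop)) fun y => ?_
      simp only [pd_scale (TG.diff tu), pd_scale (TG.diff tv), mul_pow, ← Finset.mul_sum]
      have : 0 ≤ R ^ 2 * (u (x₀ + R • y) ^ 2 * v (x₀ + R • y) ^ 2) := by positivity
      linarith)
  rw [integral_const_mul] at key
  rw [← div_eq_mul_inv, le_div_iff₀ hR0]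
  refine le_of_mul_le_mul_left ?_ hR0
  refine le_trans (le_of_eq ?_) (key.trans (le_of_eq ?_)) <;> ring

/-- A weighted integral over the unit ball is controlled by the Gaussian integral. -/
lemma ball_le_gam {g η : Euc n → ℝ} (hg : Integrable g (gam n)) (g0 : ∀ x, 0 ≤ g x) {N : ℝ}
    (hN : ∀ x, η x ^ 2 ≤ N) :
    ∫ x in ball (0 : Euc n) 1, g x * η x ^ 2 ≤
      N * Real.exp (1 / 2) * gaussZ n * ∫ x, g x ∂(gam n) := by
  have hZ := gaussZ_pos n
  have hN0 : 0 ≤ N := (sq_nonneg _).trans (hN 0)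
  have hi : Integrable (fun x => N * Real.exp (1 / 2) * gaussZ n *
      (((gaussZ n)⁻¹ * gauss x) • g x)) := ((integrable_gam_iff g).1 hg).const_mul _
  have hnn : ∀ x, 0 ≤ N * Real.exp (1 / 2) * gaussZ n * (((gaussZ n)⁻¹ * gauss x) • g x) :=
    fun x => by
      have := gauss_pos x
      have := g0 x
      simp only [smul_eq_mul]; positivity
  rw [integral_gam, ← integral_const_mul]
  refine le_trans ?_ (setIntegral_le_integral (s := ball (0 : Euc n) 1) hi
    (Filter.Eventually.of_forall hnn))
  refine integral_mono_of_nonneg (Filter.Eventually.of_forall fun x => mul_nonneg (g0 x) (sq_nonneg _))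
    hi.integrableOn ?_
  filter_upwards [self_mem_ae_restrict measurableSet_ball] with x hx
  have hx1 : ‖x‖ < 1 := by simpa using hx
  have h1 : 1 ≤ Real.exp (1 / 2) * gauss x := by
    unfold gauss
    rw [← Real.exp_add]
    refine Real.one_le_exp ?_
    nlinarith [norm_nonneg x]
  have e : N * Real.exp (1 / 2) * gaussZ n * (((gaussZ n)⁻¹ * gauss x) • g x) =
      N * (Real.exp (1 / 2) * gauss x) * g x := by
    simp only [smul_eq_mul]; field_simp
  rw [e]
  have h2 : N * 1 ≤ N * (Real.exp (1 / 2) * gauss x) := by gcongr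
  have := mul_le_mul_of_nonneg_right ((hN x).trans (by linarith : N ≤ N * (Real.exp (1 / 2) * gauss x))) (g0 x)
  linarith

end Conclusion

theorem caccioppoli_type_estimate (n : ℕ) (hn : 2 ≤ n)
    (u v : Euc n → ℝ)
    (hu : ContDiff ℝ (⊤ : ℕ∞) u) (hv : ContDiff ℝ (⊤ : ℕ∞) v)
    (hupos : ∀ x, 0 < u x) (hvpos : ∀ x, 0 < v x)
    (hequ : ∀ x, lap u x = u x * v x ^ 2)
    (heqv : ∀ x, lap v x = v x * u x ^ 2)
    (C₀ : ℝ) (hC₀ : 0 < C₀)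
    (hgrowth : ∀ x, u x + v x ≤ C₀ * (1 + ‖x‖))
    (η : Euc n → ℝ) (hη : ContDiff ℝ (⊤ : ℕ∞) η)
    (hηc : HasCompactSupport η) (hηB : tsupport η ⊆ ball (0 : Euc n) 1) :
    ∃ C > (0 : ℝ), ∀ x₀ : Euc n, u x₀ = v x₀ → ∀ R ≥ (1 : ℝ),
      |∫ x in ball (0 : Euc n) 1,
          (2 * (R ^ 4 : ℝ) * resc u x₀ R x ^ 2 * resc v x₀ R x ^ 2
            - (R ^ 4 : ℝ) * resc u x₀ R x * resc v x₀ R x ^ 3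
            - (R ^ 4 : ℝ) * resc v x₀ R x * resc u x₀ R x ^ 3) * η x ^ 2|
        ≤ C * (R ^ 4 : ℝ) ^ (-(1 : ℝ) / 4) ∧
      |∫ x in ball (0 : Euc n) 1,
          lap (fun y => resc u x₀ R y - resc v x₀ R y) x
            * (resc u x₀ R x - resc v x₀ R x) * η x ^ 2|
        ≤ C * (R ^ 4 : ℝ) ^ (-(1 : ℝ) / 4) := by
  obtain ⟨tu, tv⟩ := TG_of_solution hu hv hupos hvpos hequ heqv hgrowth
  have h : IsSol u v := ⟨tu, tv, hupos, hvpos, hequ, heqv, ⟨C₀, hgrowth⟩⟩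
  have c2 : ∀ {f : Euc n → ℝ}, f.HasTemperateGrowth → ContDiff ℝ 2 f := fun hf =>
    contDiff_infty.1 (TG.contDiff hf) 2
  obtain ⟨C, hC0, hC⟩ := gauss_estimate h
  obtain ⟨B, hB⟩ := hη.continuous.bounded_above_of_compact_support hηc
  have hN : ∀ x, η x ^ 2 ≤ B ^ 2 + 1 := fun x => by
    have h1 := hB x
    rw [Real.norm_eq_abs] at h1
    have h2 := pow_le_pow_left₀ (abs_nonneg (η x)) h1 2
    rw [sq_abs] at h2
    linarith
  have hZ := gaussZ_pos n
  refine ⟨(B ^ 2 + 1) * Real.exp (1 / 2) * gaussZ n * C, by positivity, fun x₀ he R hR => ?_⟩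
  have hR0 : 0 < R := by linarith
  set g : Euc n → ℝ := fun y => u (x₀ + R • y) * v (x₀ + R • y) *
    (u (x₀ + R • y) - v (x₀ + R • y)) ^ 2 with hg
  have tg : g.HasTemperateGrowth := by fun_prop
  have g0 : ∀ x, 0 ≤ g x := fun x =>
    mul_nonneg (mul_nonneg (hupos _).le (hvpos _).le) (sq_nonneg _)
  have hpow : (R ^ 4 : ℝ) ^ (-(1 : ℝ) / 4) = R⁻¹ := by
    rw [← Real.rpow_natCast, ← Real.rpow_mul hR0.le, ← Real.rpow_neg_one]
    norm_num
  have hball : |∫ x in ball (0 : Euc n) 1, -(g x * η x ^ 2)| ≤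
      (B ^ 2 + 1) * Real.exp (1 / 2) * gaussZ n * C * (R ^ 4 : ℝ) ^ (-(1 : ℝ) / 4) := by
    rw [integral_neg, abs_neg, abs_of_nonneg
      (integral_nonneg fun x => mul_nonneg (g0 x) (sq_nonneg _)), hpow, mul_assoc]
    refine (ball_le_gam (TG.integrable tg) g0 hN).trans ?_
    gcongr
    exact hC x₀ he R hR
  refine ⟨?_, ?_⟩
  · convert hball using 4 with x
    simp only [hg, resc]
    field_simp
    ring
  · convert hball using 4 with x
    have t1 : (fun y => R⁻¹ * u (x₀ + R • y)).HasTemperateGrowth := by fun_prop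
    have t2 : (fun y => R⁻¹ * v (x₀ + R • y)).HasTemperateGrowth := by fun_prop
    simp only [hg, resc]
    rw [lap_sub (c2 t1) (c2 t2), lap_const_mul (c2 (by fun_prop)),
      lap_const_mul (c2 (by fun_prop)), lap_scale (c2 tu), lap_scale (c2 tv), hequ, heqv]
    field_simp
    ring
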